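/- Let $K$ be an algebraically closed field and let $\Gamma$ be a finite tree with a cyclic ordering of the edges incident to each vertex (a Brauer tree of multiplicity one). Its Brauer quiver $Q$ has the edges of $\Gamma$ as vertices and, for every vertex $p$ of $\Gamma$ and every edge $i$ incident to $p$, an arrow from $i$ to the edge that follows $i$ in the cyclic order around $p$ (a loop if $i$ is the only edge at $p$); thus $Q$ is a union of oriented cycles, one for each vertex of $\Gamma$, and each vertex of $Q$ lies on exactly two of them. Let $A$ be the basic Brauer tree algebra of $\Gamma$, i.e. the quotient of the path algebra $KQ$ (where $ab$ means first $a$, then $b$) by the relations: $ab=0$ whenever the arrows $a,b$ are composable and lie on different cycles, and, for each vertex $x$ of $Q$, the two full cycles starting at $x$ are equal. Modules are left modules, and $Ae_x$ is the indecomposable projective module corresponding to the vertex $x$ of $Q$. An $A$-cycle is a maximal ordered set of nonrepeating arrows of $Q$ such that the product of any two neighboring arrows is nonzero in $A$. Let $M$ be an indecomposable non-projective $A$-module and let $T=(P_0\xrightarrow{f}P_1)$, with $P_0$ in degree $0$ and $P_1$ in degree $1$, be a minimal projective presentation of $M$ (so $M\cong\operatorname{coker} f$). Assume that $T$ is an indecomposable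 partial tilting complex, i.e. $T$ is indecomposable in $D^b(A)$ and $\operatorname{Hom}_{D^b(A)}(T,T[k])=0$ for all $k\neq 0$. Write $P_0=\bigoplus_{i\in I}Ae_i$ and $P_1=\bigoplus_{j\in J}Ae_j$. The diagram of $T$ consists of the vertices of $Q$ corresponding to $I$ (sources) and to $J$ (sinks), together with all arrows and vertices on the path of $Q$ from $i$ to $j$ that is nonzero in $A$, for all $i\in I$, $j\in J$ such that $f$ has a nonzero component $Ae_i\to Ae_j$. A degree-one source (sink) of $T$ is a source (sink) to which exactly one arrow of the diagram is incident, i.e. which is an end point of the diagram. A vertex belongs to $T$ if it belongs to the diagram of $T$. Let $P$ be the stalk complex, concentrated in degree $1$, of the indecomposable projective $A$-module corresponding to a vertex $x$ of $Q$. Then $\operatorname{Hom}_{D^b(A)}(T,P[1])=0$ if and only if one of the following holds: (1) $x$ is a degree-one sink of $T$; (2) $x$ does not belong to $T$, and there is no $A$-cycle containing both $x$ and a degree-one source of $T$ such that this source is the only vertex of $T$ belonging to that $A$-cycle. -/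

import Mathlib

open CategoryTheory CategoryTheory.Limits

universe w v u

/-- A Brauer tree of multiplicity one on the (finite) set of vertices `V`: a tree together with a
cyclic ordering of the edges incident to each vertex. An edge `i` incident to a vertex `p` is the
dart `d` with `d.edge = i` and `d.fst = p`; the cyclic orderings are given by the permutation `next`
of the darts, whose cycles are exactly the sets of darts starting at a common vertex. -/
structure BrauerTree (V : Type v) where
  graph : SimpleGraph V
  isTree : graph.IsTree
  next : Equiv.Perm graph.Dart
  fst_next : ∀ d : graph.Dart, (next d).fst = d.fst
  sameCycle : ∀ d d' : graph.Dart, d.fst = d'.fst → next.SameCycle d d'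

namespace BrauerTree

variable {V : Type v} (B : BrauerTree V)

/-- The vertices of the Brauer quiver are the edges of the tree. -/
abbrev Vertex : Type v := B.graph.edgeSet

/-- The arrows of the Brauer quiver: a dart `d` stands for the arrow from the edge of `d` to the
edge that follows it in the cyclic order around the vertex `d.fst`. For a vertex of the tree with
only one edge this arrow is a loop, so every vertex of the quiver lies on exactly two cycles. -/
abbrev Arrow : Type v := B.graph.Dart

/-- The vertex of the quiver at which an arrow starts. -/
def source (d : B.Arrow) : B.Vertex := ⟨d.edge, d.edge_mem⟩

/-- The vertex of the quiver at which an arrow ends. -/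
def target (d : B.Arrow) : B.Vertex := B.source (B.next d)

/-- The cycle of the quiver around the vertex `d.fst` of the tree, written as the list of its
arrows starting with `d`; its length is the number of edges incident to `d.fst`. -/
noncomputable def cycleFrom (d : B.Arrow) : List B.Arrow :=
  List.iterate B.next d (Function.minimalPeriod B.next d)

variable (K : Type u) [Field K]

/-- The free algebra on the symbols `e_x` (for the vertices of the quiver) and on the arrows. -/
abbrev Free : Type (max u v) := FreeAlgebra K (B.Vertex ⊕ B.Arrow)

/-- The symbol `e_x` in the free algebra. -/
def freeE (x : B.Vertex) : B.Free K := FreeAlgebra.ι K (Sum.inl x)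

/-- An arrow in the free algebra. -/
def freeArr (d : B.Arrow) : B.Free K := FreeAlgebra.ι K (Sum.inr d)

/-- The defining relations. The first five are those of the path algebra of the Brauer quiver
(the product `ab` means: first `a`, then `b`), the last two are the Brauer tree relations
`αβ = 0 = βα` and `α ^ x_α = β ^ x_β` with multiplicity one. The two cycles through the vertex
`B.source d` are those starting with the arrows `d` and `d.symm`. -/
inductive Rel : B.Free K → B.Free K → Prop
  | idem (x : B.Vertex) : Rel (B.freeE K x * B.freeE K x) (B.freeE K x)
  | orth (x y : B.Vertex) : x ≠ y → Rel (B.freeE K x * B.freeE K y) 0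
  | one : Rel (∑ᶠ x : B.Vertex, B.freeE K x) 1
  | left (d : B.Arrow) : Rel (B.freeE K (B.source d) * B.freeArr K d) (B.freeArr K d)
  | right (d : B.Arrow) : Rel (B.freeArr K d * B.freeE K (B.target d)) (B.freeArr K d)
  | zero (d d' : B.Arrow) : B.target d = B.source d' → d' ≠ B.next d →
      Rel (B.freeArr K d * B.freeArr K d') 0
  | cycle (d : B.Arrow) :
      Rel ((B.cycleFrom d).map (B.freeArr K)).prod ((B.cycleFrom d.symm).map (B.freeArr K)).prod

/-- The basic Brauer tree algebra of a Brauer tree with multiplicity one. -/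
def Alg : Type (max u v) := RingQuot (B.Rel K)

noncomputable instance instRing : Ring (B.Alg K) := inferInstanceAs (Ring (RingQuot (B.Rel K)))

noncomputable instance instAlgebra : Algebra K (B.Alg K) := inferInstanceAs (Algebra K (RingQuot (B.Rel K)))

/-- The idempotent of `A` belonging to a vertex of the quiver. -/
noncomputable def e (x : B.Vertex) : B.Alg K := RingQuot.mkAlgHom K (B.Rel K) (B.freeE K x)

/-- The element of `A` given by an arrow. -/
noncomputable def arr (d : B.Arrow) : B.Alg K := RingQuot.mkAlgHom K (B.Rel K) (B.freeArr K d)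

/-- The indecomposable projective left module `A e_x`. -/
noncomputable abbrev proj (x : B.Vertex) : Submodule (B.Alg K) (B.Alg K) := Submodule.span (B.Alg K) {B.e K x}

/-- The list `l` of arrows is a path of the quiver from `x` to `y`. -/
def IsPath : B.Vertex → List B.Arrow → B.Vertex → Prop
  | x, [], y => x = y
  | x, d :: l, y => B.source d = x ∧ IsPath (B.target d) l y

/-- A nonempty ordered set of nonrepeating arrows in which the product of any two neighboring arrows
is nonzero in `A`. -/
def IsNonzeroChain (l : List B.Arrow) : Prop :=
  l ≠ [] ∧ l.Nodup ∧ l.IsChain (fun a b => B.arr K a * B.arr K b ≠ 0)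

/-- An `A`-cycle: a maximal ordered set of nonrepeating arrows such that the product of any two
neighboring arrows is nonzero. -/
def IsACycle (l : List B.Arrow) : Prop :=
  B.IsNonzeroChain K l ∧ ∀ l', B.IsNonzeroChain K l' → l <:+: l' → l' = l

/-- The vertex `x` of the quiver belongs to the given ordered set of arrows. -/
def OnCycle (x : B.Vertex) (l : List B.Arrow) : Prop :=
  ∃ d ∈ l, B.source d = x ∨ B.target d = x

/-- Cochain complexes of left `A`-modules. -/
abbrev Cplx := CochainComplex (ModuleCat.{max u v} (B.Alg K)) ℤ

section Complexes

variable {B K}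

/-- A submodule `N` of `P` is superfluous if `N + L = P` implies `L = P`. -/
def Superfluous {R P : Type*} [Ring R] [AddCommGroup P] [Module R P] (N : Submodule R P) : Prop :=
  ∀ L : Submodule R P, N ⊔ L = ⊤ → L = ⊤

/-- `T` is a minimal projective presentation `T⁰ ⟶ T¹` of `M`, placed in degrees `0` and `1`:
there is an exact sequence `T⁰ ⟶ T¹ ⟶ M ⟶ 0` in which `T¹ ⟶ M`, and `T⁰` onto its image in `T¹`,
are projective covers. -/
structure IsMinimalPresentation (T : B.Cplx K) (M : ModuleCat.{max u v} (B.Alg K)) : Prop where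
  strictlyGE : T.IsStrictlyGE 0
  strictlyLE : T.IsStrictlyLE 1
  finite₀ : Module.Finite (B.Alg K) (T.X 0)
  finite₁ : Module.Finite (B.Alg K) (T.X 1)
  projective₀ : Module.Projective (B.Alg K) (T.X 0)
  projective₁ : Module.Projective (B.Alg K) (T.X 1)
  exists_cover : ∃ p : T.X 1 →ₗ[B.Alg K] M, Function.Surjective p ∧
    LinearMap.range (T.d 0 1).hom = LinearMap.ker p ∧ Superfluous (LinearMap.ker p)
  superfluous_ker : Superfluous (LinearMap.ker (T.d 0 1).hom)

/-- `P` is the stalk complex, concentrated in degree `n`, of the indecomposable projective module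
corresponding to the vertex `x` of the quiver. -/
def IsStalk (P : B.Cplx K) (n : ℤ) (x : B.Vertex) : Prop :=
  Nonempty (P ≅ (CochainComplex.singleFunctor (ModuleCat.{max u v} (B.Alg K)) n).obj
    (ModuleCat.of (B.Alg K) (B.proj K x)))

/-- `Hom(S, T[k]) = 0` in the derived category. The bounded derived category of finitely generated
modules is a full subcategory of the derived category of all modules. -/
def HomVanishes [HasDerivedCategory.{w} (ModuleCat.{max u v} (B.Alg K))]
    (S T : B.Cplx K) (k : ℤ) : Prop :=
  ∀ g : DerivedCategory.Q.obj S ⟶ (DerivedCategory.Q.obj T)⟦k⟧, g = 0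

/-- `T` is indecomposable (in the derived category) and `Hom(T, T[k]) = 0` for all `k ≠ 0`. -/
def IsIndecPartialTilting [HasDerivedCategory.{w} (ModuleCat.{max u v} (B.Alg K))]
    (T : B.Cplx K) : Prop :=
  Indecomposable (DerivedCategory.Q.obj T) ∧ ∀ k : ℤ, k ≠ 0 → HomVanishes.{w} T T k

/-- Decompositions of `T⁰` and `T¹` as finite direct sums of modules `A e_x`. -/
structure Decomposition (T : B.Cplx K) where
  I : Type
  J : Type
  fintypeI : Fintype I
  fintypeJ : Fintype J
  src : I → B.Vertex
  snk : J → B.Vertex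
  iso₀ : T.X 0 ≃ₗ[B.Alg K] (∀ i, B.proj K (src i))
  iso₁ : T.X 1 ≃ₗ[B.Alg K] (∀ j, B.proj K (snk j))

namespace Decomposition

variable {T : B.Cplx K} (D : Decomposition T)

open Classical in
/-- The component `A e_i ⟶ A e_j` of the differential of `T`. -/
noncomputable def component (i : D.I) (j : D.J) :
    B.proj K (D.src i) →ₗ[B.Alg K] B.proj K (D.snk j) :=
  LinearMap.proj j ∘ₗ D.iso₁.toLinearMap ∘ₗ (T.d 0 1).hom ∘ₗ D.iso₀.symm.toLinearMap ∘ₗ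
    LinearMap.single (B.Alg K) (fun i => B.proj K (D.src i)) i

/-- The arrow `d` belongs to the diagram of `T`: it lies on the path (the one that is nonzero in
`A`) from some `i` to some `j` for which the differential has a nonzero component. -/
def HasArrow (d : B.Arrow) : Prop :=
  ∃ i j, D.component i j ≠ 0 ∧ ∃ l : List B.Arrow,
    B.IsPath (D.src i) l (D.snk j) ∧ (l.map (B.arr K)).prod ≠ 0 ∧ d ∈ l

/-- The vertex `x` belongs to the diagram of `T`. -/
def HasVertex (x : B.Vertex) : Prop :=
  (∃ i, D.src i = x) ∨ (∃ j, D.snk j = x) ∨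
    ∃ d, D.HasArrow d ∧ (B.source d = x ∨ B.target d = x)

/-- `x` is an end point of the diagram: exactly one arrow of the diagram is incident to it. -/
def IsEndPoint (x : B.Vertex) : Prop :=
  ∃! d, D.HasArrow d ∧ (B.source d = x ∨ B.target d = x)

/-- `x` is a degree-one source of the diagram. -/
def IsDegOneSource (x : B.Vertex) : Prop := (∃ i, D.src i = x) ∧ D.IsEndPoint x

/-- `x` is a degree-one sink of the diagram. -/
def IsDegOneSink (x : B.Vertex) : Prop := (∃ j, D.snk j = x) ∧ D.IsEndPoint x

end Decomposition

end Complexes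

end BrauerTree

namespace CochainComplex

open HomComplex

variable {C : Type u} [Category.{v} C] [Abelian C]

lemma derivedCategory_hom_vanishes_iff [HasDerivedCategory.{w} C] (S L : CochainComplex C ℤ)
    [S.IsKProjective] (k : ℤ) :
    (∀ g : DerivedCategory.Q.obj S ⟶ (DerivedCategory.Q.obj L)⟦k⟧, g = 0) ↔
      ∀ z : Cocycle S L k, z ∈ coboundaries S L k := by
  let e : (DerivedCategory.Q.obj S ⟶ (DerivedCategory.Q.obj L)⟦k⟧) ≃
      (DerivedCategory.Qh.obj ((HomotopyCategory.quotient _ _).obj S) ⟶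
        DerivedCategory.Qh.obj ((HomotopyCategory.quotient _ _).obj (L⟦k⟧))) :=
    Iso.homCongr ((DerivedCategory.quotientCompQhIso C).symm.app S)
      ((DerivedCategory.Q.commShiftIso k).symm.app L ≪≫
        (DerivedCategory.quotientCompQhIso C).symm.app (L⟦k⟧))
  have e0 : e 0 = 0 := by simp [e]
  have hb := IsKProjective.Qh_map_bijective S ((HomotopyCategory.quotient _ _).obj (L⟦k⟧))
  simp_rw [← CohomologyClass.toHom_mk_eq_zero_iff]
  constructor
  · intro h z
    apply hb.injective
    rw [Functor.map_zero, ← e0,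
      ← h (e.symm (DerivedCategory.Qh.map (CohomologyClass.toHom (CohomologyClass.mk z)))),
      Equiv.apply_symm_apply]
  · intro h g
    apply e.injective
    obtain ⟨y, hy⟩ := hb.surjective (e g)
    obtain ⟨c, rfl⟩ := (CohomologyClass.toHom_bijective S L k).surjective y
    obtain ⟨z, rfl⟩ := c.mk_surjective
    rw [e0, ← hy, h, Functor.map_zero]

/-- For `S` in degrees `0` and `1` and `L` in degrees at most `1`, cohomology classes of degree `1`
are morphisms `S⁰ ⟶ L¹` up to those which factor through one of the differentials. -/
lemma forall_mem_coboundaries_one_iff (S L : CochainComplex C ℤ) [S.IsStrictlyGE 0]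
    [S.IsStrictlyLE 1] [L.IsStrictlyLE 1] :
    (∀ z : Cocycle S L 1, z ∈ coboundaries S L 1) ↔
      ∀ φ : S.X 0 ⟶ L.X 1, ∃ (a : S.X 0 ⟶ L.X 0) (b : S.X 1 ⟶ L.X 1),
        φ = a ≫ L.d 0 1 + S.d 0 1 ≫ b := by
  have hz (p q : ℤ) (hp : p < 0 ∨ 1 < q) (g g' : S.X p ⟶ L.X q) : g = g' := by
    rcases hp with h | h
    · exact (S.isZero_of_isStrictlyGE 0 p h).eq_of_src _ _
    · exact (L.isZero_of_isStrictlyLE 1 q h).eq_of_tgt _ _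
  simp_rw [mem_coboundaries_iff _ 0 (zero_add 1)]
  constructor
  · intro h φ
    let z : Cochain S L 1 := Cochain.mk fun p q hpq =>
      if hp : p = 0 then
        (S.XIsoOfEq hp).hom ≫ φ ≫ (L.XIsoOfEq (show 1 = q by lia)).hom else 0
    have hz2 : δ 1 2 z = 0 := by
      ext p q hpq
      exact hz p q (by lia) _ _
    obtain ⟨β, hβ⟩ := h (Cocycle.mk z 2 rfl hz2)
    refine ⟨β.v 0 0 (add_zero 0), - β.v 1 1 (add_zero 1), ?_⟩
    have h1 := δ_zero_cochain_v β 0 1 (zero_add 1)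
    rw [hβ] at h1
    simp only [Cocycle.mk_coe, Cochain.mk_v, z] at h1
    simpa [sub_eq_add_neg] using h1
  · intro h z
    obtain ⟨a, b, hab⟩ := h ((z : Cochain S L 1).v 0 1 (zero_add 1))
    refine ⟨Cochain.mk fun p q hpq =>
      if hp : p = 0 then
        (S.XIsoOfEq hp).hom ≫ a ≫ (L.XIsoOfEq (show 0 = q by lia)).hom
      else if hp : p = 1 then
        (S.XIsoOfEq hp).hom ≫ (-b) ≫ (L.XIsoOfEq (show 1 = q by lia)).hom else 0, ?_⟩
    ext p q hpq
    by_cases hp : p = 0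
    · subst hp
      obtain rfl : q = 1 := by lia
      rw [δ_zero_cochain_v, hab]
      simp
    · exact hz p q (by lia) _ _

end CochainComplex

namespace BrauerTree

variable {V : Type v} {B : BrauerTree V} {K : Type u} [Field K]

lemma IsMinimalPresentation.homVanishes_one_iff
    [HasDerivedCategory.{w} (ModuleCat.{max u v} (B.Alg K))]
    {T : B.Cplx K} {M : ModuleCat.{max u v} (B.Alg K)} (hTM : IsMinimalPresentation T M)
    (L : B.Cplx K) [L.IsStrictlyLE 1] :
    HomVanishes.{w} T L 1 ↔ ∀ φ : T.X 0 →ₗ[B.Alg K] L.X 1,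
      ∃ (a : T.X 0 →ₗ[B.Alg K] L.X 0) (b : T.X 1 →ₗ[B.Alg K] L.X 1),
        φ = (L.d 0 1).hom ∘ₗ a + b ∘ₗ (T.d 0 1).hom := by
  have := hTM.strictlyGE
  have := hTM.strictlyLE
  have hp (n : ℤ) : Projective (T.X n) := by
    by_cases h0 : n = 0
    · subst h0
      have := hTM.projective₀
      exact (IsProjective.iff_projective _).1 inferInstance
    by_cases h1 : n = 1
    · subst h1
      have := hTM.projective₁
      exact (IsProjective.iff_projective _).1 inferInstance
    have : IsZero (T.X n) := by
      rcases lt_or_gt_of_ne h0 with h | h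
      · exact T.isZero_of_isStrictlyGE 0 n h
      · exact T.isZero_of_isStrictlyLE 1 n (by lia)
    exact Projective.of_iso this.isoZero.symm inferInstance
  have := CochainComplex.isKProjective_of_projective T 1
  rw [HomVanishes, CochainComplex.derivedCategory_hom_vanishes_iff,
    CochainComplex.forall_mem_coboundaries_one_iff]
  constructor
  · intro h φ
    obtain ⟨a, b, hab⟩ := h (ModuleCat.ofHom φ)
    refine ⟨a.hom, b.hom, ?_⟩
    rw [← ModuleCat.hom_comp, ← ModuleCat.hom_comp, ← ModuleCat.hom_add, ← hab,
      ModuleCat.hom_ofHom]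
  · intro h φ
    obtain ⟨a, b, hab⟩ := h φ.hom
    refine ⟨ModuleCat.ofHom a, ModuleCat.ofHom b, ?_⟩
    ext1
    simpa using hab

/-- `Hom(T, P[1])` for a stalk complex `P` in degree `1`. -/
lemma IsMinimalPresentation.homVanishes_stalk_iff
    [HasDerivedCategory.{w} (ModuleCat.{max u v} (B.Alg K))]
    {T : B.Cplx K} {M : ModuleCat.{max u v} (B.Alg K)} (hTM : IsMinimalPresentation T M)
    {P : B.Cplx K} {x : B.Vertex} (hP : IsStalk P 1 x) :
    HomVanishes.{w} T P 1 ↔ ∀ φ : T.X 0 →ₗ[B.Alg K] B.proj K x,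
      ∃ b : T.X 1 →ₗ[B.Alg K] B.proj K x, φ = b ∘ₗ (T.d 0 1).hom := by
  obtain ⟨i⟩ := hP
  have hz (n : ℤ) (hn : n ≠ 1) : IsZero (P.X n) :=
    (HomologicalComplex.isZero_single_obj_X (ComplexShape.up ℤ) 1 _ n hn).of_iso
      ((HomologicalComplex.eval _ _ n).mapIso i)
  have : P.IsStrictlyLE 1 := by
    rw [CochainComplex.isStrictlyLE_iff]
    intro n hn
    exact hz n (by lia)
  have j : P.X 1 ≃ₗ[B.Alg K] B.proj K x :=
    ((HomologicalComplex.eval _ _ 1).mapIso i ≪≫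
      HomologicalComplex.singleObjXSelf (ComplexShape.up ℤ) 1 _).toLinearEquiv
  have h0 : P.d 0 1 = 0 := (hz 0 (by lia)).eq_of_src _ _
  rw [hTM.homVanishes_one_iff]
  simp only [h0, ModuleCat.hom_zero, LinearMap.zero_comp, zero_add, exists_const]
  constructor
  · intro h φ
    obtain ⟨b, hb⟩ := h (j.symm.toLinearMap ∘ₗ φ)
    refine ⟨j.toLinearMap ∘ₗ b, ?_⟩
    rw [LinearMap.comp_assoc, ← hb]
    ext; simp
  · intro h φ
    obtain ⟨b, hb⟩ := h (j.toLinearMap ∘ₗ φ)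
    refine ⟨j.symm.toLinearMap ∘ₗ b, ?_⟩
    rw [LinearMap.comp_assoc, ← hb]
    ext; simp

end BrauerTree

namespace BrauerTree

section Combinatorics

variable {V : Type v} (B : BrauerTree V)

instance finite_arrow [Finite V] : Finite B.Arrow :=
  Finite.of_injective (fun d : B.Arrow => d.toProd) fun _ _ h => SimpleGraph.Dart.ext _ _ h

instance finite_vertex [Finite V] : Finite B.Vertex :=
  inferInstanceAs (Finite B.graph.edgeSet)

/-- The length of the cycle of the quiver through an arrow. -/
noncomputable abbrev deg (d : B.Arrow) : ℕ := Function.minimalPeriod B.next d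

variable {B}

lemma source_symm (d : B.Arrow) : B.source d.symm = B.source d :=
  Subtype.ext (SimpleGraph.Dart.edge_symm d)

lemma symm_ne_self (d : B.Arrow) : d.symm ≠ d := SimpleGraph.Dart.symm_ne d

lemma source_eq_source {d d' : B.Arrow} : B.source d = B.source d' ↔ d = d' ∨ d = d'.symm := by
  rw [source, source, Subtype.mk.injEq]
  exact SimpleGraph.dart_edge_eq_iff d d'

lemma fst_symm_ne (d : B.Arrow) : d.symm.fst ≠ d.fst := d.adj.ne'

lemma eq_of_source_eq_of_fst_eq {d d' : B.Arrow} (h : B.source d = B.source d')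
    (h' : d.fst = d'.fst) : d = d' := by
  rcases source_eq_source.1 h with h | rfl
  · exact h
  · exact absurd h' (fst_symm_ne d')

lemma fst_mem_source (d : B.Arrow) : d.fst ∈ (B.source d).1 := by
  show d.fst ∈ d.edge
  rw [SimpleGraph.Dart.edge]; exact Sym2.mem_mk_left _ _

lemma mem_source_iff {d : B.Arrow} {p : V} : p ∈ (B.source d).1 ↔ p = d.fst ∨ p = d.snd :=
  Sym2.mem_iff

/-- Two distinct edges have at most one common vertex. -/
lemma eq_of_mem_of_mem {x y : B.Vertex} (hxy : x ≠ y) {p q : V} (hpx : p ∈ x.1) (hpy : p ∈ y.1)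
    (hqx : q ∈ x.1) (hqy : q ∈ y.1) : p = q := by
  by_contra h
  exact hxy (Subtype.ext (((Sym2.mem_and_mem_iff h).1 ⟨hpx, hqx⟩).trans
    ((Sym2.mem_and_mem_iff h).1 ⟨hpy, hqy⟩).symm))

lemma exists_source_eq_fst_eq {x : B.Vertex} {p : V} (hp : p ∈ x.1) :
    ∃ d : B.Arrow, B.source d = x ∧ d.fst = p := by
  obtain ⟨q, hq⟩ := Sym2.mem_iff_exists.1 hp
  have hadj : B.graph.Adj p q := by
    have := x.2
    rw [hq] at this
    exact this
  exact ⟨⟨(p, q), hadj⟩, Subtype.ext hq.symm, rfl⟩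

lemma fst_iterate_next (k : ℕ) (d : B.Arrow) : (B.next^[k] d).fst = d.fst := by
  induction k generalizing d with
  | zero => rfl
  | succ k ih => rw [Function.iterate_succ_apply, ih, B.fst_next]

lemma deg_iterate_next (k : ℕ) (d : B.Arrow) (hd : 0 < B.deg d) :
    B.deg (B.next^[k] d) = B.deg d :=
  Function.minimalPeriod_apply_iterate (Function.minimalPeriod_pos_iff_mem_periodicPts.1 hd) k

lemma iterate_deg (d : B.Arrow) : B.next^[B.deg d] d = d := Function.iterate_minimalPeriod

variable [Finite V]

lemma deg_pos (d : B.Arrow) : 0 < B.deg d :=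
  Function.minimalPeriod_pos_of_mem_periodicPts (B.next.injective.mem_periodicPts d)

lemma deg_iterate (k : ℕ) (d : B.Arrow) : B.deg (B.next^[k] d) = B.deg d :=
  deg_iterate_next k d (deg_pos d)

lemma exists_iterate_eq {a b : B.Arrow} (h : a.fst = b.fst) : ∃ k : ℕ, B.next^[k] a = b := by
  classical
  have := Fintype.ofFinite B.Arrow
  obtain ⟨k, -, -, hk⟩ := (B.sameCycle a b h).exists_pow_eq B.next
  exact ⟨k, by rw [← Equiv.Perm.iterate_eq_pow] at hk; exact hk⟩

/-- The number of steps from an arrow to another arrow on the same cycle. -/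
noncomputable def steps (a b : B.Arrow) : ℕ := sInf {k | B.next^[k] a = b}

lemma iterate_steps {a b : B.Arrow} (h : a.fst = b.fst) : B.next^[steps a b] a = b :=
  Nat.sInf_mem (s := {k | B.next^[k] a = b}) (exists_iterate_eq h)

lemma steps_lt {a b : B.Arrow} (h : a.fst = b.fst) : steps a b < B.deg a := by
  obtain ⟨k, hk⟩ := exists_iterate_eq h
  refine lt_of_le_of_lt (Nat.sInf_le (m := k % B.deg a) ?_) (Nat.mod_lt _ (deg_pos a))
  show B.next^[_] a = b
  rw [Function.iterate_mod_minimalPeriod_eq, hk]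

lemma eq_steps {a b : B.Arrow} {k : ℕ} (hk : k < B.deg a) (h : B.next^[k] a = b) :
    k = steps a b := by
  have hf : a.fst = b.fst := by rw [← h, fst_iterate_next]
  exact Function.iterate_injOn_Iio_minimalPeriod (f := B.next) (x := a) hk (steps_lt hf)
    (h.trans (iterate_steps hf).symm)

lemma steps_self (a : B.Arrow) : steps a a = 0 := (eq_steps (deg_pos a) rfl).symm

lemma steps_eq_zero {a b : B.Arrow} (h : a.fst = b.fst) : steps a b = 0 ↔ a = b :=
  ⟨fun h0 => by simpa [h0] using iterate_steps h, fun h => by rw [h, steps_self]⟩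

lemma steps_pos {a b : B.Arrow} (h : a.fst = b.fst) (hab : a ≠ b) : 0 < steps a b :=
  Nat.pos_of_ne_zero fun h0 => hab ((steps_eq_zero h).1 h0)

lemma deg_eq_of_fst_eq {a b : B.Arrow} (h : a.fst = b.fst) : B.deg a = B.deg b := by
  rw [← iterate_steps h, deg_iterate]

lemma steps_add_steps_of_le {a b c : B.Arrow} (hab : a.fst = b.fst) (hac : a.fst = c.fst)
    (h : steps a b ≤ steps a c) : steps a b + steps b c = steps a c := by
  have : steps a c - steps a b = steps b c := by
    apply eq_steps
    · rw [← deg_eq_of_fst_eq hab]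
      exact lt_of_le_of_lt (Nat.sub_le _ _) (steps_lt hac)
    · have hb : B.next^[steps a c - steps a b] b =
          B.next^[steps a c - steps a b] (B.next^[steps a b] a) := by rw [iterate_steps hab]
      rw [hb, ← Function.iterate_add_apply, Nat.sub_add_cancel h, iterate_steps hac]
  omega

lemma steps_add_steps_of_lt {a b c : B.Arrow} (hab : a.fst = b.fst) (hac : a.fst = c.fst)
    (h : steps a c < steps a b) : steps a b + steps b c = steps a c + B.deg a := by
  have hb := steps_lt hab
  have : steps a c + B.deg a - steps a b = steps b c := by
    apply eq_steps
    · rw [← deg_eq_of_fst_eq hab]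
      omega
    · have hb' : B.next^[steps a c + B.deg a - steps a b] b =
          B.next^[steps a c + B.deg a - steps a b] (B.next^[steps a b] a) := by
        rw [iterate_steps hab]
      rw [hb', ← Function.iterate_add_apply, Nat.sub_add_cancel (by omega),
        Function.iterate_add_apply, iterate_deg, iterate_steps hac]
  omega

end Combinatorics

section Algebra

variable {V : Type v} (B : BrauerTree V) (K : Type u) [Field K]

/-- The quotient map from the free algebra. -/
noncomputable def toAlg : B.Free K →ₐ[K] B.Alg K := RingQuot.mkAlgHom K (B.Rel K)

lemma toAlg_surjective : Function.Surjective (B.toAlg K) := RingQuot.mkAlgHom_surjective K (B.Rel K)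

lemma toAlg_rel {a b : B.Free K} (h : B.Rel K a b) : B.toAlg K a = B.toAlg K b :=
  RingQuot.mkAlgHom_rel K h

variable {B}

lemma e_mul_self (x : B.Vertex) : B.e K x * B.e K x = B.e K x := by
  have := B.toAlg_rel K (Rel.idem x)
  rw [map_mul] at this
  exact this

lemma e_mul_e_of_ne {x y : B.Vertex} (h : x ≠ y) : B.e K x * B.e K y = 0 := by
  have := B.toAlg_rel K (Rel.orth x y h)
  rw [map_mul, map_zero] at this
  exact this

lemma e_source_mul_arr (d : B.Arrow) : B.e K (B.source d) * B.arr K d = B.arr K d := by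
  have := B.toAlg_rel K (Rel.left d)
  rw [map_mul] at this
  exact this

lemma arr_mul_e_target (d : B.Arrow) : B.arr K d * B.e K (B.target d) = B.arr K d := by
  have := B.toAlg_rel K (Rel.right d)
  rw [map_mul] at this
  exact this

lemma e_mul_arr_of_ne {x : B.Vertex} {d : B.Arrow} (h : x ≠ B.source d) :
    B.e K x * B.arr K d = 0 := by
  rw [← e_source_mul_arr, ← mul_assoc, e_mul_e_of_ne K h, zero_mul]

lemma arr_mul_e_of_ne {x : B.Vertex} {d : B.Arrow} (h : B.target d ≠ x) :
    B.arr K d * B.e K x = 0 := by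
  rw [← arr_mul_e_target, mul_assoc, e_mul_e_of_ne K h, mul_zero]

lemma arr_mul_arr_of_ne {d d' : B.Arrow} (h : d' ≠ B.next d) : B.arr K d * B.arr K d' = 0 := by
  by_cases h' : B.target d = B.source d'
  · have := B.toAlg_rel K (Rel.zero d d' h' h)
    rw [map_mul, map_zero] at this
    exact this
  · rw [← arr_mul_e_target, mul_assoc, e_mul_arr_of_ne K h', mul_zero]

/-- The product of `k` consecutive arrows on a cycle, starting with `d`. -/
noncomputable def walk (d : B.Arrow) (k : ℕ) : B.Alg K :=
  ((List.iterate B.next d k).map (B.arr K)).prod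

lemma walk_zero (d : B.Arrow) : walk K d 0 = 1 := rfl

lemma walk_succ (d : B.Arrow) (k : ℕ) :
    walk K d (k + 1) = B.arr K d * walk K (B.next d) k := by
  simp [walk, List.iterate]

lemma walk_one (d : B.Arrow) : walk K d 1 = B.arr K d := by
  rw [walk_succ, walk_zero, mul_one]

lemma walk_add (d : B.Arrow) (j k : ℕ) :
    walk K d (j + k) = walk K d j * walk K (B.next^[j] d) k := by
  induction j generalizing d with
  | zero => simp [walk_zero]
  | succ j ih =>
    rw [Nat.add_right_comm, walk_succ, ih, walk_succ, mul_assoc, Function.iterate_succ_apply]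

lemma walk_deg_symm (d : B.Arrow) : walk K d.symm (B.deg d.symm) = walk K d (B.deg d) := by
  have := B.toAlg_rel K (Rel.cycle d)
  rw [map_list_prod, map_list_prod, List.map_map, List.map_map] at this
  exact this.symm

lemma e_source_mul_walk (d : B.Arrow) {k : ℕ} (hk : 0 < k) :
    B.e K (B.source d) * walk K d k = walk K d k := by
  obtain ⟨k, rfl⟩ := Nat.exists_eq_succ_of_ne_zero hk.ne'
  rw [Nat.succ_eq_add_one, walk_succ, ← mul_assoc, e_source_mul_arr]

lemma e_mul_walk_of_ne {x : B.Vertex} {d : B.Arrow} (h : x ≠ B.source d) {k : ℕ} (hk : 0 < k) :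
    B.e K x * walk K d k = 0 := by
  rw [← e_source_mul_walk K d hk, ← mul_assoc, e_mul_e_of_ne K h, zero_mul]

lemma walk_succ' (d : B.Arrow) (k : ℕ) :
    walk K d (k + 1) = walk K d k * B.arr K (B.next^[k] d) := by
  rw [walk_add, walk_one]

lemma walk_mul_e (d : B.Arrow) {k : ℕ} (hk : 0 < k) :
    walk K d k * B.e K (B.source (B.next^[k] d)) = walk K d k := by
  obtain ⟨k, rfl⟩ := Nat.exists_eq_succ_of_ne_zero hk.ne'
  rw [Nat.succ_eq_add_one, walk_succ', mul_assoc, Function.iterate_succ_apply']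
  exact congrArg _ (arr_mul_e_target K _)

lemma walk_mul_e_of_ne {x : B.Vertex} {d : B.Arrow} {k : ℕ} (h : B.source (B.next^[k] d) ≠ x)
    (hk : 0 < k) : walk K d k * B.e K x = 0 := by
  rw [← walk_mul_e K d hk, mul_assoc, e_mul_e_of_ne K h, mul_zero]

lemma arr_mul_walk_of_ne {a d : B.Arrow} (h : d ≠ B.next a) {k : ℕ} (hk : 0 < k) :
    B.arr K a * walk K d k = 0 := by
  obtain ⟨k, rfl⟩ := Nat.exists_eq_succ_of_ne_zero hk.ne'
  rw [Nat.succ_eq_add_one, walk_succ, ← mul_assoc, arr_mul_arr_of_ne K h, zero_mul]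

lemma walk_mul_walk_of_ne {a d : B.Arrow} {j k : ℕ} (h : d ≠ B.next^[j] a) (hj : 0 < j)
    (hk : 0 < k) : walk K a j * walk K d k = 0 := by
  obtain ⟨j, rfl⟩ := Nat.exists_eq_succ_of_ne_zero hj.ne'
  rw [Nat.succ_eq_add_one, Function.iterate_succ_apply'] at h
  rw [Nat.succ_eq_add_one, walk_succ', mul_assoc, arr_mul_walk_of_ne K h hk, mul_zero]

lemma sum_e [Fintype B.Vertex] : ∑ x : B.Vertex, B.e K x = 1 := by
  have := B.toAlg_rel K Rel.one
  rw [map_one, finsum_eq_sum_of_fintype, map_sum] at this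
  exact this

variable [Finite V]

lemma walk_of_deg_lt {d : B.Arrow} {k : ℕ} (hk : B.deg d < k) : walk K d k = 0 := by
  obtain ⟨m, rfl⟩ := Nat.exists_eq_add_of_lt hk
  rw [add_assoc, walk_add, iterate_deg, ← walk_deg_symm,
    walk_mul_walk_of_ne K _ (deg_pos _) (Nat.succ_pos m), ]
  rw [iterate_deg]
  exact (symm_ne_self d).symm

lemma span_eq_top : Submodule.span K ({a | ∃ x, a = B.e K x} ∪
    {a | ∃ d k, 0 < k ∧ k ≤ B.deg d ∧ a = walk K d k} : Set (B.Alg K)) = ⊤ := by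
  have := Fintype.ofFinite B.Vertex
  set S := Submodule.span K ({a | ∃ x, a = B.e K x} ∪
    {a | ∃ d k, 0 < k ∧ k ≤ B.deg d ∧ a = walk K d k} : Set (B.Alg K)) with hS
  have he (x) : B.e K x ∈ S := Submodule.subset_span (Or.inl ⟨x, rfl⟩)
  have hw (d : B.Arrow) (k) (hk : 0 < k) : walk K d k ∈ S := by
    rcases le_or_gt k (B.deg d) with h | h
    · exact Submodule.subset_span (Or.inr ⟨d, k, hk, h, rfl⟩)
    · rw [walk_of_deg_lt K h]; exact S.zero_mem
  have key (g : B.Vertex ⊕ B.Arrow) (a : B.Alg K) (ha : a ∈ S) :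
      B.toAlg K (FreeAlgebra.ι K g) * a ∈ S := by
    induction ha using Submodule.span_induction with
    | zero => rw [mul_zero]; exact S.zero_mem
    | add a b _ _ ha hb => rw [mul_add]; exact S.add_mem ha hb
    | smul c a _ ha => rw [mul_smul_comm]; exact S.smul_mem c ha
    | mem a ha =>
      rcases g with y | b
      · change B.e K y * a ∈ S
        rcases ha with ⟨x, rfl⟩ | ⟨d, k, hk, -, rfl⟩
        · by_cases h : y = x
          · rw [h, e_mul_self]; exact he x
          · rw [e_mul_e_of_ne K h]; exact S.zero_mem
        · by_cases h : y = B.source d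
          · rw [h, e_source_mul_walk K d hk]; exact hw d k hk
          · rw [e_mul_walk_of_ne K h hk]; exact S.zero_mem
      · change B.arr K b * a ∈ S
        rcases ha with ⟨x, rfl⟩ | ⟨d, k, hk, -, rfl⟩
        · by_cases h : B.target b = x
          · rw [← h, arr_mul_e_target, ← walk_one]; exact hw b 1 one_pos
          · rw [arr_mul_e_of_ne K h]; exact S.zero_mem
        · by_cases h : d = B.next b
          · rw [h, ← walk_succ]; exact hw b _ (Nat.succ_pos k)
          · rw [arr_mul_walk_of_ne K h hk]; exact S.zero_mem
  have key' (f : B.Free K) (a : B.Alg K) (ha : a ∈ S) :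
      B.toAlg K f * a ∈ S := by
    induction f using FreeAlgebra.induction generalizing a with
    | grade0 r =>
      rw [AlgHom.commutes, ← Algebra.smul_def]
      exact S.smul_mem r ha
    | grade1 g => exact key g a ha
    | mul f g hf hg =>
      rw [map_mul, mul_assoc]
      exact hf _ (hg _ ha)
    | add f g hf hg =>
      rw [map_add, add_mul]
      exact S.add_mem (hf _ ha) (hg _ ha)
  rw [eq_top_iff]
  rintro a -
  obtain ⟨f, rfl⟩ := B.toAlg_surjective K a
  have h1 : (1 : B.Alg K) ∈ S := by
    rw [← sum_e K]
    exact S.sum_mem fun x _ => he x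
  have := key' f 1 h1
  rwa [mul_one] at this

instance : Module.Finite K (B.Alg K) := by
  refine ⟨Submodule.fg_def.2 ⟨_, ?_, span_eq_top K⟩⟩
  refine Set.Finite.union ?_ ?_
  · exact (Set.finite_range (B.e K)).subset (by rintro _ ⟨x, rfl⟩; exact ⟨x, rfl⟩)
  · have : {a | ∃ d k, 0 < k ∧ k ≤ B.deg d ∧ a = walk K d k} ⊆
        ⋃ d : B.Arrow, (fun k => walk K d k) '' Set.Iic (B.deg d) := by
      rintro _ ⟨d, k, -, hk, rfl⟩
      exact Set.mem_iUnion.2 ⟨d, k, hk, rfl⟩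
    exact (Set.finite_iUnion fun d => (Set.finite_Iic _).image _).subset this

end Algebra

end BrauerTree

namespace BrauerTree

section Representation

variable {V : Type v} {B : BrauerTree V} (K : Type u) [Field K]

/-- The homomorphism from the Brauer tree algebra given by images of the idempotents and of the
arrows. -/
noncomputable def liftAlg {S : Type*} [Semiring S] [Algebra K S] (E : B.Vertex → S)
    (R : B.Arrow → S)
    (h : ∀ ⦃a b : B.Free K⦄, B.Rel K a b → FreeAlgebra.lift K (Sum.elim E R) a =
      FreeAlgebra.lift K (Sum.elim E R) b) : B.Alg K →ₐ[K] S :=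
  RingQuot.liftAlgHom K ⟨FreeAlgebra.lift K (Sum.elim E R), h⟩

section

variable {S : Type*} [Semiring S] [Algebra K S] (E : B.Vertex → S) (R : B.Arrow → S)
    (h : ∀ ⦃a b : B.Free K⦄, B.Rel K a b → FreeAlgebra.lift K (Sum.elim E R) a =
      FreeAlgebra.lift K (Sum.elim E R) b)

lemma liftAlg_e (x : B.Vertex) : liftAlg K E R h (B.e K x) = E x := by
  refine (RingQuot.liftAlgHom_mkAlgHom_apply _ _ h (B.freeE K x)).trans ?_
  simp [freeE]

lemma liftAlg_arr (d : B.Arrow) : liftAlg K E R h (B.arr K d) = R d := by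
  refine (RingQuot.liftAlgHom_mkAlgHom_apply _ _ h (B.freeArr K d)).trans ?_
  simp [freeArr]

lemma liftAlg_walk (d : B.Arrow) (k : ℕ) :
    liftAlg K E R h (walk K d k) = ((List.iterate B.next d k).map R).prod := by
  rw [walk, map_list_prod, List.map_map]
  congr 2
  funext d
  exact liftAlg_arr K E R h d

lemma lift_freeArr_prod (E : B.Vertex → S) (R : B.Arrow → S) (l : List B.Arrow) :
    FreeAlgebra.lift K (Sum.elim E R) (l.map (B.freeArr K)).prod = (l.map R).prod := by
  rw [map_list_prod, List.map_map]
  congr 2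
  funext d
  simp [freeArr]

end

open Classical in
lemma character_rel [Finite V] (x : B.Vertex) ⦃a b : B.Free K⦄ (h : B.Rel K a b) :
    FreeAlgebra.lift K (Sum.elim (fun y => if y = x then (1 : K) else 0) fun _ : B.Arrow => 0) a =
    FreeAlgebra.lift K (Sum.elim (fun y => if y = x then (1 : K) else 0) fun _ => 0) b := by
  have := Fintype.ofFinite B.Vertex
  have hc (d : B.Arrow) : ((B.cycleFrom d).map fun _ => (0 : K)).prod = 0 := by
    obtain ⟨n, hn⟩ := Nat.exists_eq_succ_of_ne_zero (deg_pos d).ne'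
    rw [deg] at hn
    rw [cycleFrom, hn]
    simp [List.iterate]
  cases h with
  | idem y => simp [freeE]
  | orth y z hyz =>
    simp only [freeE, map_mul, FreeAlgebra.lift_ι_apply, Sum.elim_inl, map_zero]
    split_ifs with h1 h2
    · exact absurd (h1.trans h2.symm) hyz
    all_goals simp
  | one => rw [finsum_eq_sum_of_fintype]; simp [freeE]
  | left d => simp [freeArr]
  | right d => simp [freeArr]
  | zero d d' _ _ => simp [freeArr]
  | cycle d => rw [lift_freeArr_prod, lift_freeArr_prod, hc, hc]

open Classical in
/-- The character of the Brauer tree algebra which belongs to the simple module at `x`. -/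
noncomputable def character [Finite V] (x : B.Vertex) : B.Alg K →ₐ[K] K :=
  liftAlg K (fun y => if y = x then 1 else 0) (fun _ => 0) (character_rel K x)

lemma character_e_self [Finite V] (x : B.Vertex) : character K x (B.e K x) = 1 := by
  rw [character, liftAlg_e, if_pos rfl]

lemma character_e_of_ne [Finite V] {x y : B.Vertex} (h : y ≠ x) : character K x (B.e K y) = 0 := by
  rw [character, liftAlg_e, if_neg h]

lemma character_walk [Finite V] (x : B.Vertex) (d : B.Arrow) {k : ℕ} (hk : 0 < k) :
    character K x (walk K d k) = 0 := by
  obtain ⟨k, rfl⟩ := Nat.exists_eq_succ_of_ne_zero hk.ne'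
  rw [Nat.succ_eq_add_one, walk_succ, map_mul, character, liftAlg_arr, zero_mul]

/-- The basis vector `some d` stands for the path from `d` to the edge of `d₀`, and `none` for the
trivial path; the full cycles starting with `d₀` and with `d₀.symm` are identified. -/
noncomputable def pathVec (d₀ d : B.Arrow) : Option B.Arrow →₀ K :=
  open Classical in Finsupp.single (some (if d = d₀.symm then d₀ else d)) 1

open Classical in
/-- The action of the idempotents on the projective module at the edge of `d₀`. -/
noncomputable def projE (d₀ : B.Arrow) (y : B.Vertex) : Module.End K (Option B.Arrow →₀ K) :=
  Finsupp.linearCombination K fun i => match i with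
    | none => if y = B.source d₀ then Finsupp.single none 1 else 0
    | some b => if y = B.source b then Finsupp.single (some b) 1 else 0

open Classical in
/-- The action of the arrows on the projective module at the edge of `d₀`. -/
noncomputable def projArr (d₀ d : B.Arrow) : Module.End K (Option B.Arrow →₀ K) :=
  Finsupp.linearCombination K fun i => match i with
    | none => if B.target d = B.source d₀ then pathVec K d₀ d else 0
    | some b => if b.fst ∈ (B.source d₀).1 ∧ B.source b ≠ B.source d₀ ∧ B.next d = b
        then pathVec K d₀ d else 0

section

variable {K} (d₀ : B.Arrow)

lemma pathVec_symm : pathVec K d₀ d₀.symm = pathVec K d₀ d₀ := by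
  simp [pathVec]

lemma pathVec_ne_zero (d : B.Arrow) : pathVec K d₀ d ≠ 0 := by
  simp [pathVec]

open Classical in
lemma projE_none (y : B.Vertex) : projE K d₀ y (Finsupp.single none 1) =
    if y = B.source d₀ then Finsupp.single none 1 else 0 := by
  simp [projE]

open Classical in
lemma projE_some (y : B.Vertex) (b : B.Arrow) : projE K d₀ y (Finsupp.single (some b) 1) =
    if y = B.source b then Finsupp.single (some b) 1 else 0 := by
  simp [projE]

open Classical in
lemma projE_pathVec (y : B.Vertex) (b : B.Arrow) : projE K d₀ y (pathVec K d₀ b) =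
    if y = B.source b then pathVec K d₀ b else 0 := by
  rw [pathVec, projE_some]
  by_cases h : b = d₀.symm
  · simp only [if_pos h]
    rw [h, source_symm]
  · simp only [if_neg h]

open Classical in
lemma projArr_none (d : B.Arrow) : projArr K d₀ d (Finsupp.single none 1) =
    if B.target d = B.source d₀ then pathVec K d₀ d else 0 := by
  simp [projArr]

open Classical in
lemma projArr_some (d b : B.Arrow) : projArr K d₀ d (Finsupp.single (some b) 1) =
    if b.fst ∈ (B.source d₀).1 ∧ B.source b ≠ B.source d₀ ∧ B.next d = b
        then pathVec K d₀ d else 0 := by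
  simp [projArr]

open Classical in
lemma projArr_pathVec (d b : B.Arrow) : projArr K d₀ d (pathVec K d₀ b) =
    if b.fst ∈ (B.source d₀).1 ∧ B.source b ≠ B.source d₀ ∧ B.next d = b
        then pathVec K d₀ d else 0 := by
  rw [pathVec, projArr_some]
  by_cases h : b = d₀.symm
  · simp only [if_pos h]
    rw [if_neg (by simp), if_neg (by simp [h, source_symm])]
  · simp only [if_neg h]

lemma projArr_apply_mem (d : B.Arrow) (i : Option B.Arrow) :
    projArr K d₀ d (Finsupp.single i 1) = pathVec K d₀ d ∨
      projArr K d₀ d (Finsupp.single i 1) = 0 := by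
  rcases i with _ | b
  · rw [projArr_none]; split_ifs <;> simp
  · rw [projArr_some]; split_ifs <;> simp

/-- The action of consecutive arrows on the projective module at the edge of `d₀`. -/
noncomputable abbrev projWalk (d : B.Arrow) (k : ℕ) : Module.End K (Option B.Arrow →₀ K) :=
  ((List.iterate B.next d k).map (projArr K d₀)).prod

lemma projWalk_succ (d : B.Arrow) (k : ℕ) :
    projWalk (K := K) d₀ d (k + 1) = projArr K d₀ d * projWalk d₀ (B.next d) k := by
  simp [projWalk, List.iterate]

lemma projWalk_apply_mem (d : B.Arrow) (i : Option B.Arrow) (k : ℕ) :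
    projWalk d₀ d (k + 1) (Finsupp.single i 1) = pathVec K d₀ d ∨
      projWalk (K := K) d₀ d (k + 1) (Finsupp.single i 1) = 0 := by
  induction k generalizing d with
  | zero =>
    rw [projWalk_succ]
    simpa [projWalk] using projArr_apply_mem (K := K) d₀ d i
  | succ k ih =>
    rw [projWalk_succ, Module.End.mul_apply]
    rcases ih (B.next d) with h | h
    · rw [h, projArr_pathVec]
      split_ifs <;> simp
    · rw [h, map_zero]; simp

lemma projWalk_none_eq_zero (d : B.Arrow) (k : ℕ)
    (h : B.source (B.next^[k + 1] d) ≠ B.source d₀) :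
    projWalk (K := K) d₀ d (k + 1) (Finsupp.single none 1) = 0 := by
  induction k generalizing d with
  | zero =>
    rw [projWalk_succ]
    simp only [projWalk, List.iterate, List.map_nil, List.prod_nil, mul_one]
    rw [projArr_none]
    exact if_neg h
  | succ k ih =>
    rw [projWalk_succ, Module.End.mul_apply, ih (B.next d) h, map_zero]

lemma projWalk_some_ne_zero (d b : B.Arrow) (k : ℕ)
    (h : projWalk (K := K) d₀ d k (Finsupp.single (some b) 1) ≠ 0) (j : ℕ) (hj : 0 < j)
    (hjk : j ≤ k) :
    B.source (B.next^[j] d) ≠ B.source d₀ ∧ (B.next^[j] d).fst ∈ (B.source d₀).1 := by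
  induction k generalizing d j with
  | zero => omega
  | succ k ih =>
    rw [projWalk_succ, Module.End.mul_apply] at h
    have h' : projWalk (K := K) d₀ (B.next d) k (Finsupp.single (some b) 1) ≠ 0 :=
      fun h' => h (by rw [h', map_zero])
    rcases Nat.lt_or_ge 1 j with hj1 | hj1
    · obtain ⟨j, rfl⟩ := Nat.exists_eq_succ_of_ne_zero hj.ne'
      rw [Nat.succ_eq_add_one, Function.iterate_succ_apply]
      exact ih (B.next d) h' j (by omega) (by omega)
    · obtain rfl : j = 1 := by omega
      rcases k with _ | k
      · simp only [projWalk, List.iterate, List.map_nil, List.prod_nil,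
          Module.End.one_apply] at h
        rw [projArr_some] at h
        split_ifs at h with h1
        · obtain ⟨h1, h2, rfl⟩ := h1
          exact ⟨h2, h1⟩
        · exact absurd rfl h
      · rw [(projWalk_apply_mem d₀ _ _ _).resolve_right h', projArr_pathVec] at h
        split_ifs at h with h1
        · exact ⟨h1.2.1, h1.1⟩
        · exact absurd rfl h

variable [Finite V]

lemma projWalk_deg_some (d b : B.Arrow) :
    projWalk (K := K) d₀ d (B.deg d) (Finsupp.single (some b) 1) = 0 := by
  by_contra h
  have hd := (projWalk_some_ne_zero d₀ d b _ h (B.deg d) (deg_pos d) le_rfl).2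
  rw [iterate_deg] at hd
  obtain ⟨a, ha, haf⟩ := exists_source_eq_fst_eq hd
  rcases Nat.eq_zero_or_pos (steps d a) with h0 | h0
  · have hda : d = a := by simpa [h0] using iterate_steps haf.symm
    refine (projWalk_some_ne_zero d₀ d b _ h (B.deg d) (deg_pos d) le_rfl).1 ?_
    rw [iterate_deg, hda, ha]
  · refine (projWalk_some_ne_zero d₀ d b _ h _ h0 (steps_lt haf.symm).le).1 ?_
    rw [iterate_steps haf.symm, ha]

lemma projWalk_deg_none (d : B.Arrow) (hd : B.source d = B.source d₀) :
    projWalk (K := K) d₀ d (B.deg d) (Finsupp.single none 1) = pathVec K d₀ d := by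
  have key (k : ℕ) (hk : k + 1 ≤ B.deg d) :
      projWalk d₀ (B.next^[B.deg d - (k + 1)] d) (k + 1) (Finsupp.single none 1) =
        pathVec K d₀ (B.next^[B.deg d - (k + 1)] d) := by
    induction k with
    | zero =>
      rw [projWalk_succ]
      simp only [projWalk, List.iterate, List.map_nil, List.prod_nil, mul_one]
      rw [projArr_none, if_pos]
      rw [target, ← Function.iterate_succ_apply' (f := B.next), Nat.succ_eq_add_one, zero_add,
        Nat.sub_add_cancel (deg_pos d), iterate_deg, hd]
    | succ k ih =>
      rw [projWalk_succ, Module.End.mul_apply, ← Function.iterate_succ_apply' (f := B.next)]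
      have h1 : (B.deg d - (k + 1 + 1)).succ = B.deg d - (k + 1) := by omega
      rw [h1, ih (by omega), projArr_pathVec, if_pos]
      refine ⟨?_, ?_, ?_⟩
      · rw [fst_iterate_next, ← hd]; exact fst_mem_source d
      · rw [← hd]
        intro h
        have h2 := eq_of_source_eq_of_fst_eq h (fst_iterate_next _ d)
        have := eq_steps (a := d) (b := d) (k := B.deg d - (k + 1)) (by omega) h2
        rw [steps_self] at this
        omega
      · rw [← Function.iterate_succ_apply' (f := B.next), h1]
  have := key (B.deg d - 1) (by have := deg_pos d; omega)
  rwa [Nat.sub_add_cancel (deg_pos d), Nat.sub_self] at this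

lemma proj_rel ⦃a b : B.Free K⦄ (h : B.Rel K a b) :
    FreeAlgebra.lift K (Sum.elim (projE K d₀) (projArr K d₀)) a =
    FreeAlgebra.lift K (Sum.elim (projE K d₀) (projArr K d₀)) b := by
  have := Fintype.ofFinite B.Vertex
  classical
  cases h with
  | idem y =>
    refine Finsupp.lhom_ext' fun i => LinearMap.ext_ring ?_
    rcases i with _ | b
    · simp only [freeE, map_mul, FreeAlgebra.lift_ι_apply, Sum.elim_inl, LinearMap.comp_apply,
        Finsupp.lsingle_apply, Module.End.mul_apply, projE_none]
      split_ifs with h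
      · rw [projE_none, if_pos h]
      · simp
    · simp only [freeE, map_mul, FreeAlgebra.lift_ι_apply, Sum.elim_inl, LinearMap.comp_apply,
        Finsupp.lsingle_apply, Module.End.mul_apply, projE_some]
      split_ifs with h
      · rw [projE_some, if_pos h]
      · simp
  | orth y z hyz =>
    refine Finsupp.lhom_ext' fun i => LinearMap.ext_ring ?_
    rcases i with _ | b
    · simp only [freeE, map_mul, FreeAlgebra.lift_ι_apply, Sum.elim_inl, LinearMap.comp_apply,
        Finsupp.lsingle_apply, Module.End.mul_apply, projE_none]
      split_ifs with h
      · rw [projE_none, if_neg (fun h' => hyz (h'.trans h.symm))]; simp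
      · simp
    · simp only [freeE, map_mul, FreeAlgebra.lift_ι_apply, Sum.elim_inl, LinearMap.comp_apply,
        Finsupp.lsingle_apply, Module.End.mul_apply, projE_some]
      split_ifs with h
      · rw [projE_some, if_neg (fun h' => hyz (h'.trans h.symm))]; simp
      · simp
  | one =>
    refine Finsupp.lhom_ext' fun i => LinearMap.ext_ring ?_
    rw [finsum_eq_sum_of_fintype]
    rcases i with _ | b
    · simp [freeE, projE_none]
    · simp [freeE, projE_some]
  | left d =>
    refine Finsupp.lhom_ext' fun i => LinearMap.ext_ring ?_
    simp only [freeE, freeArr, map_mul, FreeAlgebra.lift_ι_apply, Sum.elim_inl, Sum.elim_inr,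
      LinearMap.comp_apply, Finsupp.lsingle_apply, Module.End.mul_apply]
    rcases projArr_apply_mem (K := K) d₀ d i with h | h
    · rw [h, projE_pathVec, if_pos rfl]
    · rw [h, map_zero]
  | right d =>
    refine Finsupp.lhom_ext' fun i => LinearMap.ext_ring ?_
    simp only [freeE, freeArr, map_mul, FreeAlgebra.lift_ι_apply, Sum.elim_inl, Sum.elim_inr,
      LinearMap.comp_apply, Finsupp.lsingle_apply, Module.End.mul_apply]
    rcases i with _ | b
    · rw [projE_none]
      split_ifs with h
      · rfl
      · rw [map_zero, projArr_none, if_neg h]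
    · rw [projE_some]
      split_ifs with h
      · rfl
      · rw [map_zero, projArr_some, if_neg]
        rintro ⟨-, -, rfl⟩
        exact h rfl
  | zero d d' _ hd =>
    refine Finsupp.lhom_ext' fun i => LinearMap.ext_ring ?_
    simp only [freeArr, map_mul, FreeAlgebra.lift_ι_apply, Sum.elim_inr, map_zero,
      LinearMap.comp_apply, Finsupp.lsingle_apply, Module.End.mul_apply, LinearMap.zero_apply]
    rcases projArr_apply_mem (K := K) d₀ d' i with h | h
    · rw [h, projArr_pathVec, if_neg (fun h' => hd h'.2.2.symm)]
    · rw [h, map_zero]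
  | cycle d =>
    rw [lift_freeArr_prod, lift_freeArr_prod]
    refine Finsupp.lhom_ext' fun i => LinearMap.ext_ring ?_
    change projWalk d₀ d (B.deg d) (Finsupp.single i 1) =
      projWalk d₀ d.symm (B.deg d.symm) (Finsupp.single i 1)
    rcases i with _ | b
    · by_cases hd : B.source d = B.source d₀
      · rw [projWalk_deg_none d₀ d hd, projWalk_deg_none d₀ d.symm (by rw [source_symm, hd])]
        rcases source_eq_source.1 hd with rfl | rfl
        · rw [pathVec_symm]
        · rw [pathVec_symm, SimpleGraph.Dart.symm_symm]
      · have h (d : B.Arrow) (hd : B.source d ≠ B.source d₀) :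
            projWalk (K := K) d₀ d (B.deg d) (Finsupp.single none 1) = 0 := by
          obtain ⟨n, hn⟩ := Nat.exists_eq_succ_of_ne_zero (deg_pos d).ne'
          rw [hn]
          apply projWalk_none_eq_zero
          rw [← Nat.succ_eq_add_one, ← hn, iterate_deg]
          exact hd
        rw [h d hd, h d.symm (by rwa [source_symm])]
    · rw [projWalk_deg_some, projWalk_deg_some]

end

lemma walk_ne_zero [Finite V] (d : B.Arrow) {k : ℕ} (hk : k ≤ B.deg d) : walk K d k ≠ 0 := by
  have h : walk K d (B.deg d) ≠ 0 := by
    intro h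
    have h1 := congrArg (fun a => liftAlg K _ _ (proj_rel (K := K) d) a (Finsupp.single none 1)) h
    simp only [liftAlg_walk, map_zero, LinearMap.zero_apply] at h1
    exact pathVec_ne_zero (K := K) d d ((projWalk_deg_none d d rfl).symm.trans h1)
  intro h0
  apply h
  rw [← Nat.add_sub_cancel' hk, walk_add, h0, zero_mul]

end Representation

end BrauerTree

namespace BrauerTree

section Corners

variable {V : Type v} {B : BrauerTree V}

lemma exists_source_eq (p : V) (x : B.Vertex) :
    ∃ d : B.Arrow, B.source d = x ∧ (p ∈ x.1 → d.fst = p) := by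
  by_cases hp : p ∈ x.1
  · obtain ⟨d, hd, hdp⟩ := exists_source_eq_fst_eq hp
    exact ⟨d, hd, fun _ => hdp⟩
  · obtain ⟨d, hd, -⟩ := exists_source_eq_fst_eq (Sym2.out_fst_mem x.1)
    exact ⟨d, hd, fun h => absurd h hp⟩

/-- The arrow which starts at `x` and lies on the cycle around the end `p` of `x`. -/
noncomputable def dartAt (p : V) (x : B.Vertex) : B.Arrow := (exists_source_eq p x).choose

lemma source_dartAt (p : V) (x : B.Vertex) : B.source (dartAt p x) = x :=
  (exists_source_eq p x).choose_spec.1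

lemma fst_dartAt {p : V} {x : B.Vertex} (hp : p ∈ x.1) : (dartAt p x).fst = p :=
  (exists_source_eq p x).choose_spec.2 hp

lemma eq_dartAt {d : B.Arrow} {p : V} {x : B.Vertex} (hd : d.fst = p) (hx : B.source d = x) :
    d = dartAt p x := by
  have hp : p ∈ x.1 := by rw [← hd, ← hx]; exact fst_mem_source d
  exact eq_of_source_eq_of_fst_eq (by rw [source_dartAt, hx]) (by rw [fst_dartAt hp, hd])

lemma dartAt_injective {p : V} {x y : B.Vertex} (h : dartAt p x = dartAt p y) : x = y := by
  rw [← source_dartAt p x, h, source_dartAt]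

/-- The length of the path from `x` to `y` around the common end `p`. -/
noncomputable def len (p : V) (x y : B.Vertex) : ℕ := steps (dartAt p x) (dartAt p y)

lemma lt_deg_of_ne {d : B.Arrow} {k : ℕ} {x y : B.Vertex} (hxy : x ≠ y) (hk : k ≤ B.deg d)
    (hx : B.source d = x) (hy : B.source (B.next^[k] d) = y) : k < B.deg d := by
  refine lt_of_le_of_ne hk fun h => hxy ?_
  rw [← hx, ← hy, h, iterate_deg]

lemma e_mul_walk_mul_e_eq_zero {K : Type u} [Field K] {x y : B.Vertex} {d : B.Arrow} {k : ℕ}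
    (hk : 0 < k)
    (h : ¬ (B.source d = x ∧ B.source (B.next^[k] d) = y)) :
    B.e K x * walk K d k * B.e K y = 0 := by
  by_cases hx : x = B.source d
  · rw [mul_assoc, walk_mul_e_of_ne K (fun h' => h ⟨hx.symm, h'⟩) hk, mul_zero]
  · rw [e_mul_walk_of_ne K hx hk, zero_mul]

variable [Finite V]

lemma iterate_len {p : V} {x y : B.Vertex} (hx : p ∈ x.1) (hy : p ∈ y.1) :
    B.next^[len p x y] (dartAt p x) = dartAt p y :=
  iterate_steps (by rw [fst_dartAt hx, fst_dartAt hy])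

lemma len_pos {p : V} {x y : B.Vertex} (hx : p ∈ x.1) (hy : p ∈ y.1) (hxy : x ≠ y) :
    0 < len p x y :=
  steps_pos (by rw [fst_dartAt hx, fst_dartAt hy]) fun h => hxy (dartAt_injective h)

lemma len_lt_deg {p : V} {x y : B.Vertex} (hx : p ∈ x.1) (hy : p ∈ y.1) :
    len p x y < B.deg (dartAt p x) :=
  steps_lt (by rw [fst_dartAt hx, fst_dartAt hy])

lemma len_add_len_of_le {p : V} {x y z : B.Vertex} (hx : p ∈ x.1) (hy : p ∈ y.1) (hz : p ∈ z.1)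
    (h : len p x y ≤ len p x z) : len p x y + len p y z = len p x z :=
  steps_add_steps_of_le (by rw [fst_dartAt hx, fst_dartAt hy])
    (by rw [fst_dartAt hx, fst_dartAt hz]) h

lemma len_add_len_of_lt {p : V} {x y z : B.Vertex} (hx : p ∈ x.1) (hy : p ∈ y.1) (hz : p ∈ z.1)
    (h : len p x z < len p x y) :
    len p x y + len p y z = len p x z + B.deg (dartAt p x) :=
  steps_add_steps_of_lt (by rw [fst_dartAt hx, fst_dartAt hy])
    (by rw [fst_dartAt hx, fst_dartAt hz]) h

lemma len_le_of_len_le {p : V} {x y z : B.Vertex} (hx : p ∈ x.1) (hy : p ∈ y.1) (hz : p ∈ z.1)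
    (h : len p y z ≤ len p x z) : len p x y ≤ len p x z := by
  by_contra! h'
  have := len_add_len_of_lt hx hy hz h'
  have := len_lt_deg hx hy
  omega

variable (K : Type u) [Field K]

/-- The path from `x` to `y` around the common end `p`, as an element of the algebra. -/
noncomputable def pth (p : V) (x y : B.Vertex) : B.Alg K := walk K (dartAt p x) (len p x y)

variable {K}

lemma pth_mul_pth {p : V} {x y z : B.Vertex} (hx : p ∈ x.1) (hy : p ∈ y.1) (hz : p ∈ z.1)
    (h : len p x y ≤ len p x z) : pth K p x y * pth K p y z = pth K p x z := by
  rw [pth, pth, pth, ← len_add_len_of_le hx hy hz h, walk_add, iterate_len hx hy]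

lemma pth_mul_pth_eq_zero {p : V} {x y z : B.Vertex} (hx : p ∈ x.1) (hy : p ∈ y.1) (hz : p ∈ z.1)
    (hxz : x ≠ z) (h : len p x z < len p x y) : pth K p x y * pth K p y z = 0 := by
  have h1 := len_add_len_of_lt hx hy hz h
  have h2 := len_pos hx hz hxz
  rw [pth, pth, ← iterate_len hx hy, ← walk_add, h1, walk_of_deg_lt K (by omega)]

lemma pth_mul_pth_of_ne {p q : V} {x y z : B.Vertex} (hpq : p ≠ q) (hxy : x ≠ y) (hyz : y ≠ z)
    (hpx : p ∈ x.1) (hpy : p ∈ y.1) (hqy : q ∈ y.1) (hqz : q ∈ z.1) :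
    pth K p x y * pth K q y z = 0 := by
  refine walk_mul_walk_of_ne K ?_ (len_pos hpx hpy hxy) (len_pos hqy hqz hyz)
  rw [iterate_len hpx hpy]
  intro h
  have := congrArg (fun d : B.Arrow => d.fst) h
  simp only [fst_dartAt hqy, fst_dartAt hpy] at this
  exact hpq this.symm

lemma pth_ne_zero {p : V} {x y : B.Vertex} (hx : p ∈ x.1) (hy : p ∈ y.1) : pth K p x y ≠ 0 :=
  walk_ne_zero K _ (len_lt_deg hx hy).le

lemma e_mul_pth {p : V} {x y : B.Vertex} (hx : p ∈ x.1) (hy : p ∈ y.1) (hxy : x ≠ y) :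
    B.e K x * pth K p x y = pth K p x y := by
  have := e_source_mul_walk K (dartAt p x) (len_pos hx hy hxy)
  rwa [source_dartAt] at this

lemma pth_mul_e {p : V} {x y : B.Vertex} (hx : p ∈ x.1) (hy : p ∈ y.1) (hxy : x ≠ y) :
    pth K p x y * B.e K y = pth K p x y := by
  have := walk_mul_e K (dartAt p x) (len_pos hx hy hxy)
  rwa [iterate_len hx hy, source_dartAt] at this

lemma span_induction_alg {P : B.Alg K → Prop} (e : ∀ x, P (B.e K x))
    (walk : ∀ d k, 0 < k → k ≤ B.deg d → P (walk K d k)) (zero : P 0)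
    (add : ∀ a b, P a → P b → P (a + b)) (smul : ∀ (c : K) a, P a → P (c • a)) (a : B.Alg K) :
    P a := by
  have ha : a ∈ Submodule.span K ({a | ∃ x, a = B.e K x} ∪
      {a | ∃ d k, 0 < k ∧ k ≤ B.deg d ∧ a = BrauerTree.walk K d k} : Set (B.Alg K)) := by
    rw [span_eq_top]; trivial
  induction ha using Submodule.span_induction with
  | zero => exact zero
  | add a b _ _ ha hb => exact add a b ha hb
  | smul c a _ ha => exact smul c a ha
  | mem a ha =>
    rcases ha with ⟨x, rfl⟩ | ⟨d, k, hk, hk', rfl⟩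
    · exact e x
    · exact walk d k hk hk'

lemma walk_eq_pth {d : B.Arrow} {k : ℕ} {x y : B.Vertex} (hk : k < B.deg d)
    (hx : B.source d = x) (hy : B.source (B.next^[k] d) = y) : walk K d k = pth K d.fst x y := by
  have h1 : d = dartAt d.fst x := eq_dartAt rfl hx
  have h2 : B.next^[k] d = dartAt d.fst y := eq_dartAt (fst_iterate_next k d) hy
  rw [pth, len, ← h1, ← h2, ← eq_steps hk rfl]

lemma exists_corner_eq_smul {p : V} {x y : B.Vertex} (hx : p ∈ x.1) (hy : p ∈ y.1) (hxy : x ≠ y)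
    (a : B.Alg K) : ∃ c : K, B.e K x * a * B.e K y = c • pth K p x y := by
  induction a using span_induction_alg with
  | zero => exact ⟨0, by simp⟩
  | add a b ha hb =>
    obtain ⟨c, hc⟩ := ha
    obtain ⟨c', hc'⟩ := hb
    exact ⟨c + c', by rw [mul_add, add_mul, hc, hc', add_smul]⟩
  | smul c a ha =>
    obtain ⟨c', hc'⟩ := ha
    exact ⟨c * c', by rw [mul_smul_comm, smul_mul_assoc, hc', mul_smul]⟩
  | e z =>
    refine ⟨0, ?_⟩
    rw [zero_smul]
    by_cases hz : x = z
    · rw [← hz, e_mul_self, e_mul_e_of_ne K hxy]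
    · rw [e_mul_e_of_ne K hz, zero_mul]
  | walk d k hk hk' =>
    by_cases h : B.source d = x ∧ B.source (B.next^[k] d) = y
    · refine ⟨1, ?_⟩
      have hdx : d.fst ∈ x.1 := by rw [← h.1]; exact fst_mem_source d
      have hdy : d.fst ∈ y.1 := by
        rw [← h.2, ← fst_iterate_next k d]; exact fst_mem_source _
      rw [walk_eq_pth (lt_deg_of_ne hxy hk' h.1 h.2) h.1 h.2,
        eq_of_mem_of_mem hxy hx hy hdx hdy, e_mul_pth hdx hdy hxy, pth_mul_e hdx hdy hxy, one_smul]
    · exact ⟨0, by rw [e_mul_walk_mul_e_eq_zero hk h, zero_smul]⟩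

lemma corner_eq_zero {x y : B.Vertex} (h : ∀ p, p ∈ x.1 → p ∉ y.1) (a : B.Alg K) :
    B.e K x * a * B.e K y = 0 := by
  induction a using span_induction_alg with
  | zero => simp
  | add a b ha hb => rw [mul_add, add_mul, ha, hb, add_zero]
  | smul c a ha => rw [mul_smul_comm, smul_mul_assoc, ha, smul_zero]
  | e z =>
    by_cases hz : x = z
    · rw [← hz, e_mul_self, e_mul_e_of_ne K]
      rintro rfl
      exact h _ (Sym2.out_fst_mem x.1) (Sym2.out_fst_mem x.1)
    · rw [e_mul_e_of_ne K hz, zero_mul]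
  | walk d k hk hk' =>
    refine e_mul_walk_mul_e_eq_zero hk ?_
    rintro ⟨rfl, rfl⟩
    refine h d.fst (fst_mem_source d) ?_
    rw [← fst_iterate_next k d]; exact fst_mem_source _

lemma pth_mul_corner {p : V} {x y : B.Vertex} (hx : p ∈ x.1) (hy : p ∈ y.1) (hxy : x ≠ y)
    (a : B.Alg K) :
    pth K p x y * (B.e K y * a * B.e K y) = character K y a • pth K p x y := by
  induction a using span_induction_alg with
  | zero => simp
  | add a b ha hb => rw [mul_add, add_mul, mul_add, ha, hb, map_add, add_smul]
  | smul c a ha =>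
    rw [mul_smul_comm, smul_mul_assoc, mul_smul_comm, ha, map_smul, smul_assoc]
  | e z =>
    by_cases hz : z = y
    · rw [hz, e_mul_self, e_mul_self, character_e_self, one_smul, pth_mul_e hx hy hxy]
    · rw [e_mul_e_of_ne K (Ne.symm hz), zero_mul, mul_zero, character_e_of_ne K hz, zero_smul]
  | walk d k hk hk' =>
    rw [character_walk K y d hk, zero_smul]
    by_cases h : B.source d = y ∧ B.source (B.next^[k] d) = y
    · obtain ⟨h1, h2⟩ := h
      have hkd : k = B.deg d := by
        by_contra hne
        have h3 := eq_of_source_eq_of_fst_eq (h2.trans h1.symm) (fst_iterate_next k d)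
        have := eq_steps (lt_of_le_of_ne hk' hne) h3
        rw [steps_self] at this
        omega
      subst hkd
      have h4 : B.e K y * walk K d (B.deg d) * B.e K y = walk K d (B.deg d) := by
        have h5 := walk_mul_e K d hk
        rw [h2] at h5
        have h6 := e_source_mul_walk K d hk
        rw [h1] at h6
        rw [h6, h5]
      rw [h4]
      by_cases hd : d = B.next^[len p x y] (dartAt p x)
      · rw [pth, hd, ← walk_add, walk_of_deg_lt]
        rw [deg_iterate]
        have := len_pos hx hy hxy
        omega
      · exact walk_mul_walk_of_ne K hd (len_pos hx hy hxy) hk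
    · rw [e_mul_walk_mul_e_eq_zero hk h, mul_zero]

end Corners

section Paths

variable {V : Type v} {B : BrauerTree V} {K : Type u} [Field K]

/-- A path which is nonzero in the algebra goes around a single cycle. -/
lemma eq_iterate_of_prod_ne_zero {d : B.Arrow} {l : List B.Arrow}
    (h : ((d :: l).map (B.arr K)).prod ≠ 0) : d :: l = List.iterate B.next d (l.length + 1) := by
  induction l generalizing d with
  | nil => rfl
  | cons d' l ih =>
    have hd : d' = B.next d := by
      by_contra hd
      apply h
      simp only [List.map_cons, List.prod_cons]
      rw [← mul_assoc, arr_mul_arr_of_ne K hd, zero_mul]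
    have h' : ((d' :: l).map (B.arr K)).prod ≠ 0 := fun h' => h (by
      rw [List.map_cons, List.prod_cons, h', mul_zero])
    rw [List.length_cons, List.iterate, ← hd, ← ih h']

lemma IsPath.source_iterate {x y : B.Vertex} {d : B.Arrow} {k : ℕ}
    (h : B.IsPath x (List.iterate B.next d k) y) (hk : 0 < k) :
    B.source d = x ∧ B.source (B.next^[k] d) = y := by
  induction k generalizing d x with
  | zero => omega
  | succ k ih =>
    obtain ⟨h1, h2⟩ := h
    refine ⟨h1, ?_⟩
    rcases Nat.eq_zero_or_pos k with rfl | hk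
    · exact h2
    · exact (ih h2 hk).2

lemma isPath_iterate (d : B.Arrow) (k : ℕ) :
    B.IsPath (B.source d) (List.iterate B.next d k) (B.source (B.next^[k] d)) := by
  induction k generalizing d with
  | zero => rfl
  | succ k ih => exact ⟨rfl, ih (B.next d)⟩

variable [Finite V]

lemma isPath_pth {p : V} {x y : B.Vertex} (hx : p ∈ x.1) (hy : p ∈ y.1) :
    B.IsPath x (List.iterate B.next (dartAt p x) (len p x y)) y := by
  have := isPath_iterate (dartAt p x) (len p x y)
  rwa [iterate_len hx hy, source_dartAt, source_dartAt] at this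

lemma IsPath.eq_pth {x y : B.Vertex} (hxy : x ≠ y) {l : List B.Arrow} (h : B.IsPath x l y)
    (hl : (l.map (B.arr K)).prod ≠ 0) :
    ∃ p, p ∈ x.1 ∧ p ∈ y.1 ∧ l = List.iterate B.next (dartAt p x) (len p x y) := by
  rcases l with _ | ⟨d, l⟩
  · exact absurd h hxy
  have hd := eq_iterate_of_prod_ne_zero hl
  rw [hd] at h hl ⊢
  obtain ⟨h1, h2⟩ := h.source_iterate (Nat.succ_pos _)
  have hk : l.length + 1 ≤ B.deg d := by
    by_contra! hk
    exact hl (walk_of_deg_lt K hk)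
  have hk' := lt_deg_of_ne hxy hk h1 h2
  refine ⟨d.fst, by rw [← h1]; exact fst_mem_source d, ?_, ?_⟩
  · rw [← h2, ← fst_iterate_next (l.length + 1) d]; exact fst_mem_source _
  · rw [len, ← eq_dartAt rfl h1, ← eq_dartAt (fst_iterate_next _ d) h2, ← eq_steps hk' rfl]

end Paths

section Cycles

variable {V : Type v} {B : BrauerTree V} {K : Type u} [Field K]

lemma IsNonzeroChain.eq_iterate {d : B.Arrow} {l : List B.Arrow}
    (h : (d :: l).IsChain fun a b => B.arr K a * B.arr K b ≠ 0) :
    d :: l = List.iterate B.next d (l.length + 1) := by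
  induction l generalizing d with
  | nil => rfl
  | cons d' l ih =>
    rw [List.isChain_cons_cons] at h
    have hd : d' = B.next d := by
      by_contra hd
      exact h.1 (arr_mul_arr_of_ne K hd)
    rw [List.length_cons, List.iterate, ← hd, ← ih h.2]

lemma mem_iterate_iff {d a : B.Arrow} {k : ℕ} :
    a ∈ List.iterate B.next d k ↔ ∃ j < k, B.next^[j] d = a := by
  rw [List.mem_iterate]
  simp [eq_comm]

lemma nodup_iterate {d : B.Arrow} {k : ℕ} (hk : k ≤ B.deg d) :
    (List.iterate B.next d k).Nodup := by
  rw [List.nodup_iff_injective_getElem]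
  rintro ⟨i, hi⟩ ⟨j, hj⟩ h
  rw [List.length_iterate] at hi hj
  simp only [List.getElem_iterate] at h
  exact Fin.ext (Function.iterate_injOn_Iio_minimalPeriod (f := B.next) (x := d)
    (show i < B.deg d by omega) (show j < B.deg d by omega) h)

lemma onCycle_iff {l : List B.Arrow} {p : V} (hl : ∀ a : B.Arrow, a ∈ l ↔ a.fst = p)
    (x : B.Vertex) : B.OnCycle x l ↔ p ∈ x.1 := by
  constructor
  · rintro ⟨a, ha, rfl | rfl⟩
    · rw [← (hl a).1 ha]; exact fst_mem_source a
    · rw [← (hl a).1 ha, ← B.fst_next a]; exact fst_mem_source _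
  · intro hp
    exact ⟨dartAt p x, (hl _).2 (fst_dartAt hp), Or.inl (source_dartAt p x)⟩

variable [Finite V]

lemma mem_cycleFrom_iff {d a : B.Arrow} : a ∈ B.cycleFrom d ↔ a.fst = d.fst := by
  rw [cycleFrom, mem_iterate_iff]
  constructor
  · rintro ⟨j, -, rfl⟩
    exact fst_iterate_next j d
  · intro h
    exact ⟨steps d a, steps_lt h.symm, iterate_steps h.symm⟩

lemma arr_mul_arr_next_ne_zero {d : B.Arrow} (h : B.next d ≠ d) :
    B.arr K d * B.arr K (B.next d) ≠ 0 := by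
  have h2 : 2 ≤ B.deg d := by
    by_contra! h2
    have h1 := deg_pos d
    have h3 : B.deg d = 1 := by omega
    have := iterate_deg d
    rw [h3] at this
    exact h this
  have := walk_ne_zero K d h2
  rwa [walk_succ, walk_one] at this

lemma isChain_iterate {d : B.Arrow} (hd : 2 ≤ B.deg d) (k : ℕ) :
    (List.iterate B.next d k).IsChain fun a b => B.arr K a * B.arr K b ≠ 0 := by
  induction k generalizing d with
  | zero => exact List.isChain_nil
  | succ k ih =>
    rcases k with _ | k
    · exact List.isChain_singleton _
    · have h := ih (d := B.next d) (by rwa [show B.deg (B.next d) = B.deg d from deg_iterate 1 d])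
      refine List.isChain_cons_cons.2 ⟨arr_mul_arr_next_ne_zero fun h' => ?_, h⟩
      have := eq_steps (k := 1) (by omega) h'
      rw [steps_self] at this
      omega

lemma isNonzeroChain_iterate {d : B.Arrow} {k : ℕ} (hk : k + 1 ≤ B.deg d) :
    B.IsNonzeroChain K (List.iterate B.next d (k + 1)) := by
  refine ⟨by simp [List.iterate], nodup_iterate hk, ?_⟩
  rcases k with _ | k
  · exact List.isChain_singleton _
  · exact isChain_iterate (by omega) _

lemma isACycle_cycleFrom (d : B.Arrow) : B.IsACycle K (B.cycleFrom d) := by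
  obtain ⟨k, hk⟩ := Nat.exists_eq_succ_of_ne_zero (deg_pos d).ne'
  have hc : B.cycleFrom d = List.iterate B.next d (k + 1) := congrArg _ hk
  refine ⟨hc ▸ isNonzeroChain_iterate hk.ge, ?_⟩
  rintro (_ | ⟨d', l'⟩) hl' hinf
  · exact absurd rfl hl'.1
  have hl := IsNonzeroChain.eq_iterate hl'.2.2
  have hfst (a : B.Arrow) (ha : a ∈ d' :: l') : a.fst = d'.fst := by
    rw [hl, mem_iterate_iff] at ha
    obtain ⟨j, -, rfl⟩ := ha
    exact fst_iterate_next j d'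
  have hd : d ∈ d' :: l' := hinf.subset (mem_cycleFrom_iff.2 rfl)
  have hsub : d' :: l' ⊆ B.cycleFrom d := fun a ha => by
    rw [mem_cycleFrom_iff, hfst a ha, hfst d hd]
  exact (hinf.sublist.eq_of_length_le (hl'.2.1.subperm hsub).length_le).symm

lemma IsACycle.exists_mem_iff {l : List B.Arrow} (hl : B.IsACycle K l) :
    ∃ d : B.Arrow, ∀ a, a ∈ l ↔ a.fst = d.fst := by
  obtain ⟨⟨hne, hnd, hch⟩, hmax⟩ := hl
  rcases l with _ | ⟨d, l⟩
  · exact absurd rfl hne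
  have hi := IsNonzeroChain.eq_iterate hch
  have hdeg : B.deg d ≤ l.length + 1 := by
    by_contra! h
    have h1 := hmax _ (isNonzeroChain_iterate (k := l.length + 1) h) (by
      rw [hi, List.iterate_add _ _ (l.length + 1) 1]
      exact (List.prefix_append _ _).isInfix)
    have h2 := congrArg List.length h1
    simp at h2
  refine ⟨d, fun a => ?_⟩
  rw [hi, mem_iterate_iff]
  constructor
  · rintro ⟨j, -, rfl⟩
    exact fst_iterate_next j d
  · intro h
    exact ⟨steps d a, (steps_lt h.symm).trans_le hdeg, iterate_steps h.symm⟩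

/-- The `A`-cycles are the cycles of the quiver. -/
lemma exists_isACycle_iff {P : (B.Vertex → Prop) → Prop} (x : B.Vertex) :
    (∃ l : List B.Arrow, B.IsACycle K l ∧ B.OnCycle x l ∧ P (fun y => B.OnCycle y l)) ↔
      ∃ p ∈ x.1, P (fun y => p ∈ y.1) := by
  constructor
  · rintro ⟨l, hl, hx, hP⟩
    obtain ⟨d, hd⟩ := hl.exists_mem_iff
    simp only [onCycle_iff hd] at hx hP
    exact ⟨d.fst, hx, hP⟩
  · rintro ⟨p, hp, hP⟩
    have h (a : B.Arrow) : a ∈ B.cycleFrom (dartAt p x) ↔ a.fst = p := by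
      rw [mem_cycleFrom_iff, fst_dartAt hp]
    refine ⟨_, isACycle_cycleFrom (dartAt p x), ?_⟩
    simp only [onCycle_iff h]
    exact ⟨hp, hP⟩

end Cycles

end BrauerTree

section PolynomialFamilies

variable {K : Type*} [Field K]

/-- A family of vectors which depends polynomially on a parameter. -/
def IsPolynomialFamily {W : Type*} [AddCommGroup W] [Module K W] (g : K → W) : Prop :=
  ∀ φ : W →ₗ[K] K, ∃ p : Polynomial K, ∀ s, φ (g s) = p.eval s

namespace IsPolynomialFamily

variable {W W' : Type*} [AddCommGroup W] [Module K W] [AddCommGroup W'] [Module K W']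

lemma map {g : K → W} (hg : IsPolynomialFamily g) (f : W →ₗ[K] W') :
    IsPolynomialFamily fun s => f (g s) := fun φ => hg (φ ∘ₗ f)

lemma sub {g g' : K → W} (hg : IsPolynomialFamily g) (hg' : IsPolynomialFamily g') :
    IsPolynomialFamily fun s => g s - g' s := fun φ => by
  obtain ⟨p, hp⟩ := hg φ
  obtain ⟨q, hq⟩ := hg' φ
  exact ⟨p - q, fun s => by simp [hp, hq]⟩

lemma eval_smul {g : K → W} (hg : IsPolynomialFamily g) (q : Polynomial K) :
    IsPolynomialFamily fun s => q.eval s • g s := fun φ => by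
  obtain ⟨p, hp⟩ := hg φ
  exact ⟨q * p, fun s => by simp [hp]⟩

lemma const (w : W) : IsPolynomialFamily fun _ : K => w := fun φ =>
  ⟨Polynomial.C (φ w), fun s => by simp⟩

lemma sum {ι : Type*} [Fintype ι] {g : ι → K → W} (hg : ∀ i, IsPolynomialFamily (g i)) :
    IsPolynomialFamily fun s => ∑ i, g i s := fun φ => by
  choose p hp using fun i => hg i φ
  exact ⟨∑ i, p i, fun s => by simp [hp, Polynomial.eval_finsetSum]⟩

/-- A polynomial family of endomorphisms of a finite-dimensional space which is invertible at some
parameter is invertible at almost all parameters. -/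
lemma finite_not_isUnit [Module.Finite K W] {g : K → Module.End K W}
    (hg : IsPolynomialFamily g) {s₀ : K} (h₀ : IsUnit (g s₀)) :
    {s | ¬ IsUnit (g s)}.Finite := by
  classical
  let b := Module.finBasis K W
  choose p hp using fun i j =>
    hg (Matrix.entryLinearMap K K i j ∘ₗ (LinearMap.toMatrix b b).toLinearMap)
  have hdet (s : K) : LinearMap.det (g s) = (Matrix.of p).det.eval s := by
    rw [← LinearMap.det_toMatrix b, ← Polynomial.coe_evalRingHom, RingHom.map_det]
    congr 1
    ext i j
    simpa using hp i j s
  have hne : (Matrix.of p).det ≠ 0 := fun h => by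
    rw [LinearMap.isUnit_iff_isUnit_det, hdet, h] at h₀
    simp at h₀
  refine (Polynomial.finite_setOfPred_isRoot hne).subset fun s hs => ?_
  simp only [Set.mem_ofPred_eq, LinearMap.isUnit_iff_isUnit_det, hdet, isUnit_iff_ne_zero,
    not_not] at hs
  exact hs

/-- Cramer's rule for `1 + s N`. -/
lemma exists_cramer [Module.Finite K W] (N : Module.End K W) (z : W) :
    ∃ (q : Polynomial K) (y : K → W), IsPolynomialFamily y ∧ q.eval 0 = 1 ∧
      ∀ s, y s + s • N (y s) = q.eval s • z := by
  classical
  let b := Module.finBasis K W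
  let M : Matrix _ _ (Polynomial K) :=
    1 + (Polynomial.X : Polynomial K) • (LinearMap.toMatrix b b N).map Polynomial.C
  have hM (s : K) : (Polynomial.evalRingHom s).mapMatrix M =
      LinearMap.toMatrix b b (1 + s • N) := by
    ext i j
    simp [M, Matrix.one_apply, LinearMap.toMatrix_one]
    split_ifs <;> simp [mul_comm]
  refine ⟨M.det, fun s => Matrix.toLin b b ((Polynomial.evalRingHom s).mapMatrix M.adjugate) z,
    ?_, ?_, ?_⟩
  · have : (fun s => Matrix.toLin b b ((Polynomial.evalRingHom s).mapMatrix M.adjugate) z) =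
        fun s => ∑ i, (∑ j, M.adjugate i j * Polynomial.C (b.repr z j)).eval s • b i := by
      funext s
      rw [Matrix.toLin_apply]
      simp [Matrix.mulVec, dotProduct, Polynomial.eval_finsetSum]
    rw [this]
    exact sum fun i => (const (b i)).eval_smul _
  · rw [← Polynomial.coe_evalRingHom, RingHom.map_det, hM]
    simp
  · intro s
    have h1 := congrArg (Polynomial.evalRingHom s).mapMatrix (Matrix.mul_adjugate M)
    rw [map_mul, hM] at h1
    have h2 := congrArg (fun A => Matrix.toLin b b A z) h1
    simp only [Matrix.toLin_mul b b b, Matrix.toLin_toMatrix, LinearMap.comp_apply] at h2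
    have h3 : (Polynomial.evalRingHom s).mapMatrix
        (M.det • (1 : Matrix (Fin (Module.finrank K W)) _ (Polynomial K))) =
        M.det.eval s • (1 : Matrix (Fin (Module.finrank K W)) (Fin (Module.finrank K W)) K) := by
      ext i j
      simp only [RingHom.mapMatrix_apply, Matrix.map_apply, Matrix.smul_apply, Matrix.one_apply,
        smul_eq_mul, mul_ite, mul_one, mul_zero, Polynomial.coe_evalRingHom]
      split_ifs <;> simp
    rw [h3, map_smul, Matrix.toLin_one] at h2
    simpa using h2

end IsPolynomialFamily

end PolynomialFamilies

section Rigid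

variable {K A : Type*} [Field K] [Ring A] [Algebra K A]
variable {P Q : Type*} [AddCommGroup P] [Module A P] [AddCommGroup Q] [Module A Q]

/-- Every homomorphism from `P` to `Q` is homotopic to zero as a map of degree one from the complex
`f` to itself. -/
def IsRigid (f : P →ₗ[A] Q) : Prop :=
  ∀ φ : P →ₗ[A] Q, ∃ (h : P →ₗ[A] P) (h' : Q →ₗ[A] Q), φ = f ∘ₗ h + h' ∘ₗ f

variable [Module K P] [IsScalarTower K A P] [Module K Q] [IsScalarTower K A Q]
  [Module.Finite K P] [Module.Finite K Q]

variable (K) in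
/-- The orbit of a rigid homomorphism is open. -/
lemma IsRigid.finite_not_equiv {f : P →ₗ[A] Q} (hf : IsRigid f) (z : P →ₗ[A] Q) :
    {s : K | ¬ ∃ (u : P ≃ₗ[A] P) (v : Q ≃ₗ[A] Q),
      v.toLinearMap ∘ₗ (f + s • z) = f ∘ₗ u.toLinearMap}.Finite := by
  let c : Module.End A P × Module.End A Q →ₗ[K] (P →ₗ[A] Q) :=
    { toFun := fun l => l.2 ∘ₗ f - f ∘ₗ l.1
      map_add' := fun l l' => by ext; simp; abel
      map_smul' := fun r l => by
        ext x
        simp only [LinearMap.sub_apply, LinearMap.comp_apply, Prod.smul_fst, Prod.smul_snd,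
          LinearMap.smul_apply, RingHom.id_apply, smul_sub]
        rw [← algebraMap_smul A r (l.1 x), map_smul, algebraMap_smul] }
  have hc : LinearMap.range c = ⊤ := by
    rw [LinearMap.range_eq_top]
    intro φ
    obtain ⟨h, h', hh⟩ := hf φ
    refine ⟨(-h, h'), ?_⟩
    simp [c, hh, LinearMap.comp_neg]
    abel
  obtain ⟨R, hR⟩ := c.exists_rightInverse_of_surjective hc
  have : Module.Finite K (P →ₗ[A] Q) :=
    Module.Finite.of_injective (LinearMap.restrictScalarsₗ K A P Q K)
      (LinearMap.restrictScalars_injective K)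
  let N : Module.End K (P →ₗ[A] Q) :=
    { toFun := fun φ => (R φ).2 ∘ₗ z
      map_add' := fun φ ψ => by ext; simp
      map_smul' := fun r φ => by ext; simp }
  obtain ⟨q, y, hy, hq, hyq⟩ := IsPolynomialFamily.exists_cramer N z
  let l : K → Module.End A P × Module.End A Q := fun s => q.eval s • 1 - s • R (y s)
  have hl : IsPolynomialFamily l := by
    refine ((IsPolynomialFamily.const _).eval_smul q).sub ?_
    have := (hy.map R).eval_smul Polynomial.X
    simpa using this
  have hl0 : l 0 = 1 := by simp [l, hq]
  have hP := IsPolynomialFamily.finite_not_isUnit (s₀ := 0)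
    ((hl.map (LinearMap.fst K _ _)).map (LinearMap.restrictScalarsₗ K A P P K)) (by
      rw [hl0]; exact isUnit_one)
  have hQ := IsPolynomialFamily.finite_not_isUnit (s₀ := 0)
    ((hl.map (LinearMap.snd K _ _)).map (LinearMap.restrictScalarsₗ K A Q Q K)) (by
      rw [hl0]; exact isUnit_one)
  refine (hP.union hQ).subset fun s hs => ?_
  by_contra hcon
  simp only [Set.mem_union, Set.mem_ofPred_eq, not_or, not_not] at hcon
  rw [Module.End.isUnit_iff, Module.End.isUnit_iff] at hcon
  refine hs ⟨LinearEquiv.ofBijective (l s).1 hcon.1, LinearEquiv.ofBijective (l s).2 hcon.2, ?_⟩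
  have h1 : c (R (y s)) = y s := LinearMap.congr_fun hR (y s)
  have h2 := hyq s
  have h3 : (l s).2 ∘ₗ (f + s • z) - f ∘ₗ (l s).1 =
      q.eval s • s • z - s • (c (R (y s)) + s • N (y s)) := by
    ext x
    simp only [l, c, N, Prod.fst_sub, Prod.snd_sub, Prod.smul_fst, Prod.smul_snd, Prod.fst_one,
      Prod.snd_one, LinearMap.sub_apply, LinearMap.comp_apply, LinearMap.add_apply,
      LinearMap.smul_apply, Module.End.one_apply, map_sub, map_add, LinearMap.coe_mk,
      AddHom.coe_mk]
    have hs (r : K) (x : P) : f (r • x) = r • f x := by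
      rw [← algebraMap_smul A r x, map_smul, algebraMap_smul]
    have hs' (r : K) (x : Q) : (R (y s)).2 (r • x) = r • (R (y s)).2 x := by
      rw [← algebraMap_smul A r x, map_smul, algebraMap_smul]
    simp only [hs, hs', smul_add, smul_sub]
    abel
  rw [h1, h2, smul_comm, sub_self, sub_eq_zero] at h3
  exact h3

variable (K) in
/-- Any two rigid homomorphisms between the same modules are isomorphic. -/
lemma IsRigid.exists_equiv [Infinite K] {f g : P →ₗ[A] Q} (hf : IsRigid f) (hg : IsRigid g) :
    ∃ (u : P ≃ₗ[A] P) (v : Q ≃ₗ[A] Q), v.toLinearMap ∘ₗ f = g ∘ₗ u.toLinearMap := by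
  have h1 := hf.finite_not_equiv K (g - f)
  have h2 := (hg.finite_not_equiv K (f - g)).image (fun s => 1 - s)
  obtain ⟨s, hs⟩ := (h1.union h2).infinite_compl.nonempty
  rw [Set.mem_compl_iff, Set.mem_union, not_or] at hs
  obtain ⟨u, v, huv⟩ := not_not.1 hs.1
  have hs3 : ∃ (u : P ≃ₗ[A] P) (v : Q ≃ₗ[A] Q),
      v.toLinearMap ∘ₗ (g + (1 - s) • (f - g)) = g ∘ₗ u.toLinearMap := by
    by_contra hcon
    exact hs.2 ⟨1 - s, hcon, by ring⟩
  obtain ⟨u', v', huv'⟩ := hs3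
  have he : g + (1 - s) • (f - g) = f + s • (g - f) := by module
  rw [he] at huv'
  refine ⟨u.symm.trans u', v.symm.trans v', ?_⟩
  ext x
  have h3 := LinearMap.congr_fun huv (u.symm x)
  have h4 := LinearMap.congr_fun huv' (u.symm x)
  simp only [LinearMap.comp_apply, LinearEquiv.coe_coe, LinearEquiv.apply_symm_apply] at h3 h4
  simp only [LinearMap.comp_apply, LinearEquiv.coe_coe, LinearEquiv.trans_apply]
  rw [← h4, ← h3, LinearEquiv.symm_apply_apply]

end Rigid

namespace BrauerTree

section Matrices

variable {V : Type v} (B : BrauerTree V) (K : Type u) [Field K]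

/-- The direct sum of the indecomposable projective modules `A e_{s i}`. -/
abbrev ProjSum {I : Type*} (s : I → B.Vertex) : Type _ := ∀ i, B.proj K (s i)

variable {B K}

lemma mem_proj_iff {x : B.Vertex} {a : B.Alg K} : a ∈ B.proj K x ↔ a * B.e K x = a := by
  rw [Submodule.mem_span_singleton]
  constructor
  · rintro ⟨b, rfl⟩
    rw [smul_eq_mul, mul_assoc, e_mul_self]
  · intro h
    exact ⟨a, h⟩

lemma coe_mul_e {x : B.Vertex} (a : B.proj K x) : (a : B.Alg K) * B.e K x = a :=
  mem_proj_iff.1 a.2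

lemma mul_e_mem_proj (x : B.Vertex) (a : B.Alg K) : a * B.e K x ∈ B.proj K x :=
  mem_proj_iff.2 (by rw [mul_assoc, e_mul_self])

variable (K) in
/-- The generator of `A e_x`. -/
noncomputable def gen (x : B.Vertex) : B.proj K x :=
  ⟨B.e K x, Submodule.mem_span_singleton_self _⟩

lemma smul_gen {x : B.Vertex} (a : B.proj K x) : (a : B.Alg K) • gen K x = a :=
  Subtype.ext (coe_mul_e a)

variable {I J L : Type*} {s : I → B.Vertex} {t : J → B.Vertex} {r : L → B.Vertex}

open Classical in
/-- The matrix entries of a homomorphism between sums of indecomposable projective modules. -/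
noncomputable def entry (F : B.ProjSum K s →ₗ[B.Alg K] B.ProjSum K t) (i : I) (j : J) : B.Alg K :=
  F (Pi.single i (gen K (s i))) j

lemma entry_mul_e (F : B.ProjSum K s →ₗ[B.Alg K] B.ProjSum K t) (i : I) (j : J) :
    entry F i j * B.e K (t j) = entry F i j := coe_mul_e _

lemma e_mul_entry (F : B.ProjSum K s →ₗ[B.Alg K] B.ProjSum K t) (i : I) (j : J) :
    B.e K (s i) * entry F i j = entry F i j := by
  classical
  have h : B.e K (s i) • (Pi.single i (gen K (s i)) : B.ProjSum K s) =
      Pi.single i (gen K (s i)) := by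
    rw [← Pi.single_smul]
    congr 1
    exact Subtype.ext (e_mul_self K _)
  rw [entry]
  conv_rhs => rw [← h, map_smul]
  rfl

lemma e_mul_entry_mul_e (F : B.ProjSum K s →ₗ[B.Alg K] B.ProjSum K t) (i : I) (j : J) :
    B.e K (s i) * entry F i j * B.e K (t j) = entry F i j := by
  rw [e_mul_entry, entry_mul_e]

lemma entry_add (F G : B.ProjSum K s →ₗ[B.Alg K] B.ProjSum K t) (i : I) (j : J) :
    entry (F + G) i j = entry F i j + entry G i j := rfl

lemma entry_zero (i : I) (j : J) :
    entry (0 : B.ProjSum K s →ₗ[B.Alg K] B.ProjSum K t) i j = 0 := rfl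

lemma entry_sum {ι : Type*} (S : Finset ι) (F : ι → B.ProjSum K s →ₗ[B.Alg K] B.ProjSum K t)
    (i : I) (j : J) : entry (∑ k ∈ S, F k) i j = ∑ k ∈ S, entry (F k) i j := by
  classical
  induction S using Finset.induction_on with
  | empty => simp [entry_zero]
  | insert a S ha ih => rw [Finset.sum_insert ha, Finset.sum_insert ha, entry_add, ih]

lemma entry_smul (c : K) (F : B.ProjSum K s →ₗ[B.Alg K] B.ProjSum K t) (i : I) (j : J) :
    entry (c • F) i j = c • entry F i j := rfl

lemma entry_id_self (i : I) : entry (LinearMap.id : B.ProjSum K s →ₗ[B.Alg K] _) i i =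
    B.e K (s i) := by
  simp [entry, gen]

lemma apply_eq_sum [Fintype I] (F : B.ProjSum K s →ₗ[B.Alg K] B.ProjSum K t)
    (y : B.ProjSum K s) (j : J) :
    (F y j : B.Alg K) = ∑ i, (y i : B.Alg K) * entry F i j := by
  classical
  have hy : y = ∑ i, (y i : B.Alg K) • (Pi.single i (gen K (s i)) : B.ProjSum K s) := by
    funext i
    rw [Finset.sum_apply, Finset.sum_eq_single i]
    · rw [Pi.smul_apply, Pi.single_eq_same, smul_gen]
    · intro i' _ hi'
      rw [Pi.smul_apply, Pi.single_eq_of_ne hi'.symm, smul_zero]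
    · simp
  conv_lhs => rw [hy, map_sum, Finset.sum_apply]
  rw [AddSubmonoidClass.coe_finsetSum]
  refine Finset.sum_congr rfl fun i _ => ?_
  rw [map_smul]
  rfl

lemma entry_ext [Fintype I] {F G : B.ProjSum K s →ₗ[B.Alg K] B.ProjSum K t}
    (h : ∀ i j, entry F i j = entry G i j) : F = G := by
  ext y j
  rw [apply_eq_sum, apply_eq_sum]
  simp only [h]

lemma entry_comp [Fintype J] (G : B.ProjSum K t →ₗ[B.Alg K] B.ProjSum K r)
    (F : B.ProjSum K s →ₗ[B.Alg K] B.ProjSum K t) (i : I) (l : L) :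
    entry (G ∘ₗ F) i l = ∑ j, entry F i j * entry G j l := by
  rw [entry, LinearMap.comp_apply, apply_eq_sum]
  rfl

variable [Fintype I]

/-- The homomorphism with given matrix entries. -/
noncomputable def ofEntries (s : I → B.Vertex) (t : J → B.Vertex) (m : I → J → B.Alg K) :
    B.ProjSum K s →ₗ[B.Alg K] B.ProjSum K t where
  toFun y j := ⟨(∑ i, (y i : B.Alg K) * m i j) * B.e K (t j), mul_e_mem_proj _ _⟩
  map_add' y z := by
    ext j
    simp [add_mul, Finset.sum_add_distrib]
  map_smul' a y := by
    ext j
    simp [mul_assoc, ← Finset.mul_sum]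

lemma entry_ofEntries (m : I → J → B.Alg K) (i : I) (j : J) :
    entry (ofEntries s t m) i j = B.e K (s i) * m i j * B.e K (t j) := by
  classical
  rw [entry]
  show (∑ i', ((Pi.single i (gen K (s i)) : B.ProjSum K s) i' : B.Alg K) * m i' j) *
    B.e K (t j) = _
  rw [Finset.sum_eq_single i]
  · rw [Pi.single_eq_same]; rfl
  · intro i' _ hi'
    rw [Pi.single_eq_of_ne hi', ZeroMemClass.coe_zero, zero_mul]
  · simp

open Classical in
/-- The homomorphism with the single matrix entry `e a e` at the place `(i, j)`. -/
noncomputable def elem (s : I → B.Vertex) (t : J → B.Vertex) (i : I) (j : J) (a : B.Alg K) :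
    B.ProjSum K s →ₗ[B.Alg K] B.ProjSum K t :=
  ofEntries s t fun i' j' => if i' = i ∧ j' = j then a else 0

lemma entry_elem_self (i : I) (j : J) (a : B.Alg K) :
    entry (elem s t i j a) i j = B.e K (s i) * a * B.e K (t j) := by
  rw [elem, entry_ofEntries, if_pos ⟨rfl, rfl⟩]

lemma entry_elem_of_ne {i i' : I} {j j' : J} (h : ¬ (i' = i ∧ j' = j)) (a : B.Alg K) :
    entry (elem s t i j a) i' j' = 0 := by
  rw [elem, entry_ofEntries, if_neg h, mul_zero, zero_mul]

lemma elem_zero (i : I) (j : J) : elem s t i j (0 : B.Alg K) = 0 := by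
  refine entry_ext fun i' j' => ?_
  by_cases h : i' = i ∧ j' = j
  · rw [h.1, h.2, entry_elem_self, mul_zero, zero_mul]; rfl
  · rw [entry_elem_of_ne h]; rfl

lemma elem_smul (c : K) (i : I) (j : J) (a : B.Alg K) :
    elem s t i j (c • a) = c • elem s t i j a := by
  refine entry_ext fun i' j' => ?_
  rw [entry_smul]
  by_cases h : i' = i ∧ j' = j
  · rw [h.1, h.2, entry_elem_self, entry_elem_self, mul_smul_comm, smul_mul_assoc]
  · rw [entry_elem_of_ne h, entry_elem_of_ne h, smul_zero]

lemma sum_elem_entry [Fintype J] (F : B.ProjSum K s →ₗ[B.Alg K] B.ProjSum K t) :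
    ∑ i, ∑ j, elem s t i j (entry F i j) = F := by
  refine entry_ext fun i j => ?_
  simp_rw [entry_sum]
  rw [Finset.sum_eq_single i, Finset.sum_eq_single j, entry_elem_self, e_mul_entry_mul_e]
  · intro j' _ hj'
    exact entry_elem_of_ne (fun h => hj' h.2.symm) _
  · simp
  · intro i' _ hi'
    exact Finset.sum_eq_zero fun j' _ => entry_elem_of_ne (fun h => hi' h.1.symm) _
  · simp

lemma comp_elem [Fintype J] (F : B.ProjSum K s →ₗ[B.Alg K] B.ProjSum K t) (i i' : I)
    (a : B.Alg K) :
    F ∘ₗ elem s s i i' a = ∑ j, elem s t i j (a * entry F i' j) := by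
  classical
  refine entry_ext fun k j => ?_
  rw [entry_comp, entry_sum]
  by_cases hk : k = i
  · subst hk
    rw [Finset.sum_eq_single i', Finset.sum_eq_single j, entry_elem_self, entry_elem_self,
      mul_assoc, e_mul_entry, mul_assoc, mul_assoc, mul_assoc, entry_mul_e]
    · intro j' _ hj'
      exact entry_elem_of_ne (fun h => hj' h.2.symm) _
    · simp
    · intro i'' _ hi''
      rw [entry_elem_of_ne (fun h => hi'' h.2), zero_mul]
    · simp
  · rw [Finset.sum_eq_zero, Finset.sum_eq_zero]
    · intro j' _
      exact entry_elem_of_ne (fun h => hk h.1) _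
    · intro i'' _
      rw [entry_elem_of_ne (fun h => hk h.1), zero_mul]

lemma elem_comp [Fintype J] (F : B.ProjSum K s →ₗ[B.Alg K] B.ProjSum K t) (j j' : J)
    (a : B.Alg K) :
    elem t t j j' a ∘ₗ F = ∑ i, elem s t i j' (entry F i j * a) := by
  classical
  refine entry_ext fun i k => ?_
  rw [entry_comp, entry_sum]
  by_cases hk : k = j'
  · subst hk
    rw [Finset.sum_eq_single j, Finset.sum_eq_single i, entry_elem_self, entry_elem_self,
      ← mul_assoc, ← mul_assoc, entry_mul_e, ← mul_assoc, e_mul_entry]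
    · intro i' _ hi'
      exact entry_elem_of_ne (fun h => hi' h.1.symm) _
    · simp
    · intro j'' _ hj''
      rw [entry_elem_of_ne (fun h => hj'' h.1), mul_zero]
    · simp
  · rw [Finset.sum_eq_zero, Finset.sum_eq_zero]
    · intro i' _
      exact entry_elem_of_ne (fun h => hk h.2) _
    · intro j'' _
      rw [entry_elem_of_ne (fun h => hk h.2), mul_zero]

instance finite_proj [Finite V] (x : B.Vertex) : Module.Finite K (B.proj K x) :=
  Module.Finite.of_injective ((B.proj K x).subtype.restrictScalars K) Subtype.val_injective

end Matrices

end BrauerTree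

namespace SimpleGraph

variable {V : Type*} {G : SimpleGraph V}

/-- In a tree, at most one neighbour of `q` is closer to `v` than `q`. -/
lemma IsTree.eq_of_dist_lt (hG : G.IsTree) {p q r v : V} (hp : G.Adj q p) (hr : G.Adj q r)
    (hvp : G.dist p v < G.dist q v) (hvr : G.dist r v < G.dist q v) : p = r := by
  have key {p : V} (hp : G.Adj q p) (h : G.dist p v < G.dist q v) :
      ∃ w : G.Walk p v, (Walk.cons hp w).IsPath := by
    obtain ⟨w, hw⟩ := (hG.connected p v).exists_walk_length_eq_dist
    refine ⟨w, Walk.isPath_of_length_eq_dist _ ?_⟩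
    have := dist_le (Walk.cons hp w)
    rw [Walk.length_cons] at this ⊢
    omega
  obtain ⟨w, hw⟩ := key hp hvp
  obtain ⟨w', hw'⟩ := key hr hvr
  have h := congrArg Subtype.val ((hG.isAcyclic.subsingleton_path q v).elim ⟨_, hw⟩ ⟨_, hw'⟩)
  have := congrArg Walk.snd h
  simpa using this

/-- The vertices of a tree behind a dart. -/
def branch (d : G.Dart) : Set V := {v | G.dist d.snd v < G.dist d.fst v}

lemma snd_mem_branch (hG : G.IsTree) (d : G.Dart) : d.snd ∈ branch d := by
  show G.dist d.snd d.snd < G.dist d.fst d.snd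
  rw [dist_self]
  exact hG.connected.pos_dist_of_ne d.adj.ne

lemma fst_notMem_branch (d : G.Dart) : d.fst ∉ branch d := by
  show ¬ G.dist d.snd d.fst < G.dist d.fst d.fst
  simp

lemma branch_subset (hG : G.IsTree) {d d' : G.Dart} (h : d'.fst = d.snd) (h' : d' ≠ d.symm) :
    branch d' ⊆ branch d := by
  intro v hv
  change G.dist d'.snd v < G.dist d'.fst v at hv
  show G.dist d.snd v < G.dist d.fst v
  by_contra! hcon
  have hne : G.dist d.fst v ≠ G.dist d.snd v := by
    rw [dist_comm, dist_comm (u := d.snd)]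
    exact hG.dist_ne_of_adj v d.adj
  have hadj : G.Adj d.snd d'.snd := by rw [← h]; exact d'.adj
  have := hG.eq_of_dist_lt d.adj.symm hadj (lt_of_le_of_ne hcon hne) (by rwa [← h])
  exact h' (Dart.ext _ _ (Prod.ext h this.symm))

lemma ncard_branch_lt [Finite V] (hG : G.IsTree) {d d' : G.Dart} (h : d'.fst = d.snd)
    (h' : d' ≠ d.symm) : (branch d').ncard < (branch d).ncard := by
  refine Set.ncard_lt_ncard ((Set.ssubset_iff_of_subset (branch_subset hG h h')).2
    ⟨d.snd, snd_mem_branch hG d, ?_⟩)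
  rw [← h]
  exact fst_notMem_branch d'

end SimpleGraph

/-- A matching which is stable with respect to a common preference: every admissible pair has
a member whose partner it likes at least as much. -/
lemma exists_stable_matching {I J O : Type*} [Finite I] [Finite J] [LinearOrder O]
    (R : I → J → Prop) (l : I → J → O) :
    ∃ m : I → J → Prop, (∀ i j, m i j → R i j) ∧ (∀ i j j', m i j → m i j' → j = j') ∧
      (∀ i i' j, m i j → m i' j → i = i') ∧
      ∀ i j, R i j → (∃ j', m i j' ∧ l i j' ≤ l i j) ∨ ∃ i', m i' j ∧ l i' j ≤ l i j := by
  induction hn : {x : I × J | R x.1 x.2}.ncard using Nat.strong_induction_on generalizing R with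
  | _ n ih =>
    rcases Set.eq_empty_or_nonempty {x : I × J | R x.1 x.2} with h | h
    · refine ⟨fun _ _ => False, by simp, by simp, by simp, fun i j hij => ?_⟩
      have : (i, j) ∈ {x : I × J | R x.1 x.2} := hij
      rw [h] at this
      exact this.elim
    · obtain ⟨⟨i₀, j₀⟩, h₀, hmin⟩ := Set.exists_min_image _ (fun x => l x.1 x.2)
        (Set.toFinite {x : I × J | R x.1 x.2}) h
      have hmin' (i j) (hij : R i j) : l i₀ j₀ ≤ l i j := hmin (i, j) hij
      obtain ⟨m, hmR, hm1, hm2, hm3⟩ := ih _ (by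
        rw [← hn]
        refine Set.ncard_lt_ncard ?_ (Set.toFinite {x : I × J | R x.1 x.2})
        refine (Set.ssubset_iff_of_subset ?_).2 ⟨(i₀, j₀), h₀, ?_⟩
        · exact fun x hx => hx.1
        · exact fun hx => hx.2.1 rfl)
        (fun i j => R i j ∧ i ≠ i₀ ∧ j ≠ j₀) rfl
      refine ⟨fun i j => m i j ∨ (i = i₀ ∧ j = j₀), ?_, ?_, ?_, ?_⟩
      · rintro i j (h | ⟨rfl, rfl⟩)
        · exact (hmR i j h).1
        · exact h₀
      · rintro i j j' (h | ⟨rfl, rfl⟩) (h' | ⟨h1, rfl⟩)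
        · exact hm1 i j j' h h'
        · exact absurd h1 (hmR _ _ h).2.1
        · exact absurd rfl (hmR _ _ h').2.1
        · rfl
      · rintro i i' j (h | ⟨rfl, rfl⟩) (h' | ⟨rfl, h1⟩)
        · exact hm2 i i' j h h'
        · exact absurd h1 (hmR _ _ h).2.2
        · exact absurd rfl (hmR _ _ h').2.2
        · rfl
      · intro i j hij
        by_cases hi : i = i₀
        · exact Or.inl ⟨j₀, Or.inr ⟨hi, rfl⟩, hi ▸ hmin' i j hij⟩
        by_cases hj : j = j₀
        · exact Or.inr ⟨i₀, Or.inr ⟨rfl, hj⟩, hj ▸ hmin' i j hij⟩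
        rcases hm3 i j ⟨hij, hi, hj⟩ with ⟨j', h, h'⟩ | ⟨i', h, h'⟩
        · exact Or.inl ⟨j', Or.inl h, h'⟩
        · exact Or.inr ⟨i', Or.inl h, h'⟩

section Nullhomotopic

variable (K : Type*) {A : Type*} [Field K] [Ring A] [Algebra K A]
variable {P Q : Type*} [AddCommGroup P] [Module A P] [AddCommGroup Q] [Module A Q]
  [Module K P] [IsScalarTower K A P] [Module K Q] [IsScalarTower K A Q]

/-- The homomorphisms which are homotopic to zero as maps of degree one from the complex `f` to
itself. -/
def nullhomotopic (f : P →ₗ[A] Q) : Submodule K (P →ₗ[A] Q) where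
  carrier := {φ | ∃ (h : P →ₗ[A] P) (h' : Q →ₗ[A] Q), φ = f ∘ₗ h + h' ∘ₗ f}
  zero_mem' := ⟨0, 0, by simp⟩
  add_mem' := by
    rintro _ _ ⟨h, h', rfl⟩ ⟨g, g', rfl⟩
    exact ⟨h + g, h' + g', by rw [LinearMap.comp_add, LinearMap.add_comp]; abel⟩
  smul_mem' := by
    rintro c _ ⟨h, h', rfl⟩
    refine ⟨c • h, c • h', ?_⟩
    ext x
    simp only [LinearMap.smul_apply, LinearMap.add_apply, LinearMap.comp_apply, smul_add]
    rw [← algebraMap_smul A c (h x), map_smul, algebraMap_smul]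

variable {K}

lemma comp_mem_nullhomotopic (f : P →ₗ[A] Q) (h : P →ₗ[A] P) : f ∘ₗ h ∈ nullhomotopic K f :=
  ⟨h, 0, by simp⟩

lemma comp_mem_nullhomotopic' (f : P →ₗ[A] Q) (h : Q →ₗ[A] Q) : h ∘ₗ f ∈ nullhomotopic K f :=
  ⟨0, h, by simp⟩

end Nullhomotopic

namespace BrauerTree

variable {V : Type v} {B : BrauerTree V}

section Weights

/-- A sign which distinguishes the two ends of an edge. -/
noncomputable def endSign (p : V) (x : B.Vertex) : ℤ :=
  open Classical in if p = (Quot.out x.1).1 then 1 else -1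

lemma endSign_ne_zero (p : V) (x : B.Vertex) : endSign p x ≠ 0 := by
  rw [endSign]; split_ifs <;> simp

lemma endSign_eq_neg {p q : V} {x : B.Vertex} (hp : p ∈ x.1) (hq : q ∈ x.1) (hpq : p ≠ q) :
    endSign q x = - endSign p x := by
  have h : x.1 = s((Quot.out x.1).1, (Quot.out x.1).2) := (Quot.out_eq x.1).symm
  rw [h, Sym2.mem_iff] at hp hq
  have hne : (Quot.out x.1).1 ≠ (Quot.out x.1).2 := by
    have := x.2
    rw [h] at this
    exact SimpleGraph.Adj.ne this
  rw [endSign, endSign]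
  rcases hp with hp | hp <;> rcases hq with hq | hq
  · exact absurd (hp.trans hq.symm) hpq
  · rw [if_pos hp, if_neg (fun h => hne (h.symm.trans hq))]
  · rw [if_pos hq, if_neg (fun h => hne (h.symm.trans hp)), neg_neg]
  · exact absurd (hp.trans hq.symm) hpq

/-- The position of `i` among the indices with the same edge, in the order around `p`; the orders
around the two ends of an edge are opposite to each other. -/
noncomputable def weight {I : Type*} [Fintype I] (s : I → B.Vertex) (p : V) (i : I) : ℤ :=
  endSign p (s i) * (Fintype.equivFin I i : ℕ)

variable {I : Type*} [Fintype I] {s : I → B.Vertex}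

lemma weight_eq_neg {p q : V} {i : I} (hp : p ∈ (s i).1) (hq : q ∈ (s i).1) (hpq : p ≠ q) :
    weight s q i = - weight s p i := by
  rw [weight, weight, endSign_eq_neg hp hq hpq, neg_mul]

lemma weight_injective {p : V} {i i' : I} (h : s i = s i') (hw : weight s p i = weight s p i') :
    i = i' := by
  rw [weight, weight, h] at hw
  have := mul_left_cancel₀ (endSign_ne_zero p (s i')) hw
  exact (Fintype.equivFin I).injective (Fin.ext (by exact_mod_cast this))

end Weights

variable {I J : Type*} [Fintype I] [Fintype J]

/-- A matching of sources and sinks around each vertex of the tree, which is stable with respect to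
the lengths of the paths. -/
structure Matching (s : I → B.Vertex) (t : J → B.Vertex) where
  rel : V → I → J → Prop
  mem_left : ∀ {p i j}, rel p i j → p ∈ (s i).1
  mem_right : ∀ {p i j}, rel p i j → p ∈ (t j).1
  right_unique : ∀ {p i j j'}, rel p i j → rel p i j' → j = j'
  left_unique : ∀ {p i i' j}, rel p i j → rel p i' j → i = i'
  stable : ∀ {p i j}, p ∈ (s i).1 → p ∈ (t j).1 →
    (∃ j', rel p i j' ∧ len p (s i) (t j') ≤ len p (s i) (t j) ∧
      (t j' = t j → weight t p j' ≤ weight t p j)) ∨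
    ∃ i', rel p i' j ∧ len p (s i') (t j) ≤ len p (s i) (t j) ∧
      (s i' = s i → weight s p i ≤ weight s p i')

lemma nonempty_matching (s : I → B.Vertex) (t : J → B.Vertex) : Nonempty (Matching s t) := by
  choose m hR h1 h2 h3 using fun p : V =>
    exists_stable_matching (fun i j => p ∈ (s i).1 ∧ p ∈ (t j).1)
      (fun i j => toLex (len p (s i) (t j), weight t p j - weight s p i))
  refine ⟨⟨m, fun {p i j} h => (hR p i j h).1, fun {p i j} h => (hR p i j h).2,
    fun {p i j j'} => h1 p i j j', fun {p i i' j} => h2 p i i' j, fun {p i j} hi hj => ?_⟩⟩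
  rcases h3 p i j ⟨hi, hj⟩ with ⟨j', hm, hl⟩ | ⟨i', hm, hl⟩
  · refine Or.inl ⟨j', hm, ?_⟩
    rw [Prod.Lex.le_iff] at hl
    simp only [ofLex_toLex] at hl
    rcases hl with hl | ⟨hl, hl'⟩
    · exact ⟨hl.le, fun h => absurd (h ▸ hl) (lt_irrefl _)⟩
    · exact ⟨hl.le, fun _ => by linarith⟩
  · refine Or.inr ⟨i', hm, ?_⟩
    rw [Prod.Lex.le_iff] at hl
    simp only [ofLex_toLex] at hl
    rcases hl with hl | ⟨hl, hl'⟩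
    · exact ⟨hl.le, fun h => absurd (h ▸ hl) (lt_irrefl _)⟩
    · exact ⟨hl.le, fun _ => by linarith⟩

namespace Matching

variable {s : I → B.Vertex} {t : J → B.Vertex} (m : Matching s t) (K : Type u) [Field K]

open Classical in
/-- The homomorphism whose entries are the paths between matched sources and sinks. -/
noncomputable def map : B.ProjSum K s →ₗ[B.Alg K] B.ProjSum K t :=
  ofEntries s t fun i j => if h : ∃ p, m.rel p i j then pth K h.choose (s i) (t j) else 0

variable {K}

lemma entry_map_of_not {i : I} {j : J} (h : ¬ ∃ p, m.rel p i j) : entry (m.map K) i j = 0 := by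
  rw [map, entry_ofEntries, dif_neg h, mul_zero, zero_mul]

lemma elem_mem_of_left {i i' : I} {j : J} {a : B.Alg K}
    (h : ∀ j', j' ≠ j → elem s t i j' (a * entry (m.map K) i' j') ∈ nullhomotopic K (m.map K)) :
    elem s t i j (a * entry (m.map K) i' j) ∈ nullhomotopic K (m.map K) := by
  classical
  have h1 := comp_mem_nullhomotopic (K := K) (m.map K) (elem s s i i' a)
  rw [comp_elem, ← Finset.add_sum_erase _ _ (Finset.mem_univ j)] at h1
  exact (Submodule.add_mem_iff_left _
    (Submodule.sum_mem _ fun j' hj' => h j' (Finset.ne_of_mem_erase hj'))).1 h1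

lemma elem_mem_of_right {i : I} {j j' : J} {a : B.Alg K}
    (h : ∀ i', i' ≠ i → elem s t i' j (entry (m.map K) i' j' * a) ∈ nullhomotopic K (m.map K)) :
    elem s t i j (entry (m.map K) i j' * a) ∈ nullhomotopic K (m.map K) := by
  classical
  have h1 := comp_mem_nullhomotopic' (K := K) (m.map K) (elem t t j' j a)
  rw [elem_comp, ← Finset.add_sum_erase _ _ (Finset.mem_univ i)] at h1
  exact (Submodule.add_mem_iff_left _
    (Submodule.sum_mem _ fun i' hi' => h i' (Finset.ne_of_mem_erase hi'))).1 h1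

variable [Finite V]

lemma entry_map_of_rel (hst : ∀ i j, s i ≠ t j) {p : V} {i : I} {j : J} (h : m.rel p i j) :
    entry (m.map K) i j = pth K p (s i) (t j) := by
  have h' : ∃ p, m.rel p i j := ⟨p, h⟩
  rw [map, entry_ofEntries, dif_pos h',
    eq_of_mem_of_mem (hst i j) (m.mem_left h'.choose_spec) (m.mem_right h'.choose_spec)
      (m.mem_left h) (m.mem_right h), e_mul_pth (m.mem_left h) (m.mem_right h) (hst i j),
    pth_mul_e (m.mem_left h) (m.mem_right h) (hst i j)]

/-- The path from `i` to `j` around `p` is homotopic to zero. -/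
def Null (K : Type u) [Field K] (p : V) (i : I) (j : J) : Prop :=
  elem s t i j (pth K p (s i) (t j)) ∈ nullhomotopic K (m.map K)

/-- Reduction along the sink `j`, on which the other end of `j` is reached. -/
lemma null_of_right (hst : ∀ i j, s i ≠ t j) {p : V} {i : I} {j j' : J} (h : m.rel p i j')
    (hj : p ∈ (t j).1)
    (hl : len p (s i) (t j') ≤ len p (s i) (t j))
    (hrec : t j' = t j → ∀ q i', q ∈ (t j).1 → q ≠ p → m.rel q i' j' → m.Null K q i' j) :
    m.Null K p i j := by
  have hi := m.mem_left h
  have hj' := m.mem_right h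
  by_cases hjj : t j' = t j
  · have key := m.elem_mem_of_right (K := K) (i := i) (j := j) (j' := j') (a := B.e K (t j))
      fun i' hi' => by
        by_cases hq : ∃ q, m.rel q i' j'
        · obtain ⟨q, hq⟩ := hq
          have hqj := m.mem_right hq
          rw [hjj] at hqj
          have hqp : q ≠ p := by
            rintro rfl
            exact hi' (m.left_unique hq h)
          have := hrec hjj q i' hqj hqp hq
          rw [m.entry_map_of_rel hst hq, ← hjj, pth_mul_e (m.mem_left hq) (m.mem_right hq)
            (hst _ _),
            hjj]
          exact this
        · rw [m.entry_map_of_not hq, zero_mul, elem_zero]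
          exact Submodule.zero_mem _
    rw [m.entry_map_of_rel hst h, ← hjj, pth_mul_e hi hj' (hst _ _), hjj] at key
    exact key
  · have key := m.elem_mem_of_right (K := K) (i := i) (j := j) (j' := j')
      (a := pth K p (t j') (t j)) fun i' hi' => by
        have h0 : entry (m.map K) i' j' * pth K p (t j') (t j) = 0 := by
          by_cases hq : ∃ q, m.rel q i' j'
          · obtain ⟨q, hq⟩ := hq
            have hqp : q ≠ p := by
              rintro rfl
              exact hi' (m.left_unique hq h)
            rw [m.entry_map_of_rel hst hq]
            exact pth_mul_pth_of_ne hqp (hst _ _) hjj (m.mem_left hq) (m.mem_right hq) hj' hj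
          · rw [m.entry_map_of_not hq, zero_mul]
        rw [h0, elem_zero]
        exact Submodule.zero_mem _
    rw [m.entry_map_of_rel hst h, pth_mul_pth hi hj' hj hl] at key
    exact key

/-- Reduction along the source `i`, on which the other end of `i` is reached. -/
lemma null_of_left (hst : ∀ i j, s i ≠ t j) {p : V} {i i' : I} {j : J} (h : m.rel p i' j)
    (hi : p ∈ (s i).1)
    (hl : len p (s i') (t j) ≤ len p (s i) (t j))
    (hrec : s i' = s i → ∀ q j', q ∈ (s i).1 → q ≠ p → m.rel q i' j' → m.Null K q i j') :
    m.Null K p i j := by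
  have hi' := m.mem_left h
  have hj := m.mem_right h
  by_cases hii : s i' = s i
  · have key := m.elem_mem_of_left (K := K) (i := i) (j := j) (i' := i') (a := B.e K (s i))
      fun j' hj' => by
        by_cases hq : ∃ q, m.rel q i' j'
        · obtain ⟨q, hq⟩ := hq
          have hqi := m.mem_left hq
          rw [hii] at hqi
          have hqp : q ≠ p := by
            rintro rfl
            exact hj' (m.right_unique hq h)
          have := hrec hii q j' hqi hqp hq
          rw [m.entry_map_of_rel hst hq, ← hii, e_mul_pth (m.mem_left hq) (m.mem_right hq)
            (hst _ _),
            hii]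
          exact this
        · rw [m.entry_map_of_not hq, mul_zero, elem_zero]
          exact Submodule.zero_mem _
    rw [m.entry_map_of_rel hst h, ← hii, e_mul_pth hi' hj (hst _ _), hii] at key
    exact key
  · have key := m.elem_mem_of_left (K := K) (i := i) (j := j) (i' := i')
      (a := pth K p (s i) (s i')) fun j' hj' => by
        have h0 : pth K p (s i) (s i') * entry (m.map K) i' j' = 0 := by
          by_cases hq : ∃ q, m.rel q i' j'
          · obtain ⟨q, hq⟩ := hq
            have hqp : p ≠ q := by
              rintro rfl
              exact hj' (m.right_unique hq h)
            rw [m.entry_map_of_rel hst hq]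
            exact pth_mul_pth_of_ne hqp (Ne.symm hii) (hst _ _) hi hi' (m.mem_left hq)
              (m.mem_right hq)
          · rw [m.entry_map_of_not hq, mul_zero]
        rw [h0, elem_zero]
        exact Submodule.zero_mem _
    rw [m.entry_map_of_rel hst h, pth_mul_pth hi hi' hj (len_le_of_len_le hi hi' hj hl)] at key
    exact key

lemma null_of_rel_parallel (hst : ∀ i j, s i ≠ t j) (n : ℕ) (d : B.Arrow)
    (hn : (SimpleGraph.branch d).ncard = n) :
    (∀ i i' j, m.rel d.fst i' j → t j = B.source d → s i = s i' →
      weight s d.fst i' ≤ weight s d.fst i → m.Null K d.fst i j) ∧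
    (∀ i j j', m.rel d.fst i j' → s i = B.source d → t j = t j' →
      weight t d.fst j ≤ weight t d.fst j' → m.Null K d.fst i j) := by
  induction n using Nat.strong_induction_on generalizing d with
  | _ n ih =>
    have hnext {x y : B.Vertex} (hx : x = B.source d) (hxy : y ≠ x) {q : V} (hq : q ∈ x.1)
        (hqd : q ≠ d.fst) (hqy : q ∈ y.1) :
        ∃ d' : B.Arrow, B.source d' = y ∧ d'.fst = q ∧ (SimpleGraph.branch d').ncard < n := by
      obtain ⟨d', hd', hq'⟩ := exists_source_eq_fst_eq hqy
      rw [hx] at hq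
      have hqs := (mem_source_iff.1 hq).resolve_left hqd
      refine ⟨d', hd', hq', ?_⟩
      rw [← hn]
      refine SimpleGraph.ncard_branch_lt B.isTree (hq'.trans hqs) ?_
      rintro rfl
      rw [source_symm, ← hx] at hd'
      exact hxy hd'.symm
    constructor
    · intro i i' j hm hj hi hw
      have hjd := m.mem_right hm
      have hid : d.fst ∈ (s i).1 := by rw [hi]; exact m.mem_left hm
      have hstab : ∃ j', m.rel d.fst i j' ∧ len d.fst (s i) (t j') ≤ len d.fst (s i) (t j) ∧
          (t j' = t j → weight t d.fst j' ≤ weight t d.fst j) := by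
        rcases m.stable hid hjd with h | ⟨i'', hm', -, hw'⟩
        · exact h
        · obtain rfl := m.left_unique hm hm'
          obtain rfl := weight_injective hi (le_antisymm (hw' hi.symm) hw)
          exact ⟨j, hm, le_rfl, fun _ => le_rfl⟩
      obtain ⟨j', hm', hl, hw'⟩ := hstab
      refine m.null_of_right hst hm' hjd hl fun hjj q i₁ hq hqd hm₁ => ?_
      obtain ⟨d', hd', rfl, hlt⟩ := hnext hj (hst i₁ j) hq hqd (m.mem_left hm₁)
      refine (ih _ hlt d' rfl).2 i₁ j j' hm₁ hd'.symm hjj.symm ?_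
      rw [weight_eq_neg hjd hq hqd.symm,
        weight_eq_neg (by rw [hjj]; exact hjd) (by rw [hjj]; exact hq) hqd.symm]
      exact neg_le_neg (hw' hjj)
    · intro i j j' hm hi hj hw
      have hid := m.mem_left hm
      have hjd : d.fst ∈ (t j).1 := by rw [hj]; exact m.mem_right hm
      have hstab : ∃ i', m.rel d.fst i' j ∧ len d.fst (s i') (t j) ≤ len d.fst (s i) (t j) ∧
          (s i' = s i → weight s d.fst i ≤ weight s d.fst i') := by
        rcases m.stable hid hjd with ⟨j'', hm', -, hw'⟩ | h
        · obtain rfl := m.right_unique hm hm'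
          obtain rfl := weight_injective hj (le_antisymm hw (hw' hj.symm))
          exact ⟨i, hm, le_rfl, fun _ => le_rfl⟩
        · exact h
      obtain ⟨i', hm', hl, hw'⟩ := hstab
      refine m.null_of_left hst hm' hid hl fun hii q j₁ hq hqd hm₁ => ?_
      obtain ⟨d', hd', rfl, hlt⟩ := hnext hi (hst i j₁).symm hq hqd (m.mem_right hm₁)
      refine (ih _ hlt d' rfl).1 i i' j₁ hm₁ hd'.symm hii.symm ?_
      rw [weight_eq_neg hid hq hqd.symm,
        weight_eq_neg (by rw [hii]; exact hid) (by rw [hii]; exact hq) hqd.symm]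
      exact neg_le_neg (hw' hii)

lemma null (hst : ∀ i j, s i ≠ t j) {p : V} {i : I} {j : J} (hi : p ∈ (s i).1) (hj : p ∈ (t j).1)
    : m.Null K p i j := by
  rcases m.stable hi hj with ⟨j', hm, hl, hw⟩ | ⟨i', hm, hl, hw⟩
  · refine m.null_of_right hst hm hj hl fun hjj q i₁ hq hqd hm₁ => ?_
    obtain ⟨d', hd', rfl⟩ := exists_source_eq_fst_eq (m.mem_left hm₁)
    refine (m.null_of_rel_parallel hst _ d' rfl).2 i₁ j j' hm₁ hd'.symm hjj.symm ?_
    rw [weight_eq_neg hj hq hqd.symm,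
      weight_eq_neg (by rw [hjj]; exact hj) (by rw [hjj]; exact hq) hqd.symm]
    exact neg_le_neg (hw hjj)
  · refine m.null_of_left hst hm hi hl fun hii q j₁ hq hqd hm₁ => ?_
    obtain ⟨d', hd', rfl⟩ := exists_source_eq_fst_eq (m.mem_right hm₁)
    refine (m.null_of_rel_parallel hst _ d' rfl).1 i i' j₁ hm₁ hd'.symm hii.symm ?_
    rw [weight_eq_neg hi hq hqd.symm,
      weight_eq_neg (by rw [hii]; exact hi) (by rw [hii]; exact hq) hqd.symm]
    exact neg_le_neg (hw hii)

/-- The homomorphism given by a stable matching is rigid. -/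
theorem isRigid_map (hst : ∀ i j, s i ≠ t j) : IsRigid (m.map K) := by
  intro φ
  change φ ∈ nullhomotopic K (m.map K)
  rw [← sum_elem_entry φ]
  refine Submodule.sum_mem _ fun i _ => Submodule.sum_mem _ fun j _ => ?_
  by_cases h : ∃ p, p ∈ (s i).1 ∧ p ∈ (t j).1
  · obtain ⟨p, hi, hj⟩ := h
    obtain ⟨c, hc⟩ := exists_corner_eq_smul hi hj (hst i j) (entry φ i j)
    rw [e_mul_entry_mul_e] at hc
    rw [hc, elem_smul]
    exact Submodule.smul_mem _ c (m.null hst hi hj)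
  · have := corner_eq_zero (x := s i) (y := t j) (fun p hp hp' => h ⟨p, hp, hp'⟩) (entry φ i j)
    rw [e_mul_entry_mul_e] at this
    rw [this, elem_zero]
    exact Submodule.zero_mem _

end Matching

end BrauerTree

section Indecomposable

variable {A : Type u} [Ring A]

/-- An indecomposable module is not the direct sum of two nonzero submodules. -/
lemma CategoryTheory.Indecomposable.eq_bot_or_eq_bot {M : ModuleCat.{v} A} (hM : Indecomposable M)
    {N₁ N₂ : Submodule A M} (h : IsCompl N₁ N₂) : N₁ = ⊥ ∨ N₂ = ⊥ := by
  let e : M ≅ ModuleCat.of A N₁ ⊞ ModuleCat.of A N₂ :=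
    (Submodule.prodEquivOfIsCompl N₁ N₂ h).symm.toModuleIso ≪≫
      (ModuleCat.biprodIsoProd (ModuleCat.of A N₁) (ModuleCat.of A N₂)).symm
  have key (N : Submodule A M) (hN : IsZero (ModuleCat.of A N)) : N = ⊥ := by
    have := ModuleCat.subsingleton_of_isZero hN
    rw [Submodule.eq_bot_iff]
    intro x hx
    exact congrArg Subtype.val (Subsingleton.elim (⟨x, hx⟩ : N) 0)
  rcases hM.2 _ _ e with h | h
  · exact Or.inl (key _ h)
  · exact Or.inr (key _ h)

variable {P Q : Type*} [AddCommGroup P] [Module A P] [AddCommGroup Q] [Module A Q]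

open BrauerTree in
/-- An idempotent endomorphism of a minimal presentation of an indecomposable module is trivial. -/
lemma CategoryTheory.Indecomposable.idempotent_trivial {M : ModuleCat.{v} A}
    (hM : Indecomposable M) {f : P →ₗ[A] Q} {π : Q →ₗ[A] M} (hπ : Function.Surjective π)
    (hfπ : LinearMap.range f = LinearMap.ker π) (hrange : Superfluous (LinearMap.range f))
    (hker : Superfluous (LinearMap.ker f)) {a : P →ₗ[A] P} {b : Q →ₗ[A] Q} (ha : a ∘ₗ a = a)
    (hb : b ∘ₗ b = b) (hab : b ∘ₗ f = f ∘ₗ a) : (a = 0 ∧ b = 0) ∨ (a = .id ∧ b = .id) := by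
  have hb' (x : Q) : b (b x) = b x := LinearMap.congr_fun hb x
  have ha' (x : P) : a (a x) = a x := LinearMap.congr_fun ha x
  have hab' (x : P) : b (f x) = f (a x) := LinearMap.congr_fun hab x
  have hcompl : IsCompl ((LinearMap.range b).map π) ((LinearMap.ker b).map π) := by
    constructor
    · rw [Submodule.disjoint_def]
      rintro _ ⟨_, ⟨x, rfl⟩, rfl⟩ ⟨y, hy, hxy⟩
      have h1 : b x - y ∈ LinearMap.range f := by
        rw [hfπ, LinearMap.mem_ker, map_sub, hxy, sub_self]
      obtain ⟨z, hz⟩ := h1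
      have h2 := hab' z
      rw [hz, map_sub, hb', LinearMap.mem_ker.1 hy, sub_zero] at h2
      have h3 : f (a z) ∈ LinearMap.ker π := by rw [← hfπ]; exact ⟨_, rfl⟩
      rw [h2]
      exact h3
    · rw [codisjoint_iff, eq_top_iff]
      rintro x -
      obtain ⟨y, rfl⟩ := hπ x
      rw [← Submodule.map_sup]
      refine ⟨y, ?_, rfl⟩
      have : y = b y + (y - b y) := by abel
      rw [this]
      refine Submodule.add_mem_sup ⟨y, rfl⟩ ?_
      rw [LinearMap.mem_ker, map_sub, hb', sub_self]
  rcases hM.eq_bot_or_eq_bot hcompl with h | h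
  · left
    have hb0 : b = 0 := by
      rw [← LinearMap.ker_eq_top]
      apply hrange
      rw [eq_top_iff]
      rintro x -
      have : x = b x + (x - b x) := by abel
      rw [this]
      refine Submodule.add_mem_sup ?_ ?_
      · rw [hfπ, LinearMap.mem_ker]
        have h1 : π (b x) ∈ (LinearMap.range b).map π := ⟨_, ⟨x, rfl⟩, rfl⟩
        rwa [h, Submodule.mem_bot] at h1
      · rw [LinearMap.mem_ker, map_sub, hb', sub_self]
    refine ⟨?_, hb0⟩
    rw [← LinearMap.ker_eq_top]
    apply hker
    rw [eq_top_iff]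
    rintro x -
    have : x = a x + (x - a x) := by abel
    rw [this]
    refine Submodule.add_mem_sup ?_ ?_
    · rw [LinearMap.mem_ker, ← hab', hb0, LinearMap.zero_apply]
    · rw [LinearMap.mem_ker, map_sub, ha', sub_self]
  · right
    have hb1 : LinearMap.range b = ⊤ := by
      apply hrange
      rw [eq_top_iff]
      rintro x -
      have : x = (x - b x) + b x := by abel
      rw [this]
      refine Submodule.add_mem_sup ?_ ⟨x, rfl⟩
      have h1 : π (x - b x) ∈ (LinearMap.ker b).map π :=
        ⟨_, by rw [SetLike.mem_coe, LinearMap.mem_ker, map_sub, hb', sub_self], rfl⟩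
      rw [h, Submodule.mem_bot] at h1
      rwa [hfπ, LinearMap.mem_ker]
    have hb2 : b = LinearMap.id := by
      ext x
      obtain ⟨y, rfl⟩ : x ∈ LinearMap.range b := by rw [hb1]; trivial
      exact hb' y
    have ha1 : LinearMap.range a = ⊤ := by
      apply hker
      rw [eq_top_iff]
      rintro x -
      have : x = (x - a x) + a x := by abel
      rw [this]
      refine Submodule.add_mem_sup ?_ ⟨x, rfl⟩
      rw [LinearMap.mem_ker, map_sub, ← hab', hb2, LinearMap.id_apply, sub_self]
    refine ⟨?_, hb2⟩
    ext x
    obtain ⟨y, rfl⟩ : x ∈ LinearMap.range a := by rw [ha1]; trivial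
    exact ha' y

end Indecomposable

namespace BrauerTree

variable {V : Type v} {B : BrauerTree V} {K : Type u} [Field K]
variable {I J : Type*} {s : I → B.Vertex} {t : J → B.Vertex}

section Disjoint

variable [Finite V]

/-- The entries of a minimal presentation lie in the radical. -/
lemma Superfluous.character_eq_zero {N : Submodule (B.Alg K) (B.ProjSum K t)} (hN : Superfluous N)
    {y : B.ProjSum K t} (hy : y ∈ N) (j : J) : character K (t j) (y j) = 0 := by
  classical
  by_contra hc
  let L : Submodule (B.Alg K) (B.ProjSum K t) :=
    { carrier := {z | character K (t j) (z j) = 0}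
      zero_mem' := by simp
      add_mem' := fun {z z'} hz hz' => by
        have h1 : character K (t j) (z j) = 0 := hz
        have h2 : character K (t j) (z' j) = 0 := hz'
        show character K (t j) ((z + z') j : B.proj K (t j)) = 0
        rw [Pi.add_apply, Submodule.coe_add, map_add, h1, h2, add_zero]
      smul_mem' := fun a z hz => by
        have h1 : character K (t j) (z j) = 0 := hz
        show character K (t j) ((a • z) j : B.proj K (t j)) = 0
        rw [Pi.smul_apply, Submodule.coe_smul, smul_eq_mul, map_mul, h1, mul_zero] }
  have hL : L = ⊤ := by
    apply hN
    rw [eq_top_iff]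
    rintro z -
    set c : K := character K (t j) (z j) * (character K (t j) (y j))⁻¹ with hcdef
    have : z = algebraMap K (B.Alg K) c • y + (z - algebraMap K (B.Alg K) c • y) := by abel
    rw [this]
    refine Submodule.add_mem_sup (N.smul_mem _ hy) ?_
    show character K (t j) ((z - algebraMap K (B.Alg K) c • y) j : B.proj K (t j)) = 0
    rw [Pi.sub_apply, Pi.smul_apply, Submodule.coe_sub, Submodule.coe_smul, smul_eq_mul, map_sub,
      map_mul, AlgHom.commutes, hcdef, Algebra.algebraMap_self, RingHom.id_apply,
      inv_mul_cancel_right₀ hc, sub_self]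
  have h1 : (Pi.single j (gen K (t j)) : B.ProjSum K t) ∈ L := by rw [hL]; trivial
  have h2 : character K (t j) ((Pi.single j (gen K (t j)) : B.ProjSum K t) j) = 0 := h1
  rw [Pi.single_eq_same, gen, character_e_self] at h2
  exact one_ne_zero h2

lemma character_entry_eq_zero {F : B.ProjSum K s →ₗ[B.Alg K] B.ProjSum K t}
    (hF : Superfluous (LinearMap.range F)) (x : B.Vertex) (i : I) (j : J) :
    character K x (entry F i j) = 0 := by
  by_cases h : t j = x
  · subst h
    exact hF.character_eq_zero ⟨_, rfl⟩ j
  · rw [← entry_mul_e, map_mul, character_e_of_ne K h, mul_zero]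

/-- The two terms of a rigid minimal presentation have no common direct summands. -/
lemma _root_.IsRigid.source_ne_sink [Fintype I] [Fintype J]
    {F : B.ProjSum K s →ₗ[B.Alg K] B.ProjSum K t} (hF : IsRigid F)
    (hrange : Superfluous (LinearMap.range F)) (i : I) (j : J) : s i ≠ t j := by
  intro hij
  obtain ⟨h, h', hh⟩ := hF (elem s t i j (B.e K (s i)))
  have h1 := congrArg (fun φ => character K (s i) (entry φ i j)) hh
  simp only [entry_add, entry_comp, map_add, map_sum, map_mul, entry_elem_self, ← hij,
    character_e_self, character_entry_eq_zero hrange, mul_zero, zero_mul, Finset.sum_const_zero,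
    mul_one, add_zero] at h1
  exact one_ne_zero h1

end Disjoint

section Connected

open Classical in
/-- The projection to the summands with index in `S`. -/
noncomputable def summandProj (s : I → B.Vertex) (S : Set I) :
    B.ProjSum K s →ₗ[B.Alg K] B.ProjSum K s where
  toFun y i := if i ∈ S then y i else 0
  map_add' y z := by
    funext i
    by_cases h : i ∈ S <;> simp [h]
  map_smul' a y := by
    funext i
    by_cases h : i ∈ S <;> simp [h]

lemma summandProj_apply_of_mem {S : Set I} {i : I} (h : i ∈ S) (y : B.ProjSum K s) :
    summandProj s S y i = y i := if_pos h

lemma summandProj_apply_of_notMem {S : Set I} {i : I} (h : i ∉ S) (y : B.ProjSum K s) :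
    summandProj s S y i = 0 := if_neg h

lemma summandProj_comp_self (S : Set I) :
    summandProj (K := K) s S ∘ₗ summandProj s S = summandProj s S := by
  ext y i
  rw [LinearMap.comp_apply]
  by_cases h : i ∈ S
  · rw [summandProj_apply_of_mem h]
  · rw [summandProj_apply_of_notMem h, summandProj_apply_of_notMem h]

variable [Finite V]

lemma gen_ne_zero (x : B.Vertex) : gen K x ≠ 0 := by
  intro h
  have := congrArg (fun a : B.proj K x => character K x a) h
  simp [gen, character_e_self] at this

lemma eq_empty_of_summandProj_eq_zero {S : Set I} (h : summandProj (K := K) s S = 0) : S = ∅ := by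
  classical
  rw [Set.eq_empty_iff_forall_notMem]
  intro i hi
  have h1 := congrFun (LinearMap.congr_fun h (Pi.single i (gen K (s i)))) i
  rw [summandProj_apply_of_mem hi, Pi.single_eq_same] at h1
  exact gen_ne_zero (s i) h1

lemma eq_univ_of_summandProj_eq_id {S : Set I} (h : summandProj (K := K) s S = .id) :
    S = Set.univ := by
  classical
  rw [Set.eq_univ_iff_forall]
  intro i
  by_contra hi
  have h1 := congrFun (LinearMap.congr_fun h (Pi.single i (gen K (s i)))) i
  rw [summandProj_apply_of_notMem hi, LinearMap.id_apply, Pi.single_eq_same] at h1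
  exact gen_ne_zero (s i) h1.symm

variable [Fintype I] [Fintype J]

/-- The sources and sinks cannot be divided into two parts which respect the matching. -/
def Matching.IsConnected (m : Matching s t) : Prop :=
  ∀ (S : Set I) (S' : Set J), (∀ p i j, m.rel p i j → (i ∈ S ↔ j ∈ S')) →
    (S = ∅ ∧ S' = ∅) ∨ (S = Set.univ ∧ S' = Set.univ)

/-- If the homomorphism of a matching presents an indecomposable module, then the matching is
connected. -/
lemma Matching.isConnected (m : Matching s t) {M : ModuleCat.{w} (B.Alg K)} (hM : Indecomposable M)
    {F : B.ProjSum K s →ₗ[B.Alg K] B.ProjSum K t} {π : B.ProjSum K t →ₗ[B.Alg K] M}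
    (hπ : Function.Surjective π)
    (hFπ : LinearMap.range F = LinearMap.ker π) (hrange : Superfluous (LinearMap.range F))
    (hker : Superfluous (LinearMap.ker F)) {f : B.ProjSum K s ≃ₗ[B.Alg K] B.ProjSum K s}
    {g : B.ProjSum K t ≃ₗ[B.Alg K] B.ProjSum K t}
    (hfg : g.toLinearMap ∘ₗ F = m.map K ∘ₗ f.toLinearMap) : m.IsConnected := by
  intro S S' hS
  have hcomm (y : B.ProjSum K s) :
      summandProj t S' (m.map K y) = m.map K (summandProj s S y) := by
    funext j
    apply Subtype.ext
    rw [apply_eq_sum (m.map K) (summandProj s S y)]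
    by_cases hj : j ∈ S'
    · rw [summandProj_apply_of_mem hj, apply_eq_sum]
      refine Finset.sum_congr rfl fun i _ => ?_
      by_cases hi : i ∈ S
      · rw [summandProj_apply_of_mem hi]
      · rw [m.entry_map_of_not (fun ⟨p, hp⟩ => hi ((hS p i j hp).2 hj)), mul_zero, mul_zero]
    · rw [summandProj_apply_of_notMem hj]
      refine (Finset.sum_eq_zero fun i _ => ?_).symm
      by_cases hi : i ∈ S
      · rw [m.entry_map_of_not (fun ⟨p, hp⟩ => hj ((hS p i j hp).1 hi)), mul_zero]
      · rw [summandProj_apply_of_notMem hi, ZeroMemClass.coe_zero, zero_mul]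
  have hfg' (y : B.ProjSum K s) : g (F y) = m.map K (f y) := LinearMap.congr_fun hfg y
  have hfg'' (y : B.ProjSum K s) : F (f.symm y) = g.symm (m.map K y) := by
    rw [LinearEquiv.eq_symm_apply, hfg', LinearEquiv.apply_symm_apply]
  have hidS (y : B.ProjSum K s) : summandProj s S (summandProj s S y) = summandProj s S y :=
    LinearMap.congr_fun (summandProj_comp_self S) y
  have hidS' (y : B.ProjSum K t) : summandProj t S' (summandProj t S' y) = summandProj t S' y :=
    LinearMap.congr_fun (summandProj_comp_self S') y
  have key := hM.idempotent_trivial hπ hFπ hrange hker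
    (a := f.symm.toLinearMap ∘ₗ summandProj s S ∘ₗ f.toLinearMap)
    (b := g.symm.toLinearMap ∘ₗ summandProj t S' ∘ₗ g.toLinearMap)
    (by
      refine LinearMap.ext fun y => ?_
      simp only [LinearMap.comp_apply, LinearEquiv.coe_coe, LinearEquiv.apply_symm_apply, hidS])
    (by
      refine LinearMap.ext fun y => ?_
      simp only [LinearMap.comp_apply, LinearEquiv.coe_coe, LinearEquiv.apply_symm_apply, hidS'])
    (by
      refine LinearMap.ext fun y => ?_
      simp only [LinearMap.comp_apply, LinearEquiv.coe_coe, hfg', hfg'', hcomm])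
  rcases key with ⟨ha, hb⟩ | ⟨ha, hb⟩
  · refine Or.inl ⟨eq_empty_of_summandProj_eq_zero (K := K) (s := s) ?_,
      eq_empty_of_summandProj_eq_zero (K := K) (s := t) ?_⟩
    · refine LinearMap.ext fun y => ?_
      have := LinearMap.congr_fun ha (f.symm y)
      simpa using this
    · refine LinearMap.ext fun y => ?_
      have := LinearMap.congr_fun hb (g.symm y)
      simpa using this
  · refine Or.inr ⟨eq_univ_of_summandProj_eq_id (K := K) (s := s) ?_,
      eq_univ_of_summandProj_eq_id (K := K) (s := t) ?_⟩
    · refine LinearMap.ext fun y => ?_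
      have := LinearMap.congr_fun ha (f.symm y)
      simpa using this
    · refine LinearMap.ext fun y => ?_
      have := LinearMap.congr_fun hb (g.symm y)
      simpa using this

end Connected

end BrauerTree

namespace BrauerTree

namespace Matching

variable {V : Type v} {B : BrauerTree V} {I J : Type*} [Fintype I] [Fintype J]
  {s : I → B.Vertex} {t : J → B.Vertex} (m : Matching s t)

/-- The matching as a symmetric relation on the disjoint union of sources and sinks. -/
def Link (p : V) : I ⊕ J → I ⊕ J → Prop
  | .inl i, .inr j => m.rel p i j
  | .inr j, .inl i => m.rel p i j
  | .inl _, .inl _ => False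
  | .inr _, .inr _ => False

variable {m}

lemma Link.symm {p : V} {y z : I ⊕ J} (h : m.Link p y z) : m.Link p z y := by
  rcases y with i | j <;> rcases z with i' | j' <;> exact h

lemma Link.mem_left {p : V} {y z : I ⊕ J} (h : m.Link p y z) : p ∈ (Sum.elim s t y).1 := by
  rcases y with i | j <;> rcases z with i' | j'
  · exact h.elim
  · exact m.mem_left h
  · exact m.mem_right h
  · exact h.elim

lemma Link.unique {p : V} {y z z' : I ⊕ J} (h : m.Link p y z) (h' : m.Link p y z') : z = z' := by
  rcases y with i | j <;> rcases z with i' | j' <;> rcases z' with i'' | j''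
  · exact h.elim
  · exact h.elim
  · exact h'.elim
  · exact congrArg _ (m.right_unique h h')
  · exact congrArg _ (m.left_unique h h')
  · exact h'.elim
  · exact h.elim
  · exact h.elim

lemma Link.edge_ne (hst : ∀ i j, s i ≠ t j) {p : V} {y z : I ⊕ J} (h : m.Link p y z) :
    Sum.elim s t y ≠ Sum.elim s t z := by
  rcases y with i | j <;> rcases z with i' | j'
  · exact h.elim
  · exact hst i j'
  · exact (hst i' j).symm
  · exact h.elim

lemma IsConnected.forall_mem (hm : m.IsConnected) {Z : Set (I ⊕ J)}
    (hZ : ∀ p y z, m.Link p y z → y ∈ Z → z ∈ Z) {y : I ⊕ J} (hy : y ∈ Z) (z : I ⊕ J) :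
    z ∈ Z := by
  rcases hm {i | Sum.inl i ∈ Z} {j | Sum.inr j ∈ Z} (fun p i j h =>
    ⟨hZ p (.inl i) (.inr j) h, hZ p (.inr j) (.inl i) h⟩) with ⟨h1, h2⟩ | ⟨h1, h2⟩
  · rcases y with i | j
    · have : i ∈ {i | Sum.inl i ∈ Z} := hy
      rw [h1] at this
      exact this.elim
    · have : j ∈ {j | Sum.inr j ∈ Z} := hy
      rw [h2] at this
      exact this.elim
  · rcases z with i | j
    · have : i ∈ {i | Sum.inl i ∈ Z} := by rw [h1]; trivial
      exact this
    · have : j ∈ {j | Sum.inr j ∈ Z} := by rw [h2]; trivial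
      exact this

variable (m) in
/-- One step along the matching: an element together with a direction of its edge is followed by
the element which is linked to it at the end of the edge. -/
def Step (a b : B.Arrow × (I ⊕ J)) : Prop :=
  b.1.fst = a.1.snd ∧ B.source b.1 = Sum.elim s t b.2 ∧ m.Link a.1.snd a.2 b.2

lemma Step.branch_subset (hst : ∀ i j, s i ≠ t j) {a b : B.Arrow × (I ⊕ J)} (h : m.Step a b)
    (ha : B.source a.1 = Sum.elim s t a.2) :
    SimpleGraph.branch b.1 ⊆ SimpleGraph.branch a.1 := by
  refine SimpleGraph.branch_subset B.isTree h.1 fun h' => ?_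
  have h1 := h.2.1
  rw [h', source_symm, ha] at h1
  exact h.2.2.edge_ne hst h1

lemma branch_subset_of_transGen (hst : ∀ i j, s i ≠ t j) {a b : B.Arrow × (I ⊕ J)}
    (ha : B.source a.1 = Sum.elim s t a.2) (h : Relation.TransGen m.Step a b) :
    SimpleGraph.branch b.1 ⊆ SimpleGraph.branch a.1 ∧ b.1.fst ∈ SimpleGraph.branch a.1 ∧
      B.source b.1 = Sum.elim s t b.2 := by
  induction h with
  | single h =>
    refine ⟨h.branch_subset hst ha, ?_, h.2.1⟩
    rw [h.1]
    exact SimpleGraph.snd_mem_branch B.isTree _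
  | tail _ h ih =>
    refine ⟨(h.branch_subset hst ih.2.2).trans ih.1, ?_, h.2.1⟩
    rw [h.1]
    exact ih.1 (SimpleGraph.snd_mem_branch B.isTree _)

lemma fst_notMem_of_transGen (hst : ∀ i j, s i ≠ t j) {a b : B.Arrow × (I ⊕ J)}
    (ha : B.source a.1 = Sum.elim s t a.2) (h : Relation.TransGen m.Step a b) :
    a.1.fst ∉ (Sum.elim s t b.2).1 := by
  obtain ⟨h1, h2, h3⟩ := branch_subset_of_transGen hst ha h
  rw [← h3, mem_source_iff]
  rintro (h | h)
  · rw [← h] at h2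
    exact SimpleGraph.fst_notMem_branch _ h2
  · have := h1 (SimpleGraph.snd_mem_branch B.isTree b.1)
    rw [← h] at this
    exact SimpleGraph.fst_notMem_branch _ this

/-- In a connected matching any two elements with a common end are linked there. -/
theorem IsConnected.link (hst : ∀ i j, s i ≠ t j) (hm : m.IsConnected) {p : V} {y z : I ⊕ J}
    (hyz : y ≠ z) (hy : p ∈ (Sum.elim s t y).1) (hz : p ∈ (Sum.elim s t z).1) : m.Link p y z := by
  obtain ⟨d, hd, rfl⟩ := exists_source_eq_fst_eq hy
  let Z : Set (I ⊕ J) := {z | ∃ d', B.source d' = Sum.elim s t z ∧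
    (Relation.ReflTransGen m.Step (d, y) (d', z) ∨
      Relation.ReflTransGen m.Step (d.symm, y) (d', z))}
  have hsucc (a : B.Arrow × (I ⊕ J)) (z : I ⊕ J) (h : m.Link a.1.snd a.2 z) :
      ∃ d', m.Step a (d', z) := by
    obtain ⟨d', h1, h2⟩ := exists_source_eq_fst_eq h.symm.mem_left
    exact ⟨d', h2, h1, h⟩
  have hpred (a : B.Arrow) (ha : a = d ∨ a = d.symm) (d' : B.Arrow) (z' z'' : I ⊕ J)
      (hd' : B.source d' = Sum.elim s t z')
      (hr : Relation.ReflTransGen m.Step (a, y) (d', z')) (q : V) (hl : m.Link q z' z'') :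
      z'' ∈ Z := by
    have hq := hl.mem_left
    rw [← hd', mem_source_iff] at hq
    rcases hq with rfl | rfl
    · rcases Relation.ReflTransGen.cases_tail hr with h | ⟨b, hb, hstep⟩
      · obtain ⟨rfl, rfl⟩ : d' = a ∧ z' = y := by simpa using h
        obtain ⟨d'', hs⟩ := hsucc (d'.symm, z') z'' hl
        refine ⟨d'', hs.2.1, ?_⟩
        rcases ha with rfl | rfl
        · exact Or.inr (Relation.ReflTransGen.single hs)
        · rw [SimpleGraph.Dart.symm_symm] at hs
          exact Or.inl (Relation.ReflTransGen.single hs)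
      · have h1 := hstep.2.2
        rw [← hstep.1] at h1
        obtain rfl := h1.symm.unique hl
        rcases Relation.ReflTransGen.cases_tail hb with h | ⟨c, hc, hstep'⟩
        · subst h
          refine ⟨a, ?_, ?_⟩
          · rcases ha with rfl | rfl
            · exact hd
            · rw [source_symm, hd]
          · rcases ha with rfl | rfl
            · exact Or.inl hb
            · exact Or.inr hb
        · refine ⟨b.1, hstep'.2.1, ?_⟩
          rcases ha with rfl | rfl
          · exact Or.inl hb
          · exact Or.inr hb
    · obtain ⟨d'', hs⟩ := hsucc (d', z') z'' hl
      refine ⟨d'', hs.2.1, ?_⟩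
      rcases ha with rfl | rfl
      · exact Or.inl (hr.tail hs)
      · exact Or.inr (hr.tail hs)
  have hzZ : z ∈ Z := by
    have hyZ : y ∈ Z := ⟨d, hd, Or.inl .refl⟩
    refine hm.forall_mem ?_ hyZ z
    rintro q z' z'' hl ⟨d', hd', h | h⟩
    · exact hpred d (Or.inl rfl) d' z' z'' hd' h q hl
    · exact hpred d.symm (Or.inr rfl) d' z' z'' hd' h q hl
  obtain ⟨d', hd', h | h⟩ := hzZ
  · rcases Relation.reflTransGen_iff_eq_or_transGen.1 h with h | h
    · exact absurd (congrArg Prod.snd h).symm hyz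
    · exact absurd hz (fst_notMem_of_transGen hst hd h)
  · rcases Relation.ReflTransGen.cases_head h with h | ⟨b, hb, h⟩
    · exact absurd (congrArg Prod.snd h) hyz
    · rcases Relation.reflTransGen_iff_eq_or_transGen.1 h with h | h
      · subst h
        exact hb.2.2
      · have := fst_notMem_of_transGen hst hb.2.1 h
        rw [hb.1] at this
        exact absurd hz this

/-- If both ends of an edge belong to a connected matching, then so does the edge. -/
theorem IsConnected.exists_edge_eq (hm : m.IsConnected) {x : B.Vertex} {p q : V} (hpq : p ≠ q)
    (hp : p ∈ x.1) (hq : q ∈ x.1) {y z : I ⊕ J} (hy : p ∈ (Sum.elim s t y).1)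
    (hz : q ∈ (Sum.elim s t z).1) : ∃ y', Sum.elim s t y' = x := by
  by_contra! hcon
  have hx : x.1 = s(p, q) := (Sym2.mem_and_mem_iff hpq).1 ⟨hp, hq⟩
  have hadj : B.graph.Adj p q := by
    have := x.2
    rw [hx] at this
    exact this
  have hbridge := SimpleGraph.isAcyclic_iff_forall_adj_isBridge.1 B.isTree.isAcyclic hadj
  rw [SimpleGraph.isBridge_iff] at hbridge
  have hside (y : I ⊕ J) {r r' : V} (hr : r ∈ (Sum.elim s t y).1)
      (hr' : r' ∈ (Sum.elim s t y).1) (h : (B.graph.deleteEdges {s(p, q)}).Reachable p r) :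
      (B.graph.deleteEdges {s(p, q)}).Reachable p r' := by
    by_cases hrr : r = r'
    · rwa [← hrr]
    · refine h.trans (SimpleGraph.Adj.reachable ?_)
      have h1 := (Sym2.mem_and_mem_iff hrr).1 ⟨hr, hr'⟩
      rw [SimpleGraph.deleteEdges_adj, Set.mem_singleton_iff]
      refine ⟨?_, fun h2 => hcon y (Subtype.ext (h1.trans (h2.trans hx.symm)))⟩
      have := (Sum.elim s t y).2
      rw [h1] at this
      exact this
  have := hm.forall_mem (Z := {y | ∀ r ∈ (Sum.elim s t y).1,
    (B.graph.deleteEdges {s(p, q)}).Reachable p r})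
    (fun r y z hl hy r' hr' => hside z hl.symm.mem_left hr' (hy r hl.mem_left))
    (y := y) (fun r hr => hside y hy hr .rfl) z q hz
  exact hbridge this

end Matching

end BrauerTree

namespace BrauerTree

variable {V : Type v} {B : BrauerTree V} {K : Type u} [Field K]
variable {I J : Type*} {s : I → B.Vertex} {t : J → B.Vertex}

/-- The edges of the sources and sinks form a path in the tree on which sources and sinks
alternate, and the entries of the homomorphism at neighbouring places are nonzero. -/
structure IsZigzag (F : B.ProjSum K s →ₗ[B.Alg K] B.ProjSum K t) : Prop where
  source_ne_sink : ∀ i j, s i ≠ t j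
  source_unique : ∀ {p i i'}, p ∈ (s i).1 → p ∈ (s i').1 → i = i'
  sink_unique : ∀ {p j j'}, p ∈ (t j).1 → p ∈ (t j').1 → j = j'
  entry_ne_zero : ∀ {p i j}, p ∈ (s i).1 → p ∈ (t j).1 → entry F i j ≠ 0
  exists_sink : ∀ i, ∃ j p, p ∈ (s i).1 ∧ p ∈ (t j).1
  exists_source : ∀ j, ∃ i p, p ∈ (s i).1 ∧ p ∈ (t j).1
  exists_edge_eq : ∀ {x : B.Vertex} {p q : V} {i i' : I}, p ≠ q → p ∈ x.1 → q ∈ x.1 →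
    p ∈ (s i).1 → q ∈ (s i').1 → (∃ i'', s i'' = x) ∨ ∃ j, t j = x

variable [Finite V]

theorem _root_.IsRigid.isZigzag [Infinite K] [Fintype I] [Fintype J]
    {F : B.ProjSum K s →ₗ[B.Alg K] B.ProjSum K t} (hF : IsRigid F)
    {M : ModuleCat.{w} (B.Alg K)} (hM : Indecomposable M)
    {π : B.ProjSum K t →ₗ[B.Alg K] M} (hπ : Function.Surjective π)
    (hFπ : LinearMap.range F = LinearMap.ker π) (hrange : Superfluous (LinearMap.range F))
    (hker : Superfluous (LinearMap.ker F)) [Nonempty I] [Nonempty J] : IsZigzag F := by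
  have hst := hF.source_ne_sink hrange
  obtain ⟨m⟩ := nonempty_matching s t
  obtain ⟨f, g, hfg⟩ := hF.exists_equiv K (m.isRigid_map (K := K) hst)
  have hm := m.isConnected hM hπ hFπ hrange hker hfg
  have hs {p i i'} (h : p ∈ (s i).1) (h' : p ∈ (s i').1) : i = i' := by
    by_contra hne
    exact hm.link hst (y := .inl i) (z := .inl i') (by simpa using hne) h h'
  have ht {p j j'} (h : p ∈ (t j).1) (h' : p ∈ (t j').1) : j = j' := by
    by_contra hne
    exact hm.link hst (y := .inr j) (z := .inr j') (by simpa using hne) h h'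
  have hrel {p i j} (h : p ∈ (s i).1) (h' : p ∈ (t j).1) : m.rel p i j :=
    hm.link hst (y := .inl i) (z := .inr j) (by simp) h h'
  have hsend (h : B.ProjSum K s →ₗ[B.Alg K] B.ProjSum K s) {i i' : I} (hne : i ≠ i') :
      entry h i i' = 0 := by
    rw [← e_mul_entry_mul_e, corner_eq_zero]
    exact fun p hp hp' => hne (hs hp hp')
  have htend (h : B.ProjSum K t →ₗ[B.Alg K] B.ProjSum K t) {j j' : J} (hne : j ≠ j') :
      entry h j j' = 0 := by
    rw [← e_mul_entry_mul_e, corner_eq_zero]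
    exact fun p hp hp' => hne (ht hp hp')
  refine ⟨hst, hs, ht, ?_, ?_, ?_, ?_⟩
  · intro p i j hi hj h0
    have h1 := congrArg (fun φ => entry φ i j) hfg
    simp only [entry_comp] at h1
    rw [Finset.sum_eq_zero, Finset.sum_eq_single i, m.entry_map_of_rel hst (hrel hi hj)] at h1
    · have h2 : f.toLinearMap ∘ₗ f.symm.toLinearMap = LinearMap.id := by ext; simp
      have h3 := congrArg (fun φ => entry φ i i) h2
      simp only [entry_comp, entry_id_self] at h3
      rw [Finset.sum_eq_single i] at h3
      · have h4 := congrArg (fun a => entry f.symm.toLinearMap i i * a) h1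
        simp only [mul_zero] at h4
        rw [← mul_assoc, h3, e_mul_pth hi hj (hst i j)] at h4
        exact pth_ne_zero hi hj h4.symm
      · intro i' _ hi'
        rw [hsend _ hi'.symm, zero_mul]
      · simp
    · intro i' _ hi'
      rw [hsend _ hi'.symm, zero_mul]
    · simp
    · intro j' _
      by_cases hj' : j' = j
      · rw [hj', h0, zero_mul]
      · rw [htend _ hj', mul_zero]
  · intro i
    by_contra! hcon
    rcases hm {i} ∅ (fun p i' j h => by
      simp only [Set.mem_singleton_iff, Set.mem_empty_iff_false, iff_false]
      rintro rfl
      exact hcon j p (m.mem_left h) (m.mem_right h)) with h | h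
    · exact Set.singleton_ne_empty i h.1
    · exact Set.empty_ne_univ h.2
  · intro j
    by_contra! hcon
    rcases hm ∅ {j} (fun p i j' h => by
      simp only [Set.mem_singleton_iff, Set.mem_empty_iff_false, false_iff]
      rintro rfl
      exact hcon i p (m.mem_left h) (m.mem_right h)) with h | h
    · exact Set.singleton_ne_empty j h.2
    · exact Set.empty_ne_univ h.1
  · intro x p q i i' hpq hp hq hi hi'
    obtain ⟨y, hy⟩ := hm.exists_edge_eq hpq hp hq (y := .inl i) (z := .inl i') hi hi'
    rcases y with i'' | j
    · exact Or.inl ⟨i'', hy⟩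
    · exact Or.inr ⟨j, hy⟩

namespace IsZigzag

variable {F : B.ProjSum K s →ₗ[B.Alg K] B.ProjSum K t}

lemma exists_entry_eq {p : V} {i : I} {j : J} (hF : IsZigzag F) (hi : p ∈ (s i).1)
    (hj : p ∈ (t j).1) : ∃ c : K, c ≠ 0 ∧ entry F i j = c • pth K p (s i) (t j) := by
  obtain ⟨c, hc⟩ := exists_corner_eq_smul hi hj (hF.source_ne_sink i j) (entry F i j)
  rw [e_mul_entry_mul_e] at hc
  refine ⟨c, ?_, hc⟩
  rintro rfl
  rw [zero_smul] at hc
  exact hF.entry_ne_zero hi hj hc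

lemma entry_eq_zero {i : I} {j : J} (h : ∀ p, p ∈ (s i).1 → p ∉ (t j).1) : entry F i j = 0 := by
  rw [← e_mul_entry_mul_e, corner_eq_zero h]

variable [Fintype I]

/-- Every homomorphism to `A e_x` factors through `F`. -/
def _root_.BrauerTree.Factors (F : B.ProjSum K s →ₗ[B.Alg K] B.ProjSum K t) (x : B.Vertex) :
    Prop :=
  ∀ φ : B.ProjSum K s →ₗ[B.Alg K] B.ProjSum K (fun _ : Unit => x),
    ∃ b : B.ProjSum K t →ₗ[B.Alg K] B.ProjSum K (fun _ : Unit => x), φ = b ∘ₗ F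

lemma factors_of_elem {x : B.Vertex}
    (h : ∀ i p, p ∈ (s i).1 → p ∈ x.1 → ∃ b : B.ProjSum K t →ₗ[B.Alg K] B.ProjSum K fun _ => x,
      elem s (fun _ : Unit => x) i () (pth K p (s i) x) = b ∘ₗ F) (hx : ∀ i, s i ≠ x) :
    Factors F x := by
  have h' (φ : B.ProjSum K s →ₗ[B.Alg K] B.ProjSum K (fun _ : Unit => x)) (i : I) :
      ∃ b : B.ProjSum K t →ₗ[B.Alg K] B.ProjSum K fun _ => x,
        elem s (fun _ : Unit => x) i () (entry φ i ()) = b ∘ₗ F := by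
    by_cases hp : ∃ p, p ∈ (s i).1 ∧ p ∈ x.1
    · obtain ⟨p, hi, hp⟩ := hp
      obtain ⟨c, hc⟩ := exists_corner_eq_smul hi hp (hx i) (entry φ i ())
      rw [e_mul_entry_mul_e] at hc
      obtain ⟨b, hb⟩ := h i p hi hp
      refine ⟨c • b, ?_⟩
      rw [hc, elem_smul, hb]
      rfl
    · refine ⟨0, ?_⟩
      rw [← e_mul_entry_mul_e φ i (), corner_eq_zero fun p hi hp' => hp ⟨p, hi, hp'⟩, elem_zero,
        LinearMap.zero_comp]
  intro φ
  choose b hb using h' φ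
  refine ⟨∑ i, b i, ?_⟩
  conv_lhs => rw [← sum_elem_entry φ]
  simp only [Finset.univ_unique, Finset.sum_singleton]
  refine (Finset.sum_congr rfl fun i _ => hb i).trans ?_
  ext
  simp [LinearMap.sum_apply]

variable [Fintype J]

lemma not_factors_source (hrange : Superfluous (LinearMap.range F)) (i : I) :
    ¬ Factors F (s i) := by
  intro h
  obtain ⟨b, hb⟩ := h (elem s (fun _ => s i) i () (B.e K (s i)))
  have h1 := congrArg (fun φ => character K (s i) (entry φ i ())) hb
  simp only [entry_comp, map_sum, map_mul, entry_elem_self, character_e_self,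
    character_entry_eq_zero hrange, zero_mul, Finset.sum_const_zero, mul_one] at h1
  exact one_ne_zero h1

lemma not_factors_sink (hF : IsZigzag F) {j : J} {p q : V} {i i' : I} (hpq : p ≠ q)
    (hp : p ∈ (t j).1) (hq : q ∈ (t j).1) (hi : p ∈ (s i).1) (hi' : q ∈ (s i').1) :
    ¬ Factors F (t j) := by
  intro h
  have hii : i ≠ i' := by
    rintro rfl
    exact hpq (eq_of_mem_of_mem (hF.source_ne_sink i j) hi hp hi' hq)
  obtain ⟨b, hb⟩ := h (elem s (fun _ => t j) i () (pth K p (s i) (t j)))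
  have hb0 (j' : J) (hj' : j' ≠ j) : entry b j' () = 0 := by
    rw [← e_mul_entry_mul_e, corner_eq_zero]
    exact fun r hr hr' => hj' (hF.sink_unique hr hr')
  have key {r : V} {k : I} (hk : r ∈ (s k).1) (hr : r ∈ (t j).1) : ∃ c : K, c ≠ 0 ∧
      entry (b ∘ₗ F) k () = (c * character K (t j) (entry b j ())) • pth K r (s k) (t j) := by
    obtain ⟨c, hc, hc'⟩ := hF.exists_entry_eq hk hr
    refine ⟨c, hc, ?_⟩
    rw [entry_comp, Finset.sum_eq_single j, hc', smul_mul_assoc, ← e_mul_entry_mul_e b j (),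
      pth_mul_corner hk hr (hF.source_ne_sink k j), e_mul_entry_mul_e, mul_smul]
    · intro j' _ hj'
      rw [hb0 j' hj', mul_zero]
    · simp
  obtain ⟨c, -, h1⟩ := key hi hp
  obtain ⟨c', hc', h2⟩ := key hi' hq
  rw [← hb, entry_elem_of_ne (fun h => hii h.1.symm)] at h2
  have h3 : character K (t j) (entry b j ()) = 0 := by
    have := (smul_eq_zero.1 h2.symm).resolve_right (pth_ne_zero hi' hq)
    exact (mul_eq_zero.1 this).resolve_left hc'
  rw [← hb, entry_elem_self, h3, mul_zero, zero_smul, e_mul_pth hi hp (hF.source_ne_sink i j),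
    pth_mul_e hi hp (hF.source_ne_sink i j)] at h1
  exact pth_ne_zero hi hp h1

lemma factors_sink (hF : IsZigzag F) {j : J}
    (h : ∀ {p q : V} {i i' : I}, p ∈ (t j).1 → q ∈ (t j).1 → p ∈ (s i).1 → q ∈ (s i').1 → p = q) :
    Factors F (t j) := by
  refine factors_of_elem (fun i p hi hp => ?_) (fun i => hF.source_ne_sink i j)
  obtain ⟨c, hc, hc'⟩ := hF.exists_entry_eq hi hp
  refine ⟨elem t (fun _ => t j) j () (c⁻¹ • B.e K (t j)), entry_ext fun i' u => ?_⟩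
  obtain rfl : u = () := rfl
  rw [entry_comp, Finset.sum_eq_single j, entry_elem_self, mul_smul_comm, smul_mul_assoc,
    e_mul_self, e_mul_self, mul_smul_comm, entry_mul_e]
  · by_cases hii : i' = i
    · subst hii
      rw [hc', smul_smul, inv_mul_cancel₀ hc, one_smul, entry_elem_self,
        e_mul_pth hi hp (hF.source_ne_sink _ j), pth_mul_e hi hp (hF.source_ne_sink _ j)]
    · rw [entry_elem_of_ne (fun h => hii h.1), entry_eq_zero, smul_zero]
      intro q hq hq'
      obtain rfl := h hp hq' hi hq
      exact hii (hF.source_unique hq hi)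
  · intro j' _ hj'
    rw [entry_elem_of_ne (fun h => hj' h.1), mul_zero]
  · simp

lemma factors_iff_of_unmarked (hF : IsZigzag F) {x : B.Vertex} (hs : ∀ i, s i ≠ x)
    (ht : ∀ j, t j ≠ x) :
    Factors F x ↔ ∀ p i, p ∈ x.1 → p ∈ (s i).1 →
      ∃ j, p ∈ (t j).1 ∧ len p (s i) (t j) ≤ len p (s i) x := by
  constructor
  · intro h p i hp hi
    obtain ⟨b, hb⟩ := h (elem s (fun _ => x) i () (pth K p (s i) x))
    have h1 := congrArg (fun φ => entry φ i ()) hb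
    simp only [entry_elem_self, e_mul_pth hi hp (hs i), pth_mul_e hi hp (hs i), entry_comp] at h1
    obtain ⟨j, -, hj⟩ := Finset.exists_ne_zero_of_sum_ne_zero (h1 ▸ pth_ne_zero hi hp)
    have hr : ∃ r, r ∈ (s i).1 ∧ r ∈ (t j).1 := by
      by_contra! hcon
      rw [entry_eq_zero hcon, zero_mul] at hj
      exact hj rfl
    obtain ⟨r, hri, hrj⟩ := hr
    have hr' : ∃ r', r' ∈ (t j).1 ∧ r' ∈ x.1 := by
      by_contra! hcon
      rw [entry_eq_zero (F := b) hcon, mul_zero] at hj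
      exact hj rfl
    obtain ⟨r', hrj', hrx⟩ := hr'
    obtain ⟨c, -, hc⟩ := hF.exists_entry_eq hri hrj
    obtain ⟨c', hc'⟩ := exists_corner_eq_smul hrj' hrx (ht j) (entry b j ())
    rw [e_mul_entry_mul_e] at hc'
    rw [hc, hc', smul_mul_assoc, mul_smul_comm] at hj
    have hj' : pth K r (s i) (t j) * pth K r' (t j) x ≠ 0 := fun h0 => hj (by simp [h0])
    have hrr : r = r' := by
      by_contra hne
      exact hj' (pth_mul_pth_of_ne hne (hF.source_ne_sink i j) (ht j) hri hrj hrj' hrx)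
    subst hrr
    obtain rfl := eq_of_mem_of_mem (hs i) hi hp hri hrx
    refine ⟨j, hrj, ?_⟩
    by_contra! hlt
    exact hj' (pth_mul_pth_eq_zero hi hrj hp (hs i) hlt)
  · intro h
    refine factors_of_elem (fun i p hi hp => ?_) hs
    obtain ⟨j, hj, hl⟩ := h p i hp hi
    obtain ⟨c, hc, hc'⟩ := hF.exists_entry_eq hi hj
    refine ⟨elem t (fun _ => x) j () (c⁻¹ • pth K p (t j) x), entry_ext fun i' u => ?_⟩
    obtain rfl : u = () := rfl
    rw [entry_comp, Finset.sum_eq_single j, entry_elem_self, mul_smul_comm, smul_mul_assoc,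
      e_mul_pth hj hp (ht j), pth_mul_e hj hp (ht j), mul_smul_comm]
    · by_cases hii : i' = i
      · subst hii
        rw [hc', smul_mul_assoc, smul_smul, inv_mul_cancel₀ hc, one_smul, entry_elem_self,
          pth_mul_pth hi hj hp hl, e_mul_pth hi hp (hs _), pth_mul_e hi hp (hs _)]
      · rw [entry_elem_of_ne (fun h => hii h.1)]
        by_cases hr : ∃ r, r ∈ (s i').1 ∧ r ∈ (t j).1
        · obtain ⟨r, hri, hrj⟩ := hr
          obtain ⟨c', -, hc''⟩ := hF.exists_entry_eq hri hrj
          have hne : r ≠ p := by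
            rintro rfl
            exact hii (hF.source_unique hri hi)
          rw [hc'', smul_mul_assoc,
            pth_mul_pth_of_ne hne (hF.source_ne_sink i' j) (ht j) hri hrj hj hp, smul_zero,
            smul_zero]
        · rw [entry_eq_zero fun r hri hrj => hr ⟨r, hri, hrj⟩, zero_mul, smul_zero]
    · intro j' _ hj'
      rw [entry_elem_of_ne (fun h => hj' h.1), mul_zero]
    · simp

end IsZigzag

end BrauerTree

namespace BrauerTree

namespace Decomposition

variable {V : Type v} {B : BrauerTree V} {K : Type u} [Field K] {T : B.Cplx K}
  (D : Decomposition T)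

/-- The differential of `T` as a homomorphism between sums of indecomposable projective modules. -/
noncomputable def map : B.ProjSum K D.src →ₗ[B.Alg K] B.ProjSum K D.snk :=
  D.iso₁.toLinearMap ∘ₗ (T.d 0 1).hom ∘ₗ D.iso₀.symm.toLinearMap

lemma map_apply (y : B.ProjSum K D.src) : D.map y = D.iso₁ ((T.d 0 1).hom (D.iso₀.symm y)) := rfl

variable {D}

lemma component_ne_zero_iff {i : D.I} {j : D.J} : D.component i j ≠ 0 ↔ entry D.map i j ≠ 0 := by
  classical
  have h : ((D.component i j (gen K (D.src i)) : B.proj K (D.snk j)) : B.Alg K) =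
      entry D.map i j := by
    simp only [component, entry, map_apply, LinearMap.comp_apply, LinearMap.proj_apply,
      LinearEquiv.coe_coe, LinearMap.single_apply]
  refine not_congr ⟨fun h0 => by rw [← h, h0]; rfl, fun h0 => LinearMap.ext fun y => ?_⟩
  have h1 : D.component i j (gen K (D.src i)) = 0 := Subtype.ext (h.trans h0)
  rw [← smul_gen y, map_smul, h1, smul_zero, LinearMap.zero_apply]

variable [Finite V]

lemma hasArrow_iff (hF : IsZigzag D.map) {d : B.Arrow} :
    D.HasArrow d ↔ ∃ i j p k, p ∈ (D.src i).1 ∧ p ∈ (D.snk j).1 ∧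
      k < len p (D.src i) (D.snk j) ∧ d = B.next^[k] (dartAt p (D.src i)) := by
  constructor
  · rintro ⟨i, j, -, l, hl, hl0, hd⟩
    obtain ⟨p, hi, hj, rfl⟩ := IsPath.eq_pth (hF.source_ne_sink i j) hl hl0
    obtain ⟨k, hk, rfl⟩ := mem_iterate_iff.1 hd
    exact ⟨i, j, p, k, hi, hj, hk, rfl⟩
  · rintro ⟨i, j, p, k, hi, hj, hk, rfl⟩
    exact ⟨i, j, component_ne_zero_iff.2 (hF.entry_ne_zero hi hj), _, isPath_pth hi hj,
      pth_ne_zero hi hj, mem_iterate_iff.2 ⟨k, hk, rfl⟩⟩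

lemma incident_iff (hF : IsZigzag D.map) {d : B.Arrow} {x : B.Vertex} :
    (D.HasArrow d ∧ (B.source d = x ∨ B.target d = x)) ↔
      ∃ i j p k, p ∈ (D.src i).1 ∧ p ∈ (D.snk j).1 ∧ p ∈ x.1 ∧
        k < len p (D.src i) (D.snk j) ∧ d = B.next^[k] (dartAt p (D.src i)) ∧
        (k = len p (D.src i) x ∨ k + 1 = len p (D.src i) x) := by
  rw [hasArrow_iff hF]
  constructor
  · rintro ⟨⟨i, j, p, k, hi, hj, hk, rfl⟩, hx⟩
    have hdeg := len_lt_deg hi hj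
    have hf (n : ℕ) : (B.next^[n] (dartAt p (D.src i))).fst = p := by
      rw [fst_iterate_next, fst_dartAt hi]
    have key (n : ℕ) (hn : n < B.deg (dartAt p (D.src i)))
        (h : B.source (B.next^[n] (dartAt p (D.src i))) = x) :
        p ∈ x.1 ∧ n = len p (D.src i) x := by
      refine ⟨?_, eq_steps hn (eq_dartAt (hf n) h)⟩
      have := fst_mem_source (B.next^[n] (dartAt p (D.src i)))
      rwa [hf, h] at this
    rcases hx with h | h
    · obtain ⟨hp, hl⟩ := key k (by omega) h
      exact ⟨i, j, p, k, hi, hj, hp, hk, rfl, Or.inl hl⟩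
    · rw [target, ← Function.iterate_succ_apply' (f := B.next)] at h
      obtain ⟨hp, hl⟩ := key (k + 1) (by omega) h
      exact ⟨i, j, p, k, hi, hj, hp, hk, rfl, Or.inr hl⟩
  · rintro ⟨i, j, p, k, hi, hj, hp, hk, rfl, hl⟩
    refine ⟨⟨i, j, p, k, hi, hj, hk, rfl⟩, hl.imp (fun h => ?_) fun h => ?_⟩
    · rw [h, iterate_len hi hp, source_dartAt]
    · rw [target, ← Function.iterate_succ_apply' (f := B.next), Nat.succ_eq_add_one, h,
        iterate_len hi hp, source_dartAt]

lemma isEndPoint_snk_iff (hF : IsZigzag D.map) {j : D.J} :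
    D.IsEndPoint (D.snk j) ↔ ∀ {p q : V} {i i' : D.I}, p ∈ (D.snk j).1 → q ∈ (D.snk j).1 →
      p ∈ (D.src i).1 → q ∈ (D.src i').1 → p = q := by
  have hinc {d : B.Arrow} : (D.HasArrow d ∧ (B.source d = D.snk j ∨ B.target d = D.snk j)) ↔
      ∃ i p, p ∈ (D.src i).1 ∧ p ∈ (D.snk j).1 ∧
        d = B.next^[len p (D.src i) (D.snk j) - 1] (dartAt p (D.src i)) := by
    rw [incident_iff hF]
    constructor
    · rintro ⟨i, j', p, k, hi, hj', hj, hk, rfl, hl⟩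
      obtain rfl := hF.sink_unique hj hj'
      exact ⟨i, p, hi, hj, by rw [show k = len p (D.src i) (D.snk j) - 1 by omega]⟩
    · rintro ⟨i, p, hi, hj, rfl⟩
      have := len_pos hi hj (hF.source_ne_sink i j)
      exact ⟨i, j, p, _, hi, hj, hj, by omega, rfl, by omega⟩
  constructor
  · rintro ⟨d, -, hd⟩ p q i i' hp hq hi hi'
    have h1 := hd _ (hinc.2 ⟨i, p, hi, hp, rfl⟩)
    have h2 := hd _ (hinc.2 ⟨i', q, hi', hq, rfl⟩)
    have h3 := congrArg (fun d => d.fst) (h1.trans h2.symm)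
    simpa only [fst_iterate_next, fst_dartAt hi, fst_dartAt hi'] using h3
  · intro h
    obtain ⟨i, p, hi, hp⟩ := hF.exists_source j
    refine ⟨_, hinc.2 ⟨i, p, hi, hp, rfl⟩, fun d hd => ?_⟩
    obtain ⟨i', q, hi', hq, rfl⟩ := hinc.1 hd
    obtain rfl := h hp hq hi hi'
    rw [hF.source_unique hi hi']

lemma isEndPoint_src (hF : IsZigzag D.map) {i : D.I} {p : V} (hi : p ∈ (D.src i).1)
    (hp : ∀ j, p ∉ (D.snk j).1) : D.IsEndPoint (D.src i) := by
  have hinc {d : B.Arrow} : (D.HasArrow d ∧ (B.source d = D.src i ∨ B.target d = D.src i)) ↔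
      ∃ j q, q ∈ (D.src i).1 ∧ q ∈ (D.snk j).1 ∧ d = dartAt q (D.src i) := by
    rw [incident_iff hF]
    have h0 (q : V) : len q (D.src i) (D.src i) = 0 := steps_self _
    constructor
    · rintro ⟨i', j, q, k, hi', hj, hq, hk, rfl, hl⟩
      obtain rfl := hF.source_unique hq hi'
      rw [h0] at hl
      obtain rfl : k = 0 := by omega
      exact ⟨j, q, hq, hj, rfl⟩
    · rintro ⟨j, q, hq, hj, rfl⟩
      exact ⟨i, j, q, 0, hq, hj, hq, len_pos hq hj (hF.source_ne_sink i j), rfl, Or.inl (h0 q).symm⟩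
  obtain ⟨j, q, hq, hj⟩ := hF.exists_sink i
  refine ⟨_, hinc.2 ⟨j, q, hq, hj, rfl⟩, fun d hd => ?_⟩
  obtain ⟨j', r, hr, hj', rfl⟩ := hinc.1 hd
  have hpq : p ≠ q := fun h => hp j (h ▸ hj)
  have hpr : p ≠ r := fun h => hp j' (h ▸ hj')
  have h1 := (Sym2.mem_and_mem_iff hpq).1 ⟨hi, hq⟩
  rw [h1, Sym2.mem_iff] at hr
  rw [hr.resolve_left hpr.symm]

lemma not_hasVertex_iff (hF : IsZigzag D.map) {x : B.Vertex} (hs : ∀ i, D.src i ≠ x)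
    (ht : ∀ j, D.snk j ≠ x) :
    ¬ D.HasVertex x ↔ ∀ p i j, p ∈ x.1 → p ∈ (D.src i).1 → p ∈ (D.snk j).1 →
      len p (D.src i) (D.snk j) ≤ len p (D.src i) x := by
  simp only [HasVertex, hs, ht, exists_false, false_or, incident_iff hF]
  constructor
  · intro h p i j hp hi hj
    by_contra! hlt
    exact h ⟨_, i, j, p, _, hi, hj, hp, hlt, rfl, Or.inl rfl⟩
  · rintro h ⟨d, i, j, p, k, hi, hj, hp, hk, -, hl⟩
    have h1 := h p i j hp hi hj
    have h2 : len p (D.src i) (D.snk j) = len p (D.src i) x := by omega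
    have h3 := iterate_len hi hj
    rw [h2, iterate_len hi hp] at h3
    exact ht j (dartAt_injective h3).symm

lemma factors_iff (hF : IsZigzag D.map) (hrange : Superfluous (LinearMap.range D.map))
    (x : B.Vertex) :
    Factors D.map x ↔ D.IsDegOneSink x ∨ (¬ D.HasVertex x ∧
      ¬ ∃ p ∈ x.1, ∃ y : B.Vertex, D.IsDegOneSource y ∧ p ∈ y.1 ∧
        ∀ z : B.Vertex, D.HasVertex z → p ∈ z.1 → z = y) := by
  have := D.fintypeI
  have := D.fintypeJ
  by_cases hs : ∃ i, D.src i = x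
  · obtain ⟨i, rfl⟩ := hs
    refine iff_of_false (IsZigzag.not_factors_source hrange i) ?_
    rintro (⟨⟨j, hj⟩, -⟩ | ⟨h, -⟩)
    · exact hF.source_ne_sink i j hj.symm
    · exact h (Or.inl ⟨i, rfl⟩)
  by_cases ht : ∃ j, D.snk j = x
  · obtain ⟨j, rfl⟩ := ht
    have h1 : ¬ ¬ D.HasVertex (D.snk j) := not_not.2 (Or.inr (Or.inl ⟨j, rfl⟩))
    simp only [h1, false_and, or_false, IsDegOneSink, exists_apply_eq_apply, true_and,
      isEndPoint_snk_iff hF]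
    constructor
    · intro h p q i i' hp hq hi hi'
      by_contra hpq
      exact hF.not_factors_sink hpq hp hq hi hi' h
    · exact fun h => hF.factors_sink h
  have hsink : ¬ D.IsDegOneSink x := fun h => ht h.1
  push Not at hs ht
  rw [hF.factors_iff_of_unmarked hs ht, not_hasVertex_iff hF hs ht, or_iff_right hsink]
  constructor
  · intro h
    refine ⟨fun p i j hp hi hj => ?_, ?_⟩
    · obtain ⟨j', hj', hl⟩ := h p i hp hi
      rwa [hF.sink_unique hj hj']
    · rintro ⟨p, hp, y, ⟨⟨i, rfl⟩, -⟩, hi, hy⟩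
      obtain ⟨j, hj, -⟩ := h p i hp hi
      exact hF.source_ne_sink i j (hy _ (Or.inr (Or.inl ⟨j, rfl⟩)) hj).symm
  · rintro ⟨h, hcyc⟩ p i hp hi
    by_cases hj : ∃ j, p ∈ (D.snk j).1
    · obtain ⟨j, hj⟩ := hj
      exact ⟨j, hj, h p i j hp hi hj⟩
    push Not at hj
    refine absurd ⟨p, hp, D.src i, ⟨⟨i, rfl⟩, isEndPoint_src hF hi hj⟩, hi, ?_⟩ hcyc
    intro z hz hpz
    have key : (∃ i, D.src i = z) ∨ ∃ j, D.snk j = z := by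
      rcases hz with hz | hz | ⟨d, hd⟩
      · exact Or.inl hz
      · exact Or.inr hz
      · obtain ⟨i', j, q, -, hi', hj', hqz, -⟩ := (incident_iff hF).1 hd
        exact hF.exists_edge_eq (fun h : p = q => hj j (h ▸ hj')) hpz hqz hi hi'
    rcases key with ⟨i', rfl⟩ | ⟨j, rfl⟩
    · rw [hF.source_unique hpz hi]
    · exact absurd hpz (hj j)

end Decomposition

lemma Superfluous.map_equiv {R P Q : Type*} [Ring R] [AddCommGroup P] [Module R P]
    [AddCommGroup Q] [Module R Q] {N : Submodule R P} (hN : Superfluous N) (e : P ≃ₗ[R] Q) :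
    Superfluous (N.map e.toLinearMap) := by
  intro L hL
  have h1 : N ⊔ L.comap e.toLinearMap = ⊤ := by
    rw [← Submodule.map_eq_top_iff (e := e), Submodule.map_sup,
      Submodule.map_comap_eq_of_surjective e.surjective, hL]
  rw [← Submodule.map_comap_eq_of_surjective e.surjective L, hN _ h1, Submodule.map_top,
    LinearEquiv.range]

namespace IsMinimalPresentation

variable {V : Type v} {B : BrauerTree V} {K : Type u} [Field K] {T : B.Cplx K}
  {M : ModuleCat.{max u v} (B.Alg K)}

lemma homVanishes_stalk_iff_factors [HasDerivedCategory.{w} (ModuleCat.{max u v} (B.Alg K))]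
    (hTM : IsMinimalPresentation T M) (D : Decomposition T) {P : B.Cplx K} {x : B.Vertex}
    (hP : IsStalk P 1 x) : HomVanishes.{w} T P 1 ↔ Factors D.map x := by
  rw [hTM.homVanishes_stalk_iff hP, Factors]
  let u : B.ProjSum K (fun _ : Unit => x) ≃ₗ[B.Alg K] B.proj K x :=
    LinearEquiv.funUnique Unit (B.Alg K) (B.proj K x)
  constructor
  · intro h φ
    obtain ⟨b, hb⟩ := h (u.toLinearMap ∘ₗ φ ∘ₗ D.iso₀.toLinearMap)
    refine ⟨u.symm.toLinearMap ∘ₗ b ∘ₗ D.iso₁.symm.toLinearMap, LinearMap.ext fun y => ?_⟩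
    have := LinearMap.congr_fun hb (D.iso₀.symm y)
    simp only [LinearMap.comp_apply, LinearEquiv.coe_coe, LinearEquiv.apply_symm_apply] at this
    simp only [LinearMap.comp_apply, LinearEquiv.coe_coe, Decomposition.map_apply,
      LinearEquiv.symm_apply_apply, ← this]
  · intro h φ
    obtain ⟨b, hb⟩ := h (u.symm.toLinearMap ∘ₗ φ ∘ₗ D.iso₀.symm.toLinearMap)
    refine ⟨u.toLinearMap ∘ₗ b ∘ₗ D.iso₁.toLinearMap, LinearMap.ext fun y => ?_⟩
    have := LinearMap.congr_fun hb (D.iso₀ y)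
    simp only [LinearMap.comp_apply, LinearEquiv.coe_coe, LinearEquiv.symm_apply_apply,
      Decomposition.map_apply] at this
    simp only [LinearMap.comp_apply, LinearEquiv.coe_coe, ← this, LinearEquiv.apply_symm_apply]

lemma isRigid_map [HasDerivedCategory.{w} (ModuleCat.{max u v} (B.Alg K))]
    (hTM : IsMinimalPresentation T M) (D : Decomposition T) (hT : HomVanishes.{w} T T 1) :
    IsRigid D.map := by
  have := hTM.strictlyLE
  rw [hTM.homVanishes_one_iff] at hT
  intro φ
  obtain ⟨a, b, hab⟩ := hT (D.iso₁.symm.toLinearMap ∘ₗ φ ∘ₗ D.iso₀.toLinearMap)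
  refine ⟨D.iso₀.toLinearMap ∘ₗ a ∘ₗ D.iso₀.symm.toLinearMap,
    D.iso₁.toLinearMap ∘ₗ b ∘ₗ D.iso₁.symm.toLinearMap, LinearMap.ext fun y => ?_⟩
  have := congrArg D.iso₁ (LinearMap.congr_fun hab (D.iso₀.symm y))
  simpa [Decomposition.map_apply] using this

lemma superfluous_range (hTM : IsMinimalPresentation T M) (D : Decomposition T) :
    Superfluous (LinearMap.range D.map) := by
  obtain ⟨p, -, hp, hs⟩ := hTM.exists_cover
  have h : LinearMap.range D.map = (LinearMap.ker p).map D.iso₁.toLinearMap := by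
    rw [← hp, Decomposition.map, LinearMap.range_comp, LinearMap.range_comp_of_range_eq_top]
    exact LinearEquiv.range _
  rw [h]
  exact hs.map_equiv D.iso₁

lemma superfluous_ker_map (hTM : IsMinimalPresentation T M) (D : Decomposition T) :
    Superfluous (LinearMap.ker D.map) := by
  have h : LinearMap.ker D.map = (LinearMap.ker (T.d 0 1).hom).map D.iso₀.toLinearMap := by
    ext y
    simp [Decomposition.map_apply, Submodule.mem_map_equiv]
  rw [h]
  exact hTM.superfluous_ker.map_equiv D.iso₀

lemma isZigzag [Finite V] [Infinite K] [HasDerivedCategory.{w} (ModuleCat.{max u v} (B.Alg K))]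
    (hTM : IsMinimalPresentation T M) (hT : HomVanishes.{w} T T 1) (hM : Indecomposable M)
    (hMproj : ¬ Module.Projective (B.Alg K) M) (D : Decomposition T) : IsZigzag D.map := by
  have := D.fintypeI
  have := D.fintypeJ
  obtain ⟨p, hp, hrange, -⟩ := hTM.exists_cover
  have hJ : Nonempty D.J := by
    by_contra hJ
    rw [not_nonempty_iff] at hJ
    have : Subsingleton (T.X 1) := D.iso₁.toEquiv.subsingleton
    have : Subsingleton M := hp.subsingleton
    exact hM.1 (ModuleCat.isZero_of_subsingleton M)
  have hI : Nonempty D.I := by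
    by_contra hI
    rw [not_nonempty_iff] at hI
    have : Subsingleton (T.X 0) := D.iso₀.toEquiv.subsingleton
    have h0 : LinearMap.ker p = ⊥ := by
      rw [← hrange, LinearMap.range_eq_bot]
      exact LinearMap.ext fun y => by rw [Subsingleton.elim y 0, map_zero, map_zero]
    have := hTM.projective₁
    exact hMproj (Module.Projective.of_equiv
      (LinearEquiv.ofBijective p ⟨LinearMap.ker_eq_bot.1 h0, hp⟩))
  refine (hTM.isRigid_map D hT).isZigzag hM (π := p ∘ₗ D.iso₁.symm.toLinearMap)
    (hp.comp D.iso₁.symm.surjective) ?_ (hTM.superfluous_range D) (hTM.superfluous_ker_map D)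
  ext y
  rw [LinearMap.mem_ker, LinearMap.comp_apply, ← LinearMap.mem_ker, ← hrange]
  constructor
  · rintro ⟨z, rfl⟩
    exact ⟨D.iso₀.symm z, by simp [Decomposition.map_apply]⟩
  · rintro ⟨z, hz⟩
    exact ⟨D.iso₀ z, by simp [Decomposition.map_apply, hz]⟩

end IsMinimalPresentation

end BrauerTree

theorem hom_to_shifted_stalk1_vanishes_iff {V : Type v} [Finite V] (B : BrauerTree V)
    (K : Type u) [Field K] [IsAlgClosed K]
    [HasDerivedCategory.{w} (ModuleCat.{max u v} (B.Alg K))]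
    (T : B.Cplx K) (hT : BrauerTree.IsIndecPartialTilting.{w} T)
    (M : ModuleCat.{max u v} (B.Alg K)) (hM : Indecomposable M)
    (hMproj : ¬ Module.Projective (B.Alg K) M)
    (hTM : BrauerTree.IsMinimalPresentation T M)
    (D : BrauerTree.Decomposition T)
    (P : B.Cplx K) (x : B.Vertex) (hP : BrauerTree.IsStalk P 1 x) :
    BrauerTree.HomVanishes.{w} T P 1 ↔
      (D.IsDegOneSink x ∨
        (¬ D.HasVertex x ∧
          ¬ ∃ l : List B.Arrow, B.IsACycle K l ∧ B.OnCycle x l ∧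
            ∃ y : B.Vertex, D.IsDegOneSource y ∧ B.OnCycle y l ∧
              ∀ z : B.Vertex, D.HasVertex z → B.OnCycle z l → z = y)) := by
  rw [hTM.homVanishes_stalk_iff_factors D hP,
    BrauerTree.Decomposition.factors_iff
      (hTM.isZigzag (hT.2 1 one_ne_zero) hM hMproj D) (hTM.superfluous_range D),
    BrauerTree.exists_isACycle_iff (K := K)
      (P := fun S => ∃ y, D.IsDegOneSource y ∧ S y ∧ ∀ z, D.HasVertex z → S z → z = y)]
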